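/- Let m ≥ 1, n ≥ 1 and d ≥ 0 be integers, and let E ⊆ ℝⁿ be a closed set such that E × ℝ^m ⊆ ℝ^{n+m} is a reduced minimal set of dimension d+m in ℝ^{n+m}. Then E is a reduced minimal set of dimension d in ℝⁿ. -/

import Mathlib

/-!
For `A ⊆ ℝⁿ` write `nu A = H^{d+m}(A × B(0,1))`. Up to constants, `nu` and `H^d` are comparable
(`hausdorff_le_nu`, `nu_le`), but for general `A` they need not be proportional, so minimality of
`E × ℝ^m` does not pass to `E` by a mere product formula. The proof shows that `E` is rectifiable,
and that on rectifiable sets `nu` is a constant multiple of `H^d`.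

*Minimality for `nu`.* Given a competitor `φ` for `E`, apply the minimality of `E × ℝ^m` to `φ` cut
off at height `T` in the `ℝ^m` direction. The measure of a cylinder `A × Y` is `nu A` times the
normalised Lebesgue measure of `Y` (`cyl_measure`), so dividing by `T^m` and letting `T → ∞` gives
`nu (E ∖ φ(E)) ≤ nu (φ(E) ∖ E)` (`nu_minimal`). As `nu` is comparable to `H^d`, the set `E` is
quasiminimal: `H^d(E ∩ S) ≤ C H^d(φ(E ∩ S))` if `φ` is the identity off the bounded set `S`
(`quasi_minimal`).

*Quasiminimal sets are rectifiable.* By the Besicovitch–Federer projection theorem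
(`ae_image_null`), almost every linear map to `ℝᵈ` sends a purely unrectifiable compact set `K` of
finite measure to a null set. Applied to a projective image of `K`, this says that for a generic
affine grid, the radial retraction onto the `d`-skeleton sends `K` to a null set
(`ae_ratio_null`, `skeleton_image_null`). Averaging over translations of the grid bounds the growth
of the rest of the set, as in the Federer–Fleming deformation theorem (`exists_deformation`). If `K`
is a subset of positive measure of a quasiminimal set, this deformation in a small ball around a
density point of `K` violates quasiminimality (`quasiMin_null`). An exhaustion argument yields
rectifiability (`quasiMin_rectifiable`).

*Conclusion.* On `ℝᵈ` the measures `nu` and `H^d` are both Haar measures, so `nu = c H^d`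
(`exists_nu_const`). By Rademacher's theorem a Lipschitz image of `ℝᵈ` is, up to a null set, a
countable union of images of maps that are nearly isometric after a linear change of variables, so
`nu = c H^d` on all rectifiable sets (`nu_eq_of_rectifiable`), in particular on `E ∖ φ(E)` and
`φ(E) ∖ E`. This gives the minimality of `E`. Reducedness holds since `nu` vanishes on `H^d`-null
sets.
-/

open MeasureTheory Metric Set Filter Bornology
open scoped ENNReal NNReal Topology InnerProductSpace

noncomputable section

/-- `ℝⁿ` as a Euclidean space. -/
abbrev Euc (n : ℕ) : Type := EuclideanSpace ℝ (Fin n)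

/-- `E` is reduced: `H^d(E ∩ B(x,r)) > 0` for every `x ∈ E` and `r > 0`. -/
def IsReducedSet (n d : ℕ) (E : Set (Euc n)) : Prop :=
  ∀ x ∈ E, ∀ r : ℝ, 0 < r → 0 < μH[(d:ℝ)] (E ∩ ball x r)

/-- A (globally) minimal set of dimension `d` in `ℝⁿ` : a closed set with locally finite
`H^d`-measure such that `H^d(F ∖ φ(F)) ≤ H^d(φ(F) ∖ F)` for every Lipschitz map
`φ : ℝⁿ → ℝⁿ` which differs from the identity only on a bounded set. -/
def IsMinimalSet (n d : ℕ) (F : Set (Euc n)) : Prop :=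
  IsClosed F ∧
  (∀ R : ℝ, 0 < R → μH[(d:ℝ)] (F ∩ ball 0 R) < ⊤) ∧
  ∀ φ : Euc n → Euc n, (∃ K : ℝ≥0, LipschitzWith K φ) →
    IsBounded {x | φ x ≠ x} →
    μH[(d:ℝ)] (F \ φ '' F) ≤ μH[(d:ℝ)] (φ '' F \ F)

/-- A cone centered at the origin. -/
def IsConeAt0 {n : ℕ} (F : Set (Euc n)) : Prop :=
  ∀ x ∈ F, ∀ l : ℝ, 0 < l → l • x ∈ F

/-- The set `E × ℝ^m`, viewed inside `ℝ^{n+m}` through the splitting of the coordinates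
of `ℝ^{n+m}` into the first `n` and the last `m` ones. -/
def prodRm (n m : ℕ) (E : Set (Euc n)) : Set (Euc (n + m)) :=
  {z : Euc (n + m) |
    (WithLp.equiv 2 (Fin n → ℝ)).symm (fun i : Fin n => z (Fin.castAdd m i)) ∈ E}

/-! ### Splitting `ℝ^{n+m}` and cylinders -/

/-- The first `n` coordinates. -/
def fstE {n m : ℕ} (z : Euc (n + m)) : Euc n := WithLp.toLp 2 (fun i => z (Fin.castAdd m i))

/-- The last `m` coordinates. -/
def sndE {n m : ℕ} (z : Euc (n + m)) : Euc m := WithLp.toLp 2 (fun i => z (Fin.natAdd n i))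

/-- The point `(x, y)` of `ℝ^{n+m}`. -/
def mkE {n m : ℕ} (x : Euc n) (y : Euc m) : Euc (n + m) := WithLp.toLp 2 (Fin.append x y)

@[simp] lemma fstE_mkE {n m : ℕ} (x : Euc n) (y : Euc m) : fstE (mkE x y) = x := by
  ext i; simp [fstE, mkE]

@[simp] lemma sndE_mkE {n m : ℕ} (x : Euc n) (y : Euc m) : sndE (mkE x y) = y := by
  ext i; simp [sndE, mkE]

@[simp] lemma mkE_fstE_sndE {n m : ℕ} (z : Euc (n + m)) : mkE (fstE z) (sndE z) = z := by
  ext i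
  refine Fin.addCases (fun i => ?_) (fun i => ?_) i <;> simp [fstE, sndE, mkE]

lemma dist_sq_E {n m : ℕ} (z w : Euc (n + m)) :
    dist z w ^ 2 = dist (fstE z) (fstE w) ^ 2 + dist (sndE z) (sndE w) ^ 2 := by
  simp only [EuclideanSpace.dist_eq]
  rw [Real.sq_sqrt (by positivity), Real.sq_sqrt (by positivity), Real.sq_sqrt (by positivity),
    Fin.sum_univ_add]
  rfl

lemma dist_fstE_le {n m : ℕ} (z w : Euc (n + m)) : dist (fstE z) (fstE w) ≤ dist z w := by
  refine le_of_sq_le_sq ?_ dist_nonneg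
  nlinarith [dist_sq_E z w, sq_nonneg (dist (sndE z) (sndE w))]

lemma dist_sndE_le {n m : ℕ} (z w : Euc (n + m)) : dist (sndE z) (sndE w) ≤ dist z w := by
  refine le_of_sq_le_sq ?_ dist_nonneg
  nlinarith [dist_sq_E z w, sq_nonneg (dist (fstE z) (fstE w))]

lemma dist_le_add_E {n m : ℕ} (z w : Euc (n + m)) :
    dist z w ≤ dist (fstE z) (fstE w) + dist (sndE z) (sndE w) := by
  refine le_of_sq_le_sq ?_ (by positivity)
  have h1 : 0 ≤ dist (fstE z) (fstE w) := dist_nonneg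
  have h2 : 0 ≤ dist (sndE z) (sndE w) := dist_nonneg
  nlinarith [dist_sq_E z w, mul_nonneg h1 h2]

lemma lipschitz_fstE {n m : ℕ} : LipschitzWith 1 (fstE : Euc (n + m) → Euc n) :=
  LipschitzWith.of_dist_le_mul fun z w => by simpa using dist_fstE_le z w

lemma lipschitz_sndE {n m : ℕ} : LipschitzWith 1 (sndE : Euc (n + m) → Euc m) :=
  LipschitzWith.of_dist_le_mul fun z w => by simpa using dist_sndE_le z w

lemma isometry_mkE_left {n m : ℕ} (y : Euc m) : Isometry (fun x : Euc n => mkE x y) := by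
  refine Isometry.of_dist_eq fun x x' => ?_
  have := dist_sq_E (mkE x y) (mkE x' y)
  simp only [fstE_mkE, sndE_mkE, dist_self] at this
  exact (sq_eq_sq₀ dist_nonneg dist_nonneg).1 (by linarith)

/-- The product `A × Y` inside `ℝ^{n+m}`. -/
def cyl {n m : ℕ} (A : Set (Euc n)) (Y : Set (Euc m)) : Set (Euc (n + m)) :=
  fstE ⁻¹' A ∩ sndE ⁻¹' Y

lemma prodRm_eq (n m : ℕ) (E : Set (Euc n)) : prodRm n m E = fstE ⁻¹' E := rfl

lemma measurableSet_cyl {n m : ℕ} {A : Set (Euc n)} {Y : Set (Euc m)} (hA : MeasurableSet A)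
    (hY : MeasurableSet Y) : MeasurableSet (cyl A Y) :=
  (lipschitz_fstE.continuous.measurable hA).inter (lipschitz_sndE.continuous.measurable hY)

/-- The `(d+m)`-dimensional measure of the cylinder `A × B(0,1)`. -/
def nu (m d : ℕ) {n : ℕ} (A : Set (Euc n)) : ℝ≥0∞ :=
  μH[((d + m : ℕ) : ℝ)] (cyl A (ball (0 : Euc m) 1))

lemma nu_mono {m d n : ℕ} {A B : Set (Euc n)} (h : A ⊆ B) : nu m d A ≤ nu m d B :=
  measure_mono (inter_subset_inter_left _ (preimage_mono h))

lemma nu_iUnion_le {ι : Type*} [Countable ι] {m d n : ℕ} (A : ι → Set (Euc n)) :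
    nu m d (⋃ i, A i) ≤ ∑' i, nu m d (A i) := by
  refine le_trans (measure_mono ?_) (measure_iUnion_le _)
  intro z hz
  simpa [cyl] using hz

lemma nu_union_le {m d n : ℕ} (A B : Set (Euc n)) :
    nu m d (A ∪ B) ≤ nu m d A + nu m d B := by
  refine le_trans (measure_mono ?_) (measure_union_le _ _)
  rintro z ⟨h1 | h1, h2⟩
  exacts [Or.inl ⟨h1, h2⟩, Or.inr ⟨h1, h2⟩]

lemma nu_iUnion_eq {ι : Type*} [Countable ι] {m d n : ℕ} {A : ι → Set (Euc n)}
    (hA : ∀ i, MeasurableSet (A i)) (hd : Pairwise (Function.onFun Disjoint A)) :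
    nu m d (⋃ i, A i) = ∑' i, nu m d (A i) := by
  unfold nu
  rw [← measure_iUnion]
  · congr 1
    ext z; simp [cyl]
  · intro i j hij
    refine Set.disjoint_left.2 fun z h1 h2 => ?_
    exact Set.disjoint_left.1 (hd hij) h1.1 h2.1
  · exact fun i => measurableSet_cyl (hA i) measurableSet_ball

/-! ### Comparing `H^d(A)` with `H^{d+m}(A × B(0,1))` -/

/-- Slicing a cover of `A × B(0,1)` over `y ∈ B(0,1)` and averaging in `y`. -/
lemma hausdorff_le_nu {m d n : ℕ} (hm : 1 ≤ m) (A : Set (Euc n)) : μH[(d : ℝ)] A ≤ nu m d A := by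
  rw [Measure.hausdorffMeasure_apply]
  refine iSup₂_le fun r hr => ?_
  unfold nu
  rw [Measure.hausdorffMeasure_apply]
  refine le_trans ?_ (le_iSup₂ (f := fun r (_ : 0 < r) => _) r hr)
  refine le_iInf₂ fun V hV => le_iInf fun hVr => ?_
  set H := ⨅ (t : ℕ → Set (Euc n)) (_ : A ⊆ ⋃ n, t n) (_ : ∀ n, ediam (t n) ≤ r),
    ∑' n, ⨆ _ : (t n).Nonempty, ediam (t n) ^ (d : ℝ) with hH
  -- a centre for the projection of each `V j`
  have hc : ∀ j, ∃ c : Euc m, ∀ z ∈ V j, edist (sndE z) c ≤ ediam (V j) := by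
    intro j
    rcases (V j).eq_empty_or_nonempty with h | ⟨w, hw⟩
    · exact ⟨0, by simp [h]⟩
    · refine ⟨sndE w, fun z hz => le_trans ?_ (edist_le_ediam_of_mem hz hw)⟩
      simpa using lipschitz_sndE z w
  choose c hc using hc
  have key : ∀ y ∈ ball (0 : Euc m) 1,
      H ≤ ∑' j, (Metric.closedEBall (c j) (ediam (V j))).indicator
        (fun _ => ⨆ _ : (V j).Nonempty, ediam (V j) ^ (d : ℝ)) y := by
    intro y hy
    have hsl : ∀ j, ediam ((fun x => mkE x y) ⁻¹' V j) ≤ ediam (V j) := by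
      intro j
      refine ediam_le fun x hx x' hx' => ?_
      rw [← (isometry_mkE_left y).edist_eq x x']
      exact edist_le_ediam_of_mem hx hx'
    refine (iInf₂_le (fun j => (fun x => mkE x y) ⁻¹' V j) ?_).trans
      ((iInf_le _ fun j => (hsl j).trans (hVr j)).trans ?_)
    · intro x hx
      have : mkE x y ∈ cyl A (ball (0 : Euc m) 1) := ⟨by simpa using hx, by simpa using hy⟩
      simpa using hV this
    · refine ENNReal.tsum_le_tsum fun j => iSup_le fun hne => ?_
      obtain ⟨x, hx⟩ := hne
      have hy' : y ∈ Metric.closedEBall (c j) (ediam (V j)) := by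
        have := hc j _ hx
        simpa using this
      rw [indicator_of_mem hy']
      refine le_trans ?_ (le_iSup (fun _ : (V j).Nonempty => _) ⟨_, hx⟩)
      exact ENNReal.rpow_le_rpow (hsl j) (Nat.cast_nonneg d)
  have hB0 : volume (ball (0 : Euc m) 1) ≠ 0 := (measure_ball_pos _ _ one_pos).ne'
  have hBt : volume (ball (0 : Euc m) 1) ≠ ⊤ := measure_ball_lt_top.ne
  have h1 : H * volume (ball (0 : Euc m) 1) ≤
      (∑' j, ⨆ _ : (V j).Nonempty, ediam (V j) ^ (((d + m : ℕ) : ℝ))) *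
        volume (ball (0 : Euc m) 1) := by
    calc H * volume (ball (0 : Euc m) 1) = ∫⁻ y in ball (0 : Euc m) 1, H := by simp
      _ ≤ ∫⁻ y in ball (0 : Euc m) 1, ∑' j, (Metric.closedEBall (c j) (ediam (V j))).indicator
        (fun _ => ⨆ _ : (V j).Nonempty, ediam (V j) ^ (d : ℝ)) y :=
          setLIntegral_mono' measurableSet_ball key
      _ ≤ ∫⁻ y, ∑' j, (Metric.closedEBall (c j) (ediam (V j))).indicator
        (fun _ => ⨆ _ : (V j).Nonempty, ediam (V j) ^ (d : ℝ)) y := setLIntegral_le_lintegral _ _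
      _ = ∑' j, (⨆ _ : (V j).Nonempty, ediam (V j) ^ (d : ℝ)) *
          volume (Metric.closedEBall (c j) (ediam (V j))) := by
          rw [lintegral_tsum]
          · congr 1; ext j
            rw [lintegral_indicator_const Metric.isClosed_closedEBall.measurableSet]
          · exact fun j => (measurable_const.indicator
              Metric.isClosed_closedEBall.measurableSet).aemeasurable
      _ ≤ ∑' j, (⨆ _ : (V j).Nonempty, ediam (V j) ^ (((d + m : ℕ) : ℝ))) *
        volume (ball (0 : Euc m) 1) := by
          refine ENNReal.tsum_le_tsum fun j => ?_
          rcases (V j).eq_empty_or_nonempty with h | hne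
          · simp [h]
          · simp only [hne, iSup_pos]
            by_cases htop : ediam (V j) = ⊤
            · have h2 : (⊤ : ℝ≥0∞) ^ (((d + m : ℕ) : ℝ)) = ⊤ :=
                ENNReal.top_rpow_of_pos (by exact_mod_cast (by omega : 0 < d + m))
              rw [htop, h2, ENNReal.top_mul hB0]
              exact le_top
            · have hcb : Metric.closedEBall (c j) (ediam (V j)) =
                  closedBall (c j) (ediam (V j)).toReal := by
                rw [← Metric.closedEBall_ofReal ENNReal.toReal_nonneg, ENNReal.ofReal_toReal htop]
              rw [hcb, Measure.addHaar_closedBall _ _ ENNReal.toReal_nonneg, ← mul_assoc]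
              refine le_of_eq ?_
              congr 1
              rw [finrank_euclideanSpace_fin, ENNReal.ofReal_pow ENNReal.toReal_nonneg,
                ENNReal.ofReal_toReal htop, ENNReal.rpow_natCast, ENNReal.rpow_natCast, pow_add]
      _ = _ := ENNReal.tsum_mul_right
  exact (ENNReal.mul_le_mul_iff_left hB0 hBt).1 h1

/-- `H^d(A)` is approximated by covers of small positive gauges. -/
lemma exists_gauge_cover {X : Type*} [MetricSpace X] [MeasurableSpace X] [BorelSpace X] {d : ℕ}
    (A : Set X) (hA : μH[(d : ℝ)] A ≠ ⊤) {η : ℝ} (hη : 0 < η) (hη1 : η ≤ 1) :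
    ∃ (t : ℕ → Set X) (g : ℕ → ℝ), A ⊆ ⋃ j, t j ∧ (∀ j, 0 < g j ∧ g j ≤ η) ∧
      (∀ j, ediam (t j) ≤ ENNReal.ofReal (g j)) ∧
      ∑' j, (⨆ _ : (t j).Nonempty, ENNReal.ofReal (g j) ^ d) ≤
        μH[(d : ℝ)] A + ENNReal.ofReal η := by
  have hη' : 0 < ENNReal.ofReal (η / 2) := ENNReal.ofReal_pos.2 (by linarith)
  have h1 : (⨅ (t : ℕ → Set X) (_ : A ⊆ ⋃ n, t n) (_ : ∀ n, ediam (t n) ≤ ENNReal.ofReal (η / 2)),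
      ∑' n, ⨆ _ : (t n).Nonempty, ediam (t n) ^ (d : ℝ)) <
        μH[(d : ℝ)] A + ENNReal.ofReal (η / 2) := by
    refine lt_of_le_of_lt ?_ (ENNReal.lt_add_right hA hη'.ne')
    conv_rhs => rw [Measure.hausdorffMeasure_apply]
    exact le_iSup₂ (f := fun (r : ℝ≥0∞) (_ : 0 < r) => ⨅ (t : ℕ → Set X) (_ : A ⊆ ⋃ n, t n)
      (_ : ∀ n, ediam (t n) ≤ r), ∑' n, ⨆ _ : (t n).Nonempty, ediam (t n) ^ (d : ℝ))
      (ENNReal.ofReal (η / 2)) hη'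
  simp only [iInf_lt_iff] at h1
  obtain ⟨t, hAt, htd, hsum⟩ := h1
  obtain ⟨ε, hε, hεs⟩ := ENNReal.exists_pos_sum_of_countable' hη'.ne' ℕ
  have hεt : ∀ j, ε j ≠ ⊤ := fun j =>
    ((ENNReal.le_tsum j).trans_lt (hεs.trans ENNReal.ofReal_lt_top)).ne
  have hdt : ∀ j, ediam (t j) ≠ ⊤ := fun j => ((htd j).trans_lt ENNReal.ofReal_lt_top).ne
  set g : ℕ → ℝ := fun j => max (ediam (t j)).toReal (min η (ε j).toReal) with hg
  have hofg : ∀ j, ENNReal.ofReal (g j) = max (ediam (t j)) (min (ENNReal.ofReal η) (ε j)) := by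
    intro j
    simp only [hg]
    rw [(ENNReal.ofReal_mono).map_max, (ENNReal.ofReal_mono).map_min,
      ENNReal.ofReal_toReal (hdt j), ENNReal.ofReal_toReal (hεt j)]
  refine ⟨t, g, hAt, fun j => ⟨?_, ?_⟩, fun j => ?_, ?_⟩
  · exact lt_of_lt_of_le (lt_min hη (ENNReal.toReal_pos (hε j).ne' (hεt j))) (le_max_right _ _)
  · refine max_le ?_ (min_le_left _ _)
    refine (ENNReal.toReal_le_of_le_ofReal (by linarith) (htd j)).trans (by linarith)
  · rw [hofg]; exact le_max_left _ _
  · calc ∑' j, (⨆ _ : (t j).Nonempty, ENNReal.ofReal (g j) ^ d)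
        ≤ ∑' j, ((⨆ _ : (t j).Nonempty, ediam (t j) ^ (d : ℝ)) + ε j) := by
          refine ENNReal.tsum_le_tsum fun j => iSup_le fun hne => ?_
          simp only [hne, iSup_pos, ENNReal.rpow_natCast]
          rw [hofg]
          rcases Nat.eq_zero_or_pos d with rfl | hd
          · simp
          rcases max_cases (ediam (t j)) (min (ENNReal.ofReal η) (ε j)) with h | h
          · rw [h.1]; exact le_self_add
          · rw [h.1]
            refine le_trans (le_trans (pow_le_of_le_one (bot_le) ?_ hd.ne') (min_le_right _ _))
              le_add_self
            exact (min_le_left _ _).trans (by simpa using hη1)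
      _ = (∑' j, ⨆ _ : (t j).Nonempty, ediam (t j) ^ (d : ℝ)) + ∑' j, ε j := ENNReal.tsum_add
      _ ≤ (μH[(d : ℝ)] A + ENNReal.ofReal (η / 2)) + ENNReal.ofReal (η / 2) :=
          add_le_add hsum.le hεs.le
      _ = _ := by
          rw [add_assoc, ← ENNReal.ofReal_add (by linarith) (by linarith)]; congr 2; ring

/-- Constant in `H^{d+m}(A × B(0,1)) ≤ C H^d(A)`. -/
def nuConst (m d : ℕ) : ℝ≥0∞ := ENNReal.ofReal (5 ^ m * (1 + m) ^ (d + m))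

lemma nuConst_ne_top {m d : ℕ} : nuConst m d ≠ ⊤ := ENNReal.ofReal_ne_top

/-- Refine each member of a cover of `A`, times `B(0,1)`, by cubes of its own size. -/
lemma nu_le {m d n : ℕ} (hm : 1 ≤ m) (A : Set (Euc n)) :
    nu m d A ≤ nuConst m d * μH[(d : ℝ)] A := by
  by_cases hA : μH[(d : ℝ)] A = ⊤
  · rw [hA, ENNReal.mul_top]
    · exact le_top
    · unfold nuConst; positivity
  have hη : ∀ N : ℕ, 0 < 1 / ((N : ℝ) + 1) := fun N => by positivity
  have hη1 : ∀ N : ℕ, 1 / ((N : ℝ) + 1) ≤ 1 := fun N => by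
    rw [div_le_one (by positivity)]; linarith [(Nat.cast_nonneg N : (0 : ℝ) ≤ N)]
  choose t g hAt hg htg hsum using fun N => exists_gauge_cover A hA (hη N) (hη1 N)
  set k : ℕ → ℕ → ℕ := fun N j => ⌈1 / g N j⌉₊ with hk
  have hkpos : ∀ N j, 0 < (k N j : ℝ) := fun N j => by
    have := (hg N j).1
    exact_mod_cast Nat.ceil_pos.2 (by positivity)
  -- cube with corner `(p - k)/k` and side `1/k`
  set S : ∀ N : ℕ, (Σ j : ℕ, (Fin m → Fin (2 * k N j + 1))) → Set (Euc (n + m)) := fun N q =>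
    cyl (t N q.1) {y | ∀ i, ((q.2 i : ℕ) : ℝ) - k N q.1 ≤ y i * k N q.1 ∧
      y i * k N q.1 ≤ ((q.2 i : ℕ) : ℝ) - k N q.1 + 1} with hS
  have hdiam : ∀ N q, ediam (S N q) ≤ ENNReal.ofReal ((1 + m) * g N q.1) := by
    intro N q
    have hgp := (hg N q.1).1
    refine ediam_le fun z hz w hw => ?_
    rw [edist_dist]
    refine ENNReal.ofReal_le_ofReal ((dist_le_add_E z w).trans ?_)
    rw [add_mul, one_mul]
    refine add_le_add ?_ ?_
    · have h1 := (edist_le_ediam_of_mem (show fstE z ∈ t N q.1 from hz.1)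
        (show fstE w ∈ t N q.1 from hw.1)).trans (htg N q.1)
      rw [edist_dist] at h1
      exact (ENNReal.ofReal_le_ofReal_iff hgp.le).1 h1
    · have hcoord : ∀ i, |sndE z i - sndE w i| ≤ g N q.1 := by
        intro i
        have h1 := hz.2 i
        have h2 := hw.2 i
        have hkg : 1 ≤ g N q.1 * k N q.1 := by
          have : 1 / g N q.1 ≤ k N q.1 := Nat.le_ceil _
          rw [div_le_iff₀ hgp] at this
          linarith
        have : |sndE z i - sndE w i| * k N q.1 ≤ g N q.1 * k N q.1 := by
          rw [← abs_of_pos (hkpos N q.1), ← abs_mul, abs_of_pos (hkpos N q.1)]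
          refine le_trans (abs_le.2 ⟨?_, ?_⟩) hkg <;> nlinarith
        exact le_of_mul_le_mul_right this (hkpos N q.1)
      rw [EuclideanSpace.dist_eq]
      refine Real.sqrt_le_iff.2 ⟨by positivity, ?_⟩
      calc ∑ i, dist (sndE z i) (sndE w i) ^ 2 ≤ ∑ _i : Fin m, (g N q.1) ^ 2 := by
            refine Finset.sum_le_sum fun i _ => ?_
            rw [Real.dist_eq]
            exact pow_le_pow_left₀ (abs_nonneg _) (hcoord i) 2
        _ = m * g N q.1 ^ 2 := by simp
        _ ≤ (m * g N q.1) ^ 2 := by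
            have : (1 : ℝ) ≤ m := by exact_mod_cast hm
            rw [mul_pow]
            refine mul_le_mul_of_nonneg_right ?_ (sq_nonneg _)
            nlinarith
  have hcover : ∀ N, cyl A (ball (0 : Euc m) 1) ⊆ ⋃ q, S N q := by
    intro N z hz
    obtain ⟨j, hj⟩ := mem_iUnion.1 (hAt N hz.1)
    have hy : ∀ i, |sndE z i| ≤ 1 := by
      intro i
      have h1 : ‖sndE z‖ < 1 := by simpa using hz.2
      have h2 := PiLp.norm_apply_le (sndE z) i
      rw [Real.norm_eq_abs] at h2
      linarith
    have hp : ∀ i, ∃ p : Fin (2 * k N j + 1), ((p : ℕ) : ℝ) - k N j ≤ sndE z i * k N j ∧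
        sndE z i * k N j ≤ ((p : ℕ) : ℝ) - k N j + 1 := by
      intro i
      have hb := abs_le.1 (hy i)
      have hkp := hkpos N j
      have h0 : 0 ≤ sndE z i * k N j + k N j := by nlinarith
      refine ⟨⟨⌊sndE z i * k N j + k N j⌋₊, ?_⟩, ?_, ?_⟩
      · rw [Nat.lt_succ_iff]
        refine Nat.floor_le_of_le ?_
        push_cast
        nlinarith
      · have := Nat.floor_le h0
        simp only
        linarith
      · have := Nat.lt_floor_add_one (sndE z i * k N j + k N j)
        simp only
        linarith
    choose p hp using hp
    exact mem_iUnion.2 ⟨⟨j, p⟩, hj, hp⟩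
  have hterm : ∀ N, ∑' q, ediam (S N q) ^ (((d + m : ℕ) : ℝ)) ≤
      nuConst m d * (μH[(d : ℝ)] A + ENNReal.ofReal (1 / ((N : ℝ) + 1))) := by
    intro N
    rw [ENNReal.tsum_sigma']
    refine le_trans ?_ (mul_le_mul_right (hsum N) _)
    rw [← ENNReal.tsum_mul_left]
    refine ENNReal.tsum_le_tsum fun j => ?_
    rcases (t N j).eq_empty_or_nonempty with he | hne
    · have : ∀ p, S N ⟨j, p⟩ = ∅ := fun p => by simp [hS, cyl, he]
      have hp : (0 : ℝ) < ((d + m : ℕ) : ℝ) := by exact_mod_cast (by omega : 0 < d + m)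
      simp only [this, ediam_empty, ENNReal.zero_rpow_of_pos hp, tsum_zero]
      exact bot_le
    · simp only [hne, iSup_pos]
      have hgp := (hg N j).1
      have hg1 := (hg N j).2.trans (hη1 N)
      rw [tsum_fintype]
      calc ∑ p, ediam (S N ⟨j, p⟩) ^ (((d + m : ℕ) : ℝ))
          ≤ ∑ _p : Fin m → Fin (2 * k N j + 1), ENNReal.ofReal (((1 + m) * g N j) ^ (d + m)) := by
            refine Finset.sum_le_sum fun p _ => ?_
            rw [ENNReal.rpow_natCast, ENNReal.ofReal_pow (by positivity)]
            exact pow_le_pow_left' (hdiam N ⟨j, p⟩) _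
        _ = ENNReal.ofReal ((2 * k N j + 1) ^ m * ((1 + m) * g N j) ^ (d + m)) := by
            rw [Finset.sum_const, nsmul_eq_mul, ENNReal.ofReal_mul (by positivity)]
            congr 1
            rw [Finset.card_univ, Fintype.card_fun, Fintype.card_fin, Fintype.card_fin,
              ← ENNReal.ofReal_natCast]
            push_cast
            rfl
        _ ≤ ENNReal.ofReal (5 ^ m * (1 + m) ^ (d + m) * g N j ^ d) := by
            refine ENNReal.ofReal_le_ofReal ?_
            have hkb : (2 * (k N j : ℝ) + 1) * g N j ≤ 5 := by
              have h1 : (k N j : ℝ) < 1 / g N j + 1 := Nat.ceil_lt_add_one (by positivity)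
              have h2 : (k N j : ℝ) * g N j ≤ 1 + g N j := by
                calc (k N j : ℝ) * g N j ≤ (1 / g N j + 1) * g N j := by gcongr
                  _ = 1 + g N j := by field_simp
              nlinarith
            calc (2 * (k N j : ℝ) + 1) ^ m * ((1 + m) * g N j) ^ (d + m)
                = ((2 * (k N j : ℝ) + 1) * g N j) ^ m * (1 + m) ^ (d + m) * g N j ^ d := by
                  rw [mul_pow, mul_pow, pow_add (g N j)]; ring
              _ ≤ 5 ^ m * (1 + m) ^ (d + m) * g N j ^ d := by gcongr
        _ = nuConst m d * ENNReal.ofReal (g N j) ^ d := by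
            rw [nuConst, ENNReal.ofReal_mul (by positivity), ENNReal.ofReal_pow hgp.le]
  have hr0 : Tendsto (fun N : ℕ => ENNReal.ofReal ((1 + m) * (1 / ((N : ℝ) + 1)))) atTop (𝓝 0) := by
    have : Tendsto (fun N : ℕ => (1 + (m : ℝ)) * (1 / ((N : ℝ) + 1))) atTop (𝓝 0) := by
      simpa using (tendsto_one_div_add_atTop_nhds_zero_nat (𝕜 := ℝ)).const_mul (1 + (m : ℝ))
    simpa using ENNReal.tendsto_ofReal this
  refine (Measure.hausdorffMeasure_le_liminf_tsum _ _ _ hr0 S (Eventually.of_forall fun N q =>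
    (hdiam N q).trans (ENNReal.ofReal_le_ofReal ?_)) (Eventually.of_forall hcover)).trans ?_
  · have := (hg N q.1).2
    gcongr
  · have hlim : Tendsto (fun N : ℕ => nuConst m d * (μH[(d : ℝ)] A +
        ENNReal.ofReal (1 / ((N : ℝ) + 1)))) atTop (𝓝 (nuConst m d * (μH[(d : ℝ)] A + 0))) := by
      refine ENNReal.Tendsto.const_mul (Tendsto.const_add _ ?_) (Or.inr nuConst_ne_top)
      simpa using ENNReal.tendsto_ofReal (tendsto_one_div_add_atTop_nhds_zero_nat (𝕜 := ℝ))
    rw [add_zero] at hlim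
    exact (liminf_le_liminf (Eventually.of_forall hterm)).trans hlim.liminf_eq.le

lemma nu_eq_zero {m d n : ℕ} (hm : 1 ≤ m) {A : Set (Euc n)} (h : μH[(d : ℝ)] A = 0) :
    nu m d A = 0 := by
  have := nu_le (d := d) hm A
  rw [h, mul_zero] at this
  exact le_antisymm this (bot_le)

/-! ### Haar uniqueness for cylinders -/

lemma cyl_translate {n m : ℕ} (d : ℕ) (A : Set (Euc n)) (Y : Set (Euc m)) (x : Euc n) (y : Euc m) :
    μH[(d : ℝ)] (cyl ((fun a => x + a) ⁻¹' A) ((fun b => y + b) ⁻¹' Y)) = μH[(d : ℝ)] (cyl A Y) := by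
  have := IsometryEquiv.hausdorffMeasure_preimage (IsometryEquiv.addLeft (mkE x y)) (d : ℝ)
    (cyl A Y)
  rw [← this]
  congr 1
  ext z
  have h1 : fstE (mkE x y + z) = x + fstE z := by ext i; simp [fstE, mkE]
  have h2 : sndE (mkE x y + z) = y + sndE z := by ext i; simp [sndE, mkE]
  simp [cyl, h1, h2]

/-- In top dimension, `H^{d+m}(S × B(0,1))` is a fixed multiple of `H^d(S)`. -/
lemma exists_nu_const (m d : ℕ) (hm : 1 ≤ m) : ∃ c : ℝ≥0∞, c ≠ 0 ∧ c ≠ ⊤ ∧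
    ∀ S : Set (Euc d), MeasurableSet S → nu m d S = c * μH[(d : ℝ)] S := by
  set ν : Measure (Euc d) := Measure.map fstE
    ((μH[((d + m : ℕ) : ℝ)] : Measure (Euc (d + m))).restrict (sndE ⁻¹' ball (0 : Euc m) 1)) with hν
  have hap : ∀ S, MeasurableSet S → ν S = nu m d S := by
    intro S hS
    rw [hν, Measure.map_apply lipschitz_fstE.continuous.measurable hS,
      Measure.restrict_apply (lipschitz_fstE.continuous.measurable hS)]
    rfl
  have hH : Measure.IsAddHaarMeasure (μH[(d : ℝ)] : Measure (Euc d)) := by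
    have := isAddHaarMeasure_hausdorffMeasure (E := Euc d)
    rwa [finrank_euclideanSpace_fin] at this
  have : IsFiniteMeasureOnCompacts ν := ⟨fun K hK => by
    rw [hap K hK.measurableSet]
    exact (nu_le hm K).trans_lt (ENNReal.mul_lt_top nuConst_ne_top.lt_top hK.measure_lt_top)⟩
  have : ν.IsAddLeftInvariant := ⟨fun x => by
    ext S hS
    rw [Measure.map_apply (measurable_const_add x) hS, hap _ hS,
      hap _ (measurable_const_add x hS)]
    have := cyl_translate (m := m) (d + m) S (ball 0 1) x 0
    simpa [nu] using this⟩
  have h := Measure.isAddLeftInvariant_eq_smul ν (μH[(d : ℝ)] : Measure (Euc d))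
  have hc : ∀ S : Set (Euc d), MeasurableSet S →
      nu m d S = (ν.addHaarScalarFactor (μH[(d : ℝ)] : Measure (Euc d)) : ℝ≥0∞) * μH[(d : ℝ)] S := by
    intro S hS
    rw [← hap S hS]
    refine (DFunLike.congr_fun h S).trans ?_
    rw [Measure.smul_apply, ENNReal.smul_def, smul_eq_mul]
  refine ⟨_, ?_, ENNReal.coe_ne_top, hc⟩
  intro h0
  have h1 := hausdorff_le_nu (d := d) hm (ball (0 : Euc d) 1)
  rw [hc _ measurableSet_ball, h0, zero_mul] at h1
  exact absurd h1 (not_le.2 (measure_ball_pos _ _ one_pos))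

/-- For fixed `A`, the measure `Y ↦ H^{d+m}(A × Y)` is a multiple of Lebesgue measure. -/
lemma cyl_measure {m d n : ℕ} {A : Set (Euc n)} (hfin : nu m d A ≠ ⊤)
    {Y : Set (Euc m)} (hY : MeasurableSet Y) :
    μH[((d + m : ℕ) : ℝ)] (cyl A Y) * volume (ball (0 : Euc m) 1) = nu m d A * volume Y := by
  set ν : Measure (Euc m) := Measure.map sndE
    ((μH[((d + m : ℕ) : ℝ)] : Measure (Euc (n + m))).restrict (fstE ⁻¹' A)) with hν
  have hap : ∀ S, MeasurableSet S → ν S = μH[((d + m : ℕ) : ℝ)] (cyl A S) := by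
    intro S hS
    rw [hν, Measure.map_apply lipschitz_sndE.continuous.measurable hS,
      Measure.restrict_apply (lipschitz_sndE.continuous.measurable hS), inter_comm]
    rfl
  have : ν.IsAddLeftInvariant := ⟨fun y => by
    ext S hS
    rw [Measure.map_apply (measurable_const_add y) hS, hap _ hS,
      hap _ (measurable_const_add y hS)]
    simpa using cyl_translate (d + m) A S 0 y⟩
  have : IsFiniteMeasureOnCompacts ν := by
    have : IsLocallyFiniteMeasure ν := ⟨fun y => ⟨ball y 1, ball_mem_nhds _ one_pos, by
      have h1 : ν ((fun b => y + b) ⁻¹' ball y 1) = ν (ball y 1) := measure_preimage_add ν y _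
      have h2 : (fun b => y + b) ⁻¹' ball y 1 = ball 0 1 := by ext b; simp
      rw [← h1, h2, hap _ measurableSet_ball]
      exact hfin.lt_top⟩⟩
    infer_instance
  have h := Measure.isAddLeftInvariant_eq_smul ν (volume : Measure (Euc m))
  have hc : ∀ S : Set (Euc m), MeasurableSet S →
      μH[((d + m : ℕ) : ℝ)] (cyl A S) =
        (ν.addHaarScalarFactor (volume : Measure (Euc m)) : ℝ≥0∞) * volume S := by
    intro S hS
    rw [← hap S hS]
    refine (DFunLike.congr_fun h S).trans ?_
    rw [Measure.smul_apply, ENNReal.smul_def, smul_eq_mul]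
  unfold nu
  rw [hc _ hY, hc _ measurableSet_ball]
  ring

lemma cyl_ball {m d n : ℕ} {A : Set (Euc n)} (hfin : nu m d A ≠ ⊤)
    {T : ℝ} (hT : 0 < T) :
    μH[((d + m : ℕ) : ℝ)] (cyl A (ball (0 : Euc m) T)) = ENNReal.ofReal (T ^ m) * nu m d A := by
  have h := cyl_measure hfin (Y := ball (0 : Euc m) T) measurableSet_ball
  have hB0 : volume (ball (0 : Euc m) 1) ≠ 0 := (measure_ball_pos _ _ one_pos).ne'
  have hBt : volume (ball (0 : Euc m) 1) ≠ ⊤ := measure_ball_lt_top.ne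
  rw [Measure.addHaar_ball_of_pos _ _ hT, finrank_euclideanSpace_fin, ← mul_assoc] at h
  have := (ENNReal.mul_left_inj hB0 hBt).1 h
  rw [this, mul_comm]

lemma cyl_annulus {m d n : ℕ} {A : Set (Euc n)} (hA : MeasurableSet A) (hfin : nu m d A ≠ ⊤)
    {T : ℝ} (hT : 0 < T) :
    μH[((d + m : ℕ) : ℝ)] (cyl A (ball (0 : Euc m) (T + 1) \ ball 0 T)) =
      ENNReal.ofReal ((T + 1) ^ m - T ^ m) * nu m d A := by
  have h1 : cyl A (ball (0 : Euc m) (T + 1) \ ball 0 T) =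
      cyl A (ball (0 : Euc m) (T + 1)) \ cyl A (ball (0 : Euc m) T) := by
    ext z; simp only [cyl, mem_inter_iff, mem_preimage, Set.mem_sdiff]; tauto
  have hf : μH[((d + m : ℕ) : ℝ)] (cyl A (ball (0 : Euc m) T)) ≠ ⊤ := by
    rw [cyl_ball hfin hT]; exact ENNReal.mul_ne_top ENNReal.ofReal_ne_top hfin
  rw [h1, measure_sdiff _ (measurableSet_cyl hA measurableSet_ball).nullMeasurableSet hf,
    cyl_ball hfin hT, cyl_ball hfin (by linarith), ENNReal.ofReal_sub _ (by positivity),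
    ENNReal.sub_mul]
  · intro _ _; exact hfin
  · exact inter_subset_inter_right _ (preimage_mono (ball_subset_ball (by linarith)))

/-- Lipschitz images, acting on the first factor only. -/
lemma nu_image_le {m d n k : ℕ} {f : Euc k → Euc n} {A : Set (Euc k)} {K : ℝ≥0} (hK : 1 ≤ K)
    (hf : LipschitzOnWith K f A) : nu m d (f '' A) ≤ (K : ℝ≥0∞) ^ (d + m) * nu m d A := by
  unfold nu
  have h1 : LipschitzOnWith K (fun z : Euc (k + m) => mkE (f (fstE z)) (sndE z))
      (cyl A (ball (0 : Euc m) 1)) := by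
    refine LipschitzOnWith.of_dist_le_mul fun z hz w hw => ?_
    have hK' : (1 : ℝ) ≤ K := by exact_mod_cast hK
    refine le_of_sq_le_sq ?_ (by positivity)
    rw [mul_pow, dist_sq_E, dist_sq_E z w]
    simp only [fstE_mkE, sndE_mkE]
    have h2 := hf.dist_le_mul _ hz.1 _ hw.1
    have h3 := pow_le_pow_left₀ dist_nonneg h2 2
    have h4 : (1 : ℝ) ≤ (K : ℝ) ^ 2 := by nlinarith
    nlinarith [sq_nonneg (dist (sndE z) (sndE w))]
  have h2 := h1.hausdorffMeasure_image_le (d := ((d + m : ℕ) : ℝ)) (Nat.cast_nonneg _)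
  rw [ENNReal.rpow_natCast] at h2
  refine le_trans (measure_mono ?_) h2
  rintro z ⟨⟨a, ha, haz⟩, hz⟩
  refine ⟨mkE a (sndE z), ⟨by simpa using ha, by simpa using hz⟩, ?_⟩
  simp [haz]

/-! ### Minimality of `E` with respect to the measure of cylinders -/

lemma nu_ball_lt_top {n m d : ℕ} {E : Set (Euc n)}
    (h : IsMinimalSet (n + m) (d + m) (prodRm n m E)) (R : ℝ) : nu m d (E ∩ ball 0 R) < ⊤ := by
  by_cases hR : 0 < R
  · refine (measure_mono ?_).trans_lt (h.2.1 (R + 1) (by linarith))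
    rintro z ⟨⟨h1, h2⟩, h3⟩
    refine ⟨h1, ?_⟩
    have h4 := dist_le_add_E z 0
    have h5 : dist (fstE z) (fstE (0 : Euc (n + m))) < R := h2
    have h6 : dist (sndE z) (sndE (0 : Euc (n + m))) < 1 := h3
    rw [mem_ball]; linarith
  · rw [ball_eq_empty.2 (not_lt.1 hR)]
    simp [nu, cyl]

lemma measurableSet_image_of_isClosed {n k : ℕ} {E : Set (Euc n)} (hE : IsClosed E)
    {φ : Euc n → Euc k} (hφ : Continuous φ) : MeasurableSet (φ '' E) := by
  have : E = ⋃ j : ℕ, E ∩ closedBall 0 j := by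
    rw [← inter_iUnion, iUnion_closedBall_nat, inter_univ]
  rw [this, image_iUnion]
  exact MeasurableSet.iUnion fun j =>
    (((isCompact_closedBall _ _).inter_left hE).image hφ).measurableSet

/-- The cutoff equal to `1` on `B(0,T)` and to `0` off `B(0,T+1)`. -/
def cutoff {m : ℕ} (T : ℝ) (y : Euc m) : ℝ := max 0 (min 1 (T + 1 - ‖y‖))

lemma abs_max_min_sub_le (a b : ℝ) : |max 0 (min 1 a) - max 0 (min 1 b)| ≤ |a - b| := by
  have h1 := abs_max_sub_max_le_abs (min 1 a) (min 1 b) 0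
  have h2 := abs_min_sub_min_le_max 1 a 1 b
  rw [max_comm 0, max_comm 0]
  refine h1.trans (h2.trans ?_)
  simp

/-- If `E × ℝ^m` is minimal then `E` is minimal for `A ↦ H^{d+m}(A × B(0,1))`: apply minimality to
`(x, y) ↦ x + χ(|y|)(φ(x) - x)` with a cutoff at distance `T`, and let `T → ∞`. -/
lemma nu_minimal {n m d : ℕ} {E : Set (Euc n)} (hE : IsClosed E)
    (h : IsMinimalSet (n + m) (d + m) (prodRm n m E)) {φ : Euc n → Euc n} {K : ℝ≥0}
    (hφ : LipschitzWith K φ) (hb : IsBounded {x | φ x ≠ x}) :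
    nu m d (E \ φ '' E) ≤ nu m d (φ '' E \ E) := by
  obtain ⟨R, hR⟩ := hb.subset_ball 0
  set W := {x | φ x ≠ x} with hW
  have hWo : IsOpen W := isOpen_ne_fun hφ.continuous continuous_id
  have hEWfin : nu m d (E ∩ W) ≠ ⊤ :=
    ((nu_mono (inter_subset_inter_right _ hR)).trans_lt (nu_ball_lt_top h R)).ne
  have hfin1 : nu m d (E \ φ '' E) ≠ ⊤ := by
    refine ne_top_of_le_ne_top hEWfin (nu_mono fun x hx => ⟨hx.1, fun hxx => hx.2 ⟨x, hx.1, hxx⟩⟩)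
  have hfin2 : nu m d (φ '' E \ E) ≠ ⊤ := by
    refine ne_top_of_le_ne_top ?_ ((nu_mono (m := m) (d := d) (B := φ '' (E ∩ W)) ?_).trans
      (nu_image_le (K := max 1 K) (le_max_left _ _)
        ((hφ.weaken (le_max_right 1 K)).lipschitzOnWith (s := E ∩ W))))
    · exact ENNReal.mul_ne_top (by finiteness) hEWfin
    · rintro _ ⟨⟨x, hx, rfl⟩, hx2⟩
      exact ⟨x, ⟨hx, fun hxx => hx2 (by rwa [hxx])⟩, rfl⟩
  -- bound for the displacement
  set D : ℝ := ‖φ 0‖ + (K + 1) * |R| with hD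
  have hD0 : 0 ≤ D := by positivity
  have hdisp : ∀ x, ‖φ x - x‖ ≤ D := by
    intro x
    by_cases hx : x ∈ W
    · have h1 : ‖x‖ < R := by simpa using hR hx
      have h2 : ‖φ x - φ 0‖ ≤ K * ‖x‖ := by simpa [dist_eq_norm] using hφ.dist_le_mul x 0
      have h3 : ‖φ x - x‖ ≤ ‖φ x - φ 0‖ + ‖φ 0‖ + ‖x‖ := by
        calc ‖φ x - x‖ = ‖(φ x - φ 0) + φ 0 - x‖ := by congr 1; abel
          _ ≤ _ := (norm_sub_le _ _).trans (by gcongr; exact norm_add_le _ _)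
      have h4 : ‖x‖ ≤ |R| := h1.le.trans (le_abs_self R)
      have h5 : (K : ℝ) * ‖x‖ ≤ K * |R| := by gcongr
      rw [hD]; linarith
    · have : φ x = x := not_not.1 hx
      simpa [this] using hD0
  set L : ℝ≥0 := 1 + K + 1 + D.toNNReal with hL
  have hLr : (L : ℝ) = 1 + K + 1 + D := by simp [hL, Real.coe_toNNReal D hD0]
  set Φ : ℝ → Euc (n + m) → Euc (n + m) := fun T z =>
    mkE (fstE z + cutoff T (sndE z) • (φ (fstE z) - fstE z)) (sndE z) with hΦ
  have hΦlip : ∀ T, LipschitzWith L (Φ T) := by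
    intro T
    refine LipschitzWith.of_dist_le_mul fun z w => ?_
    refine (dist_le_add_E _ _).trans ?_
    simp only [hΦ, fstE_mkE, sndE_mkE]
    set χ := cutoff T (sndE z)
    set χ' := cutoff T (sndE w)
    have hc0 : 0 ≤ χ := le_max_left _ _
    have hc1 : χ ≤ 1 := max_le zero_le_one (min_le_left _ _)
    have hcc : |χ - χ'| ≤ dist (sndE z) (sndE w) := by
      refine (abs_max_min_sub_le _ _).trans ?_
      rw [dist_eq_norm, show T + 1 - ‖sndE z‖ - (T + 1 - ‖sndE w‖) = -(‖sndE z‖ - ‖sndE w‖) by ring,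
        abs_neg]
      exact abs_norm_sub_norm_le _ _
    have key : dist (fstE z + χ • (φ (fstE z) - fstE z)) (fstE w + χ' • (φ (fstE w) - fstE w)) ≤
        (1 + K) * dist (fstE z) (fstE w) + D * dist (sndE z) (sndE w) := by
      have e : (fstE z + χ • (φ (fstE z) - fstE z)) - (fstE w + χ' • (φ (fstE w) - fstE w)) =
          (1 - χ) • (fstE z - fstE w) + χ • (φ (fstE z) - φ (fstE w)) +
            (χ - χ') • (φ (fstE w) - fstE w) := by module
      rw [dist_eq_norm, e]
      refine (norm_add₃_le).trans ?_
      rw [norm_smul, norm_smul, norm_smul, Real.norm_eq_abs, Real.norm_eq_abs, Real.norm_eq_abs,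
        abs_of_nonneg hc0, abs_of_nonneg (by linarith : 0 ≤ 1 - χ), ← dist_eq_norm, ← dist_eq_norm]
      have h1 : (1 - χ) * dist (fstE z) (fstE w) ≤ 1 * dist (fstE z) (fstE w) := by
        gcongr; linarith
      have h2 : χ * dist (φ (fstE z)) (φ (fstE w)) ≤ 1 * (K * dist (fstE z) (fstE w)) := by
        gcongr; exact hφ.dist_le_mul _ _
      have h3 : |χ - χ'| * ‖φ (fstE w) - fstE w‖ ≤ dist (sndE z) (sndE w) * D := by
        gcongr; exact hdisp _
      linarith
    rw [hLr]
    have h1 := dist_fstE_le z w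
    have h2 := dist_sndE_le z w
    have h3 : (1 + (K : ℝ)) * dist (fstE z) (fstE w) ≤ (1 + K) * dist z w := by gcongr
    have h4 : D * dist (sndE z) (sndE w) ≤ D * dist z w := by gcongr
    linarith
  have hid : ∀ T z, Φ T z ≠ z → fstE z ∈ W ∧ ‖sndE z‖ < T + 1 := by
    intro T z hz
    refine ⟨fun hx => hz ?_, not_le.1 fun hy => hz ?_⟩
    · simp [hΦ, hx]
    · have : cutoff T (sndE z) = 0 := by
        unfold cutoff
        exact max_eq_left ((min_le_right _ _).trans (by linarith))
      simp [hΦ, this]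
  have hmain : ∀ T : ℝ, 0 < T → ENNReal.ofReal (T ^ m) * nu m d (E \ φ '' E) ≤
      ENNReal.ofReal (T ^ m) * nu m d (φ '' E \ E) +
        (L : ℝ≥0∞) ^ (d + m) * (ENNReal.ofReal ((T + 1) ^ m - T ^ m) * nu m d (E ∩ W)) := by
    intro T hT
    have hcut : ∀ y : Euc m, ‖y‖ < T → cutoff T y = 1 := by
      intro y hy
      unfold cutoff
      rw [min_eq_left (by linarith), max_eq_right zero_le_one]
    have hbd : IsBounded {z | Φ T z ≠ z} := by
      refine (isBounded_ball (x := (0 : Euc (n + m))) (r := R + (T + 1))).subset fun z hz => ?_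
      obtain ⟨h1, h2⟩ := hid T z hz
      have h3 : dist (fstE z) (fstE (0 : Euc (n + m))) < R := hR h1
      have h4 : dist (sndE z) (sndE (0 : Euc (n + m))) = ‖sndE z‖ := dist_zero_right _
      have h5 := dist_le_add_E z 0
      rw [mem_ball]; linarith
    rw [← cyl_ball hfin1 hT, ← cyl_ball hfin2 hT,
      ← cyl_annulus (hE.measurableSet.inter hWo.measurableSet) hEWfin hT]
    have hlow : cyl (E \ φ '' E) (ball (0 : Euc m) T) ⊆
        prodRm n m E \ Φ T '' prodRm n m E := by
      rintro z ⟨⟨h1, h2⟩, h3⟩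
      refine ⟨h1, ?_⟩
      rintro ⟨w, hw, rfl⟩
      refine h2 ⟨fstE w, hw, ?_⟩
      have : cutoff T (sndE w) = 1 := hcut _ (by simpa [hΦ] using h3)
      simp [hΦ, this]
    have hup : Φ T '' prodRm n m E \ prodRm n m E ⊆ cyl (φ '' E \ E) (ball (0 : Euc m) T) ∪
        Φ T '' cyl (E ∩ W) (ball (0 : Euc m) (T + 1) \ ball 0 T) := by
      rintro _ ⟨⟨w, hw, rfl⟩, h2⟩
      by_cases hy : ‖sndE w‖ < T
      · left
        have hc := hcut _ hy
        have hf : fstE (Φ T w) = φ (fstE w) := by simp [hΦ, hc]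
        refine ⟨⟨?_, h2⟩, by simpa [hΦ] using hy⟩
        rw [hf]; exact ⟨_, hw, rfl⟩
      · right
        obtain ⟨h3, h4⟩ := hid T w (fun hww => h2 (by rwa [hww]))
        exact ⟨w, ⟨⟨hw, h3⟩, by simpa using h4, by simpa using hy⟩, rfl⟩
    have h1 := h.2.2 (Φ T) ⟨L, hΦlip T⟩ hbd
    have h2 := ((hΦlip T).lipschitzOnWith
      (s := cyl (E ∩ W) (ball (0 : Euc m) (T + 1) \ ball 0 T))).hausdorffMeasure_image_le
        (d := ((d + m : ℕ) : ℝ)) (Nat.cast_nonneg _)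
    rw [ENNReal.rpow_natCast] at h2
    exact (measure_mono hlow).trans (h1.trans ((measure_mono hup).trans
      ((measure_union_le _ _).trans (by gcongr))))
  have hdiv : ∀ N : ℕ, nu m d (E \ φ '' E) ≤ nu m d (φ '' E \ E) +
      (L : ℝ≥0∞) ^ (d + m) * (ENNReal.ofReal ((1 + 1 / ((N : ℝ) + 1)) ^ m - 1) *
        nu m d (E ∩ W)) := by
    intro N
    have hT : (0 : ℝ) < (N : ℝ) + 1 := by positivity
    have h1 := hmain _ hT
    have e : ENNReal.ofReal (((N : ℝ) + 1 + 1) ^ m - ((N : ℝ) + 1) ^ m) =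
        ENNReal.ofReal (((N : ℝ) + 1) ^ m) *
          ENNReal.ofReal ((1 + 1 / ((N : ℝ) + 1)) ^ m - 1) := by
      rw [← ENNReal.ofReal_mul (by positivity), mul_sub, ← mul_pow, mul_one]
      congr 3
      field_simp
    rw [e, mul_assoc, mul_left_comm, ← mul_add] at h1
    have hT0 : ENNReal.ofReal (((N : ℝ) + 1) ^ m) ≠ 0 := by
      rw [Ne, ENNReal.ofReal_eq_zero, not_le]; positivity
    exact (ENNReal.mul_le_mul_iff_right hT0 ENNReal.ofReal_ne_top).1 h1
  have hlim : Tendsto (fun N : ℕ => nu m d (φ '' E \ E) +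
      (L : ℝ≥0∞) ^ (d + m) * (ENNReal.ofReal ((1 + 1 / ((N : ℝ) + 1)) ^ m - 1) *
        nu m d (E ∩ W))) atTop (𝓝 (nu m d (φ '' E \ E) + (L : ℝ≥0∞) ^ (d + m) *
          (0 * nu m d (E ∩ W)))) := by
    refine Tendsto.const_add _ (ENNReal.Tendsto.const_mul (ENNReal.Tendsto.mul_const ?_
      (Or.inr hEWfin)) (Or.inr (by finiteness)))
    have h1 : Tendsto (fun N : ℕ => (1 + 1 / ((N : ℝ) + 1)) ^ m - 1) atTop
        (𝓝 ((1 + 0) ^ m - 1)) :=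
      ((tendsto_one_div_add_atTop_nhds_zero_nat (𝕜 := ℝ)).const_add 1).pow m |>.sub_const 1
    simpa using ENNReal.tendsto_ofReal h1
  simpa using ge_of_tendsto' hlim hdiv

/-- Quasi-minimality of `E` with respect to `H^d`. -/
lemma quasi_minimal {n m d : ℕ} (hm : 1 ≤ m) {E : Set (Euc n)} (hE : IsClosed E)
    (h : IsMinimalSet (n + m) (d + m) (prodRm n m E)) {φ : Euc n → Euc n} {K : ℝ≥0}
    (hφ : LipschitzWith K φ) {S : Set (Euc n)} (hS : IsBounded S) (hid : ∀ x ∉ S, φ x = x) :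
    μH[(d : ℝ)] (E ∩ S) ≤ 2 * nuConst m d * μH[(d : ℝ)] (φ '' (E ∩ S)) := by
  have h1 : nu m d (E \ φ '' E) ≤ nu m d (φ '' E \ E) :=
    nu_minimal hE h hφ (hS.subset fun x hx => by_contra fun hxS => hx (hid x hxS))
  have h2 : E ∩ S ⊆ (E \ φ '' E) ∪ φ '' (E ∩ S) := by
    rintro x ⟨hx, hxS⟩
    by_cases hx' : x ∈ φ '' E
    · obtain ⟨y, hy, rfl⟩ := hx'
      right
      by_cases hyS : y ∈ S
      · exact ⟨y, ⟨hy, hyS⟩, rfl⟩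
      · rw [hid y hyS] at hxS; exact absurd hxS hyS
    · exact Or.inl ⟨hx, hx'⟩
  have h3 : φ '' E \ E ⊆ φ '' (E ∩ S) := by
    rintro _ ⟨⟨y, hy, rfl⟩, hx⟩
    refine ⟨y, ⟨hy, by_contra fun hyS => hx ?_⟩, rfl⟩
    rwa [hid y hyS]
  calc μH[(d : ℝ)] (E ∩ S) ≤ nu m d (E ∩ S) := hausdorff_le_nu hm _
    _ ≤ nu m d (E \ φ '' E) + nu m d (φ '' (E ∩ S)) := (nu_mono h2).trans (nu_union_le _ _)
    _ ≤ nu m d (φ '' (E ∩ S)) + nu m d (φ '' (E ∩ S)) := by gcongr; exact h1.trans (nu_mono h3)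
    _ = 2 * nu m d (φ '' (E ∩ S)) := (two_mul _).symm
    _ ≤ 2 * (nuConst m d * μH[(d : ℝ)] (φ '' (E ∩ S))) := by gcongr; exact nu_le hm _
    _ = _ := (mul_assoc _ _ _).symm

/-! ### Cylinders over rectifiable sets -/

/-- If `f` contracts distances relative to `C • g` on `S`, then `f(S)` is a `C`-Lipschitz image
of `g(S)`. -/
lemma hausdorff_image_le_of_dist_le {α X Y : Type*} [MetricSpace X] [MeasurableSpace X]
    [BorelSpace X] [MetricSpace Y] [MeasurableSpace Y] [BorelSpace Y]
    {f : α → X} {g : α → Y} {S : Set α} {C : ℝ≥0} (d : ℕ)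
    (hS : ∀ x ∈ S, ∀ y ∈ S, dist (f x) (f y) ≤ C * dist (g x) (g y)) :
    μH[(d : ℝ)] (f '' S) ≤ (C : ℝ≥0∞) ^ d * μH[(d : ℝ)] (g '' S) := by
  rcases S.eq_empty_or_nonempty with rfl | ⟨a, ha⟩
  · simp
  have : Nonempty α := ⟨a⟩
  set F : Y → X := fun y => f (Function.invFunOn g S y) with hF
  have hinv : ∀ y ∈ g '' S, Function.invFunOn g S y ∈ S ∧ g (Function.invFunOn g S y) = y :=
    fun y hy => ⟨Function.invFunOn_mem hy, Function.invFunOn_eq hy⟩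
  have hFl : LipschitzOnWith C F (g '' S) := by
    refine LipschitzOnWith.of_dist_le_mul fun y hy z hz => ?_
    have := hS _ (hinv y hy).1 _ (hinv z hz).1
    rwa [(hinv y hy).2, (hinv z hz).2] at this
  have hsub : f '' S ⊆ F '' (g '' S) := by
    rintro _ ⟨x, hx, rfl⟩
    refine ⟨g x, ⟨x, hx, rfl⟩, ?_⟩
    have h1 := hinv (g x) ⟨x, hx, rfl⟩
    have h2 := hS _ h1.1 _ hx
    rw [h1.2, dist_self, mul_zero] at h2
    exact dist_le_zero.1 h2
  have := hFl.hausdorffMeasure_image_le (d := (d : ℝ)) (Nat.cast_nonneg d)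
  rw [ENNReal.rpow_natCast] at this
  exact (measure_mono hsub).trans this

lemma nu_image_le_of_dist_le {m d k l n : ℕ} {f : Euc k → Euc n} {g : Euc k → Euc l}
    {S : Set (Euc k)} {C : ℝ≥0} (hC : 1 ≤ C)
    (hS : ∀ x ∈ S, ∀ y ∈ S, dist (f x) (f y) ≤ C * dist (g x) (g y)) :
    nu m d (f '' S) ≤ (C : ℝ≥0∞) ^ (d + m) * nu m d (g '' S) := by
  rcases S.eq_empty_or_nonempty with rfl | ⟨a, ha⟩
  · simp [nu, cyl]
  set F : Euc l → Euc n := fun y => f (Function.invFunOn g S y) with hF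
  have hinv : ∀ y ∈ g '' S, Function.invFunOn g S y ∈ S ∧ g (Function.invFunOn g S y) = y :=
    fun y hy => ⟨Function.invFunOn_mem hy, Function.invFunOn_eq hy⟩
  have hFl : LipschitzOnWith C F (g '' S) := by
    refine LipschitzOnWith.of_dist_le_mul fun y hy z hz => ?_
    have := hS _ (hinv y hy).1 _ (hinv z hz).1
    rwa [(hinv y hy).2, (hinv z hz).2] at this
  have hsub : f '' S ⊆ F '' (g '' S) := by
    rintro _ ⟨x, hx, rfl⟩
    refine ⟨g x, ⟨x, hx, rfl⟩, ?_⟩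
    have h1 := hinv (g x) ⟨x, hx, rfl⟩
    have h2 := hS _ h1.1 _ hx
    rw [h1.2, dist_self, mul_zero] at h2
    exact dist_le_zero.1 h2
  exact (nu_mono hsub).trans (nu_image_le hC hFl)

/-- On Borel subsets of `B`, the set functions `nu` and `c H^d` agree up to the factor `q`. -/
def EpsGood (m d : ℕ) (c q : ℝ≥0∞) {n : ℕ} (B : Set (Euc n)) : Prop :=
  ∀ A ⊆ B, MeasurableSet A → nu m d A ≤ q * (c * μH[(d : ℝ)] A) ∧
    c * μH[(d : ℝ)] A ≤ q * nu m d A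

lemma EpsGood.iUnion {m d n : ℕ} {c q : ℝ≥0∞} {B : ℕ → Set (Euc n)}
    (hB : ∀ i, MeasurableSet (B i)) (h : ∀ i, EpsGood m d c q (B i)) :
    EpsGood m d c q (⋃ i, B i) := by
  intro A hA hAm
  have e : A = ⋃ i, A ∩ disjointed B i := by
    rw [← inter_iUnion, iUnion_disjointed, inter_eq_self_of_subset_left hA]
  have hm : ∀ i, MeasurableSet (A ∩ disjointed B i) := fun i =>
    hAm.inter (MeasurableSet.disjointed hB i)
  have hdisj : Pairwise (Function.onFun Disjoint fun i => A ∩ disjointed B i) := fun i j hij =>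
    (disjoint_disjointed B hij).mono inter_subset_right inter_subset_right
  have hsub : ∀ i, A ∩ disjointed B i ⊆ B i := fun i =>
    inter_subset_right.trans (disjointed_subset B i)
  rw [e, measure_iUnion hdisj hm, nu_iUnion_eq hm hdisj, ← ENNReal.tsum_mul_left,
    ← ENNReal.tsum_mul_left, ← ENNReal.tsum_mul_left]
  exact ⟨ENNReal.tsum_le_tsum fun i => (h i _ (hsub i) (hm i)).1,
    ENNReal.tsum_le_tsum fun i => (h i _ (hsub i) (hm i)).2⟩

lemma EpsGood.union {m d n : ℕ} {c q : ℝ≥0∞} {B B' : Set (Euc n)} (hB : MeasurableSet B)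
    (hB' : MeasurableSet B') (h : EpsGood m d c q B) (h' : EpsGood m d c q B') :
    EpsGood m d c q (B ∪ B') := by
  have e : B ∪ B' = ⋃ i : ℕ, if i = 0 then B else B' := by
    ext x
    simp only [mem_union, mem_iUnion]
    constructor
    · rintro (hx | hx)
      exacts [⟨0, by simpa using hx⟩, ⟨1, by simpa using hx⟩]
    · rintro ⟨i, hi⟩
      split_ifs at hi
      exacts [Or.inl hi, Or.inr hi]
  rw [e]
  refine EpsGood.iUnion (fun i => ?_) (fun i => ?_) <;> split_ifs <;> assumption

lemma EpsGood.of_null {m d n : ℕ} (hm : 1 ≤ m) {c q : ℝ≥0∞} {B : Set (Euc n)}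
    (h : μH[(d : ℝ)] B = 0) : EpsGood m d c q B := by
  intro A hA _
  have h1 := measure_mono_null hA h
  rw [nu_eq_zero hm h1, h1]
  simp

lemma EpsGood.image {m d n : ℕ} {c : ℝ≥0∞}
    (hc : ∀ S : Set (Euc d), MeasurableSet S → nu m d S = c * μH[(d : ℝ)] S)
    {f : Euc d → Euc n} (hf : Continuous f) {S : Set (Euc d)} (hS : MeasurableSet S)
    (g : Euc d ≃L[ℝ] Euc d) {q : ℝ≥0} (hq : 1 ≤ q)
    (h1 : ∀ x ∈ S, ∀ y ∈ S, dist (f x) (f y) ≤ q * dist (g x) (g y))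
    (h2 : ∀ x ∈ S, ∀ y ∈ S, dist (g x) (g y) ≤ q * dist (f x) (f y)) :
    EpsGood m d c ((q : ℝ≥0∞) ^ (2 * d + m)) (f '' S) := by
  intro A hA hAm
  set S' := S ∩ f ⁻¹' A with hS'
  have hfS : f '' S' = A := by rw [hS', image_inter_preimage, inter_eq_self_of_subset_right hA]
  have hG : MeasurableSet (g '' S') :=
    g.toHomeomorph.measurableEmbedding.measurableSet_image.2 (hS.inter (hf.measurable hAm))
  have hsub : S' ⊆ S := inter_subset_left
  have a1 := nu_image_le_of_dist_le (m := m) (d := d) hq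
    (fun x hx y hy => h1 x (hsub hx) y (hsub hy))
  have a2 := nu_image_le_of_dist_le (m := m) (d := d) hq
    (fun x hx y hy => h2 x (hsub hx) y (hsub hy))
  have b1 := hausdorff_image_le_of_dist_le d (fun x hx y hy => h1 x (hsub hx) y (hsub hy))
  have b2 := hausdorff_image_le_of_dist_le d (fun x hx y hy => h2 x (hsub hx) y (hsub hy))
  rw [hfS] at a1 a2 b1 b2
  have e := hc _ hG
  constructor
  · calc nu m d A ≤ (q : ℝ≥0∞) ^ (d + m) * (c * μH[(d : ℝ)] (g '' S')) := by rw [← e]; exact a1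
      _ ≤ (q : ℝ≥0∞) ^ (d + m) * (c * ((q : ℝ≥0∞) ^ d * μH[(d : ℝ)] A)) := by gcongr
      _ = _ := by ring
  · calc c * μH[(d : ℝ)] A ≤ c * ((q : ℝ≥0∞) ^ d * μH[(d : ℝ)] (g '' S')) := by gcongr
      _ = (q : ℝ≥0∞) ^ d * nu m d (g '' S') := by rw [e]; ring
      _ ≤ (q : ℝ≥0∞) ^ d * ((q : ℝ≥0∞) ^ (d + m) * nu m d A) := by gcongr
      _ = _ := by ring

instance isAddHaar_hausdorff_Euc (d : ℕ) :
    Measure.IsAddHaarMeasure (μH[(d : ℝ)] : Measure (Euc d)) := by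
  have := isAddHaarMeasure_hausdorffMeasure (E := Euc d)
  rwa [finrank_euclideanSpace_fin] at this

/-- An injective linear map is, up to an isometry of its range, an automorphism. -/
lemma exists_equiv_norm_eq {d n : ℕ} (A : Euc d →L[ℝ] Euc n) (hA : Function.Injective A) :
    ∃ g : Euc d ≃L[ℝ] Euc d, ∀ v, ‖g v‖ = ‖A v‖ := by
  have hfr : Module.finrank ℝ (LinearMap.range (A : Euc d →ₗ[ℝ] Euc n)) = d := by
    rw [LinearMap.finrank_range_of_inj hA, finrank_euclideanSpace_fin]
  set b := (stdOrthonormalBasis ℝ (LinearMap.range (A : Euc d →ₗ[ℝ] Euc n))).reindex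
    (finCongr hfr)
  set B : Euc d →ₗ[ℝ] Euc d :=
    b.repr.toLinearEquiv.toLinearMap ∘ₗ (A : Euc d →ₗ[ℝ] Euc n).rangeRestrict with hB
  have hn : ∀ v, ‖B v‖ = ‖A v‖ := by
    intro v
    simp only [hB, LinearMap.comp_apply]
    exact (b.repr.norm_map _).trans rfl
  have hBi : Function.Injective B := by
    rw [← LinearMap.ker_eq_bot, LinearMap.ker_eq_bot']
    intro v hv
    have : ‖A v‖ = 0 := by rw [← hn, hv, norm_zero]
    exact hA (by rw [norm_eq_zero.1 this, map_zero])
  exact ⟨(LinearEquiv.ofInjectiveEndo B hBi).toContinuousLinearEquiv, fun v => hn v⟩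

/-- A Lipschitz map sends the points where its derivative is not injective to a null set: near
such a point it is almost constant in one direction. -/
lemma image_singular_null {d n : ℕ} {f : Euc d → Euc n} {K : ℝ≥0} (hf : LipschitzWith K f) :
    μH[(d : ℝ)] (f '' {x | DifferentiableAt ℝ f x ∧ ¬ Function.Injective (fderiv ℝ f x)}) = 0 := by
  set D := {x | DifferentiableAt ℝ f x ∧ ¬ Function.Injective (fderiv ℝ f x)} with hD
  have hcov : f '' D = ⋃ R : ℕ, f '' (D ∩ ball 0 R) := by
    rw [← image_iUnion, ← inter_iUnion, iUnion_ball_nat, inter_univ]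
  rw [hcov]
  refine measure_iUnion_null fun R => ?_
  set s := D ∩ ball (0 : Euc d) R
  have key : ∀ ε : ℝ≥0, 0 < ε → ε ≤ 1 → μH[(d : ℝ)] (f '' s) ≤
      ε * (((K + 1 : ℝ≥0) : ℝ≥0∞) ^ d * μH[(d : ℝ)] (ball (0 : Euc d) R)) := by
    intro ε hε hε1
    obtain ⟨t, A, htd, htm, hst, happ, hex⟩ :=
      exists_partition_approximatesLinearOn_of_hasFDerivWithinAt f s (fderiv ℝ f)
        (fun x hx => hx.1.1.hasFDerivAt.hasFDerivWithinAt) (fun _ => ε) (fun _ => hε.ne')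
    have hpiece : ∀ i, μH[(d : ℝ)] (f '' (s ∩ t i)) ≤
        ((K + 1 : ℝ≥0) : ℝ≥0∞) ^ d * (ε * μH[(d : ℝ)] (ball (0 : Euc d) R ∩ t i)) := by
      intro i
      rcases (s ∩ t i).eq_empty_or_nonempty with he | hne
      · simp [he]
      obtain ⟨y, hy, hAy⟩ := hex (hne.mono inter_subset_left) i
      have hAK : ‖A i‖ ≤ K := by rw [hAy]; exact norm_fderiv_le_of_lipschitz ℝ hf
      obtain ⟨v, hv1, hv0⟩ : ∃ v : Euc d, ‖v‖ = 1 ∧ A i v = 0 := by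
        have h1 := hy.1.2
        rw [← hAy, ← ContinuousLinearMap.coe_coe, ← LinearMap.ker_eq_bot] at h1
        obtain ⟨w, hw, hw0⟩ := Submodule.exists_mem_ne_zero_of_ne_bot h1
        refine ⟨‖w‖⁻¹ • w, ?_, ?_⟩
        · rw [norm_smul, norm_inv, norm_norm, inv_mul_cancel₀ (norm_ne_zero_iff.2 hw0)]
        · rw [map_smul, show A i w = 0 from hw, smul_zero]
      -- contraction by `ε` in the direction `v`
      set P : Euc d →ₗ[ℝ] Euc d :=
        LinearMap.transvection ((innerₛₗ ℝ v : Euc d →ₗ[ℝ] ℝ)) (((ε : ℝ) - 1) • v) with hP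
      have hPa : ∀ w, P w = w + (inner ℝ v w * ((ε : ℝ) - 1)) • v := by
        intro w
        simp [hP, LinearMap.transvection, smul_smul]
      have hdet : LinearMap.det P = ε := by
        rw [hP, LinearMap.transvection.det]
        simp [hv1]
      have hPn : ∀ w, ε * ‖w‖ ≤ ‖P w‖ := by
        intro w
        have hin : ‖P w‖ ^ 2 = ‖w‖ ^ 2 - (1 - (ε : ℝ) ^ 2) * inner ℝ v w ^ 2 := by
          rw [hPa, norm_add_sq_real, inner_smul_right, norm_smul, hv1, real_inner_comm,
            Real.norm_eq_abs, mul_one, sq_abs]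
          ring
        have hcs : inner ℝ v w ^ 2 ≤ ‖w‖ ^ 2 := by
          have := abs_real_inner_le_norm v w
          rw [hv1, one_mul] at this
          exact sq_le_sq' (by linarith [neg_abs_le (inner ℝ v w)]) ((le_abs_self _).trans this)
        have hε1' : (ε : ℝ) ≤ 1 := by exact_mod_cast hε1
        have hε0 : (0 : ℝ) ≤ ε := ε.2
        refine le_of_sq_le_sq ?_ (norm_nonneg _)
        rw [hin, mul_pow]
        have h1 : (ε : ℝ) ^ 2 ≤ 1 := by nlinarith
        nlinarith [mul_nonneg (sub_nonneg.2 h1) (sub_nonneg.2 hcs)]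
      have hAP : ∀ w, A i w = A i (P w) := by
        intro w; rw [hPa, map_add, map_smul, hv0, smul_zero, add_zero]
      have hd : ∀ x ∈ s ∩ t i, ∀ y ∈ s ∩ t i,
          dist (f x) (f y) ≤ ((K + 1 : ℝ≥0) : ℝ) * dist (P x) (P y) := by
        intro x hx y hy
        have h1 := happ i x hx y hy
        rw [dist_eq_norm, dist_eq_norm, ← map_sub]
        have h2 : ‖f x - f y‖ ≤ ‖f x - f y - A i (x - y)‖ + ‖A i (x - y)‖ := by
          simpa using norm_add_le (f x - f y - A i (x - y)) (A i (x - y))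
        have h3 : ‖A i (x - y)‖ ≤ K * ‖P (x - y)‖ := by
          rw [hAP]; exact (A i).le_of_opNorm_le hAK _
        have h4 := hPn (x - y)
        push_cast
        linarith
      refine (hausdorff_image_le_of_dist_le d hd).trans ?_
      gcongr
      rw [Measure.addHaar_image_linearMap, hdet, NNReal.abs_eq, ENNReal.ofReal_coe_nnreal]
      gcongr
      exact inter_subset_right
    calc μH[(d : ℝ)] (f '' s) ≤ μH[(d : ℝ)] (⋃ i, f '' (s ∩ t i)) := by
          refine measure_mono ?_
          rw [← image_iUnion, ← inter_iUnion, inter_eq_self_of_subset_left hst]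
      _ ≤ ∑' i, ((K + 1 : ℝ≥0) : ℝ≥0∞) ^ d * (ε * μH[(d : ℝ)] (ball (0 : Euc d) R ∩ t i)) :=
          (measure_iUnion_le _).trans (ENNReal.tsum_le_tsum hpiece)
      _ = ((K + 1 : ℝ≥0) : ℝ≥0∞) ^ d * (ε * μH[(d : ℝ)] (⋃ i, ball (0 : Euc d) R ∩ t i)) := by
          rw [ENNReal.tsum_mul_left, ENNReal.tsum_mul_left, measure_iUnion]
          · exact fun i j hij => (htd hij).mono inter_subset_right inter_subset_right
          · exact fun i => measurableSet_ball.inter (htm i)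
      _ ≤ ((K + 1 : ℝ≥0) : ℝ≥0∞) ^ d * (ε * μH[(d : ℝ)] (ball (0 : Euc d) R)) := by
          gcongr; exact iUnion_subset fun i => inter_subset_left
      _ = _ := by ring
  set X := ((K + 1 : ℝ≥0) : ℝ≥0∞) ^ d * μH[(d : ℝ)] (ball (0 : Euc d) R) with hX
  have hXt : X ≠ ⊤ := ENNReal.mul_ne_top (by finiteness) measure_ball_lt_top.ne
  have hlim : Tendsto (fun k : ℕ => (((1 : ℝ≥0) / (k + 1) : ℝ≥0) : ℝ≥0∞) * X) atTop
      (𝓝 (((0 : ℝ≥0) : ℝ≥0∞) * X)) :=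
    ENNReal.Tendsto.mul_const (ENNReal.tendsto_coe.2 tendsto_one_div_add_atTop_nhds_zero_nat)
      (Or.inr hXt)
  have := ge_of_tendsto' hlim fun k => key (1 / (k + 1)) (by positivity)
    (div_le_one_of_le₀ (by simp) bot_le)
  simpa using this

lemma EpsGood.range {m d n : ℕ} (hm : 1 ≤ m) {c : ℝ≥0∞}
    (hc : ∀ S : Set (Euc d), MeasurableSet S → nu m d S = c * μH[(d : ℝ)] S)
    {f : Euc d → Euc n} {K : ℝ≥0} (hf : LipschitzWith K f) {ε : ℝ≥0} (hε : 0 < ε)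
    (hε1 : ε ≤ 1 / 2) :
    EpsGood m d c (((1 + 2 * ε : ℝ≥0) : ℝ≥0∞) ^ (2 * d + m)) (Set.range f) := by
  set D1 := {x | DifferentiableAt ℝ f x} ∩ {x | Function.Injective (fderiv ℝ f x)} with hD1
  have hD1m : MeasurableSet D1 :=
    (measurableSet_of_differentiableAt ℝ f).inter
      (measurable_fderiv ℝ f ContinuousLinearMap.isOpen_injective.measurableSet)
  have hN : μH[(d : ℝ)] (f '' {x | ¬ DifferentiableAt ℝ f x}) = 0 := by
    have h1 : μH[(d : ℝ)] {x | ¬ DifferentiableAt ℝ f x} = 0 :=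
      ae_iff.1 (hf.ae_differentiableAt (μ := (μH[(d : ℝ)] : Measure (Euc d))))
    have h2 := (hf.lipschitzOnWith (s := {x | ¬ DifferentiableAt ℝ f x})).hausdorffMeasure_image_le
      (d := (d : ℝ)) (Nat.cast_nonneg d)
    rw [h1, mul_zero] at h2
    exact le_antisymm h2 bot_le
  set Z := f '' {x | ¬ DifferentiableAt ℝ f x} ∪
    f '' {x | DifferentiableAt ℝ f x ∧ ¬ Function.Injective (fderiv ℝ f x)} with hZ
  have hZ0 : μH[(d : ℝ)] Z = 0 := measure_union_null hN (image_singular_null hf)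
  have hanti : ∀ A : Euc d →L[ℝ] Euc n, ∃ r : ℝ≥0, r ≠ 0 ∧
      (Function.Injective A → ∀ v, r * ‖v‖ ≤ ε * ‖A v‖) := by
    intro A
    by_cases hA : Function.Injective A
    · obtain ⟨κ, hκ, hκA⟩ := (A : Euc d →ₗ[ℝ] Euc n).exists_antilipschitzWith
        (LinearMap.ker_eq_bot.2 hA)
      refine ⟨ε / κ, (by positivity), fun _ v => ?_⟩
      have h1 : ‖v‖ ≤ κ * ‖A v‖ := by
        simpa using hκA.le_mul_dist v 0
      have hκ' : (0 : ℝ) < κ := hκ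
      push_cast
      calc (ε : ℝ) / κ * ‖v‖ ≤ ε / κ * (κ * ‖A v‖) := by gcongr
        _ = ε * ‖A v‖ := by field_simp
    · exact ⟨1, one_ne_zero, fun h => absurd h hA⟩
  choose r hr0 hr using hanti
  obtain ⟨t, A, htd, htm, hst, happ, hex⟩ :=
    exists_partition_approximatesLinearOn_of_hasFDerivWithinAt f D1 (fderiv ℝ f)
      (fun x hx => hx.1.hasFDerivAt.hasFDerivWithinAt) r hr0
  have hpieces : ∀ i, MeasurableSet (f '' (D1 ∩ t i)) ∧
      EpsGood m d c (((1 + 2 * ε : ℝ≥0) : ℝ≥0∞) ^ (2 * d + m)) (f '' (D1 ∩ t i)) := by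
    intro i
    have hSm : MeasurableSet (D1 ∩ t i) := hD1m.inter (htm i)
    rcases (D1 ∩ t i).eq_empty_or_nonempty with he | hne
    · rw [he, image_empty]; exact ⟨MeasurableSet.empty, EpsGood.of_null hm measure_empty⟩
    obtain ⟨y, hy, hAy⟩ := hex (hne.mono inter_subset_left) i
    have hAinj : Function.Injective (A i) := by rw [hAy]; exact hy.2
    obtain ⟨g, hg⟩ := exists_equiv_norm_eq (A i) hAinj
    have hε1' : (ε : ℝ) ≤ 1 / 2 := by exact_mod_cast hε1
    have hε0 : (0 : ℝ) ≤ ε := ε.2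
    have hboth : ∀ x ∈ D1 ∩ t i, ∀ y ∈ D1 ∩ t i,
        ‖f x - f y‖ ≤ (1 + ε) * ‖g (x - y)‖ ∧ (1 - ε) * ‖g (x - y)‖ ≤ ‖f x - f y‖ := by
      intro x hx y hy
      have h1 := (happ i x hx y hy).trans (hr (A i) hAinj (x - y))
      rw [hg]
      have h2 := abs_le.1 ((abs_norm_sub_norm_le (f x - f y) (A i (x - y))).trans h1)
      constructor <;> linarith
    have h1 : ∀ x ∈ D1 ∩ t i, ∀ y ∈ D1 ∩ t i,
        dist (f x) (f y) ≤ ((1 + 2 * ε : ℝ≥0) : ℝ) * dist (g x) (g y) := by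
      intro x hx y hy
      have := (hboth x hx y hy).1
      rw [dist_eq_norm, dist_eq_norm, ← map_sub]
      push_cast
      nlinarith [norm_nonneg (g (x - y))]
    have h2 : ∀ x ∈ D1 ∩ t i, ∀ y ∈ D1 ∩ t i,
        dist (g x) (g y) ≤ ((1 + 2 * ε : ℝ≥0) : ℝ) * dist (f x) (f y) := by
      intro x hx y hy
      have := (hboth x hx y hy).2
      rw [dist_eq_norm, dist_eq_norm, ← map_sub]
      push_cast
      calc ‖g (x - y)‖ ≤ (1 + 2 * ε) * ((1 - ε) * ‖g (x - y)‖) := by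
            have : (1 : ℝ) ≤ (1 + 2 * ε) * (1 - ε) := by nlinarith
            nlinarith [norm_nonneg (g (x - y))]
        _ ≤ _ := by gcongr
    refine ⟨hSm.image_of_continuousOn_injOn hf.continuous.continuousOn fun x hx y hy hxy => ?_,
      EpsGood.image hc hf.continuous hSm g (by simp) h1 h2⟩
    have := h2 x hx y hy
    rw [hxy, dist_self, mul_zero] at this
    exact g.injective (dist_le_zero.1 this)
  have hsub : Set.range f ⊆ toMeasurable μH[(d : ℝ)] Z ∪ ⋃ i, f '' (D1 ∩ t i) := by
    rintro _ ⟨x, rfl⟩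
    by_cases hx : DifferentiableAt ℝ f x
    · by_cases hx' : Function.Injective (fderiv ℝ f x)
      · right
        obtain ⟨i, hi⟩ := mem_iUnion.1 (hst ⟨hx, hx'⟩)
        exact mem_iUnion.2 ⟨i, x, ⟨⟨hx, hx'⟩, hi⟩, rfl⟩
      · exact Or.inl (subset_toMeasurable _ _ (Or.inr ⟨x, ⟨hx, hx'⟩, rfl⟩))
    · exact Or.inl (subset_toMeasurable _ _ (Or.inl ⟨x, hx, rfl⟩))
  have hgood := EpsGood.union (measurableSet_toMeasurable _ _)
    (MeasurableSet.iUnion fun i => (hpieces i).1)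
    (EpsGood.of_null hm (c := c) (q := ((1 + 2 * ε : ℝ≥0) : ℝ≥0∞) ^ (2 * d + m))
      (B := toMeasurable μH[(d : ℝ)] Z) (by rw [measure_toMeasurable, hZ0]))
    (EpsGood.iUnion (fun i => (hpieces i).1) fun i => (hpieces i).2)
  exact fun A hA => hgood A (hA.trans hsub)

/-- On rectifiable Borel sets, `H^{d+m}(A × B(0,1)) = c H^d(A)`. -/
lemma nu_eq_of_rectifiable {m d n : ℕ} (hm : 1 ≤ m) {c : ℝ≥0∞}
    (hc : ∀ S : Set (Euc d), MeasurableSet S → nu m d S = c * μH[(d : ℝ)] S)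
    {f : ℕ → Euc d → Euc n} (hf : ∀ j, ∃ K : ℝ≥0, LipschitzWith K (f j)) {Z A : Set (Euc n)}
    (hZ : μH[(d : ℝ)] Z = 0) (hA : MeasurableSet A) (hcov : A ⊆ Z ∪ ⋃ j, Set.range (f j)) :
    nu m d A = c * μH[(d : ℝ)] A := by
  have hgood : ∀ ε : ℝ≥0, 0 < ε → ε ≤ 1 / 2 →
      EpsGood m d c (((1 + 2 * ε : ℝ≥0) : ℝ≥0∞) ^ (2 * d + m)) A := by
    intro ε hε hε1
    have hr : ∀ j, MeasurableSet (Set.range (f j)) := fun j => by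
      obtain ⟨K, hK⟩ := hf j
      rw [← image_univ]
      exact measurableSet_image_of_isClosed isClosed_univ hK.continuous
    have h1 := EpsGood.union (measurableSet_toMeasurable _ _) (MeasurableSet.iUnion hr)
      (EpsGood.of_null hm (c := c) (q := ((1 + 2 * ε : ℝ≥0) : ℝ≥0∞) ^ (2 * d + m))
        (B := toMeasurable μH[(d : ℝ)] Z) (by rw [measure_toMeasurable, hZ]))
      (EpsGood.iUnion hr fun j => (hf j).elim fun K hK => EpsGood.range hm hc hK hε hε1)
    exact fun B hB => h1 B (hB.trans (hcov.trans
      (union_subset_union_left _ (subset_toMeasurable _ _))))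
  have hlim : Tendsto (fun k : ℕ => (((1 + 2 * ((1 : ℝ≥0) / 2 * (1 / (k + 1)))) : ℝ≥0) : ℝ≥0∞) ^
      (2 * d + m)) atTop (𝓝 1) := by
    have h1 : Tendsto (fun k : ℕ => (1 + 2 * ((1 : ℝ≥0) / 2 * (1 / (k + 1)))) ^ (2 * d + m)) atTop
        (𝓝 ((1 + 2 * (1 / 2 * 0)) ^ (2 * d + m))) :=
      (((tendsto_one_div_add_atTop_nhds_zero_nat.const_mul _).const_mul _).const_add 1).pow _
    have h2 := ENNReal.tendsto_coe.2 h1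
    simpa using h2
  have hk : ∀ k : ℕ, (1 : ℝ≥0) / 2 * (1 / (k + 1)) ≤ 1 / 2 := fun k =>
    mul_le_of_le_one_right bot_le (div_le_one_of_le₀ (by simp) bot_le)
  have hG := fun k : ℕ => hgood ((1 : ℝ≥0) / 2 * (1 / (k + 1))) (by positivity) (hk k) A
    Subset.rfl hA
  have hlim' : ∀ x : ℝ≥0∞, Tendsto (fun k : ℕ =>
      (((1 + 2 * ((1 : ℝ≥0) / 2 * (1 / (k + 1)))) : ℝ≥0) : ℝ≥0∞) ^ (2 * d + m) * x) atTop
      (𝓝 (1 * x)) := fun x => ENNReal.Tendsto.mul_const hlim (Or.inl one_ne_zero)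
  refine le_antisymm ?_ ?_
  · simpa only [one_mul] using ge_of_tendsto' (hlim' _) fun k => (hG k).1
  · simpa only [one_mul] using ge_of_tendsto' (hlim' _) fun k => (hG k).2

/-! ### Null sets and densities -/

/-- Fubini on translates: a Borel set that almost every translate along `ι` avoids is null. -/
lemma null_of_ae_translate {V W : Type*} [MeasurableSpace V] [MeasurableSpace W] [AddCommGroup W]
    [MeasurableAdd₂ W] (μV : Measure V) [SFinite μV] [NeZero μV] (μW : Measure W) [SFinite μW]
    [μW.IsAddRightInvariant] {B : Set W} (hB : MeasurableSet B) {ι : V → W} (hι : Measurable ι)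
    (h : ∀ w, ∀ᵐ c ∂μV, w + ι c ∉ B) : μW B = 0 := by
  have hT : MeasurableSet {q : W × V | q.1 + ι q.2 ∈ B} :=
    (measurable_fst.add (hι.comp measurable_snd)) hB
  have h0 : (μW.prod μV) {q : W × V | q.1 + ι q.2 ∈ B} = 0 := by
    rw [Measure.measure_prod_null hT]
    refine Eventually.of_forall fun w => ?_
    have := h w
    rw [ae_iff] at this
    simpa using this
  rw [← Measure.prod_swap, Measure.map_apply measurable_swap hT] at h0
  have h1 := Measure.measure_ae_null_of_prod_null h0
  obtain ⟨c, hc⟩ := h1.exists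
  have : μW ((fun w => w + ι c) ⁻¹' B) = 0 := by
    simpa [Set.preimage, Prod.swap] using hc
  rwa [measure_preimage_add_right] at this

/-- A set of finite Hausdorff measure whose small balls have density below one is null. -/
lemma hausdorff_eq_zero_of_density_lt {X : Type*} [MetricSpace X] [MeasurableSpace X]
    [BorelSpace X] {d : ℕ} {B : Set X} (hB : μH[(d:ℝ)] B ≠ ⊤) {ε : ℝ≥0∞} (hε : ε < 1) {ρ0 : ℝ}
    (hρ0 : 0 < ρ0)
    (h : ∀ a ∈ B, ∀ ρ, 0 < ρ → ρ < ρ0 →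
      μH[(d:ℝ)] (B ∩ closedBall a ρ) ≤ ε * ENNReal.ofReal ρ ^ d) :
    μH[(d:ℝ)] B = 0 := by
  have key : ∀ η : ℝ, 0 < η → η ≤ min 1 (ρ0 / 2) →
      μH[(d:ℝ)] B ≤ ε * (μH[(d:ℝ)] B + ENNReal.ofReal η) := by
    intro η h0 h1
    obtain ⟨t, g, hcov, hg, hd, hs⟩ :=
      exists_gauge_cover B hB h0 (h1.trans (min_le_left _ _))
    calc μH[(d:ℝ)] B ≤ μH[(d:ℝ)] (⋃ j, B ∩ t j) := by
          apply measure_mono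
          rw [← inter_iUnion]
          exact fun x hx => ⟨hx, hcov hx⟩
      _ ≤ ∑' j, μH[(d:ℝ)] (B ∩ t j) := measure_iUnion_le _
      _ ≤ ∑' j, ε * (⨆ _ : (t j).Nonempty, ENNReal.ofReal (g j) ^ d) := by
          refine ENNReal.tsum_le_tsum fun j => ?_
          rcases (B ∩ t j).eq_empty_or_nonempty with he | ⟨a, ha⟩
          · simp [he]
          · have hne : (t j).Nonempty := ⟨a, ha.2⟩
            simp only [hne, iSup_pos]
            refine le_trans (measure_mono ?_) (h a ha.1 (g j) (hg j).1 ?_)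
            · intro x hx
              refine ⟨hx.1, ?_⟩
              rw [mem_closedBall, dist_edist]
              refine ENNReal.toReal_le_of_le_ofReal (hg j).1.le ?_
              exact (edist_le_ediam_of_mem hx.2 ha.2).trans (hd j)
            · have := (hg j).2
              have := h1.trans (min_le_right _ _)
              linarith
      _ = ε * ∑' j, (⨆ _ : (t j).Nonempty, ENNReal.ofReal (g j) ^ d) := ENNReal.tsum_mul_left
      _ ≤ _ := by gcongr
  have hlim : μH[(d:ℝ)] B ≤ ε * μH[(d:ℝ)] B := by
    have hεt : ε ≠ ⊤ := (hε.trans ENNReal.one_lt_top).ne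
    refine ENNReal.le_of_forall_pos_le_add fun η hη _ => ?_
    have hm : 0 < min (η : ℝ) (min 1 (ρ0 / 2)) := by positivity
    refine (key _ hm (min_le_right _ _)).trans ?_
    rw [mul_add]
    gcongr
    calc ε * ENNReal.ofReal (min (η : ℝ) (min 1 (ρ0 / 2))) ≤ 1 * ENNReal.ofReal η := by
          gcongr
          exact min_le_left _ _
      _ = η := by simp
  by_contra h0
  have : ε * μH[(d:ℝ)] B < 1 * μH[(d:ℝ)] B := by
    exact ENNReal.mul_lt_mul_left h0 hB hε
  rw [one_mul] at this
  exact absurd hlim (not_le.2 this)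

lemma isClosed_measure_ball_le {V : Type*} [MetricSpace V] [MeasurableSpace V]
    (m : Measure V) (s : ℝ) (c : ℝ≥0∞) : IsClosed {b | m (ball b s) ≤ c} := by
  rw [← isOpen_compl_iff, Metric.isOpen_iff]
  intro b hb
  simp only [mem_compl_iff, mem_ofPred_eq, not_le] at hb
  have hU : ball b s = ⋃ k : ℕ, ball b (s - 1 / ((k:ℝ) + 1)) := by
    ext x
    simp only [mem_ball, mem_iUnion]
    constructor
    · intro hx
      obtain ⟨k, hk⟩ := exists_nat_one_div_lt (sub_pos.2 hx)
      exact ⟨k, by linarith⟩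
    · rintro ⟨k, hk⟩
      have : (0:ℝ) < 1 / ((k:ℝ) + 1) := by positivity
      linarith
  have hmono : Monotone fun k : ℕ => ball b (s - 1 / ((k:ℝ) + 1)) := by
    intro k l hkl
    apply ball_subset_ball
    have : 1 / ((l:ℝ) + 1) ≤ 1 / ((k:ℝ) + 1) := by gcongr
    linarith
  rw [hU, hmono.measure_iUnion] at hb
  obtain ⟨k, hk⟩ := lt_iSup_iff.1 hb
  refine ⟨1 / ((k:ℝ) + 1), by positivity, fun b' hb' => ?_⟩
  simp only [mem_compl_iff, mem_ofPred_eq, not_le]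
  refine hk.trans_le (measure_mono fun x hx => ?_)
  rw [mem_ball] at *
  have := dist_triangle x b b'
  rw [dist_comm b b'] at this
  linarith

/-- A measure that vanishes on `C`, has bounded `d`-density at points of `C`, gives little mass to
a ball that `C` nearly fills: the complement of `C` is covered by balls whose radius is their
distance to `C`. -/
lemma measure_ball_le_of_full {d : ℕ} (hd : 1 ≤ d) (m : Measure (Fin d → ℝ)) {W J : ℝ≥0∞}
    {C : Set (Fin d → ℝ)} (hm : m C = 0) {j : ℕ}
    (hJ : ∀ b ∈ C, ∀ i ≥ j, m (ball b ((1/2)^i)) ≤ J * (W * ENNReal.ofReal ((1/2)^i) ^ d))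
    {b : Fin d → ℝ} {s : ℝ} (hs : 0 < s) (hsj : s ≤ (1/2)^(j+1)) {η : ℝ≥0∞}
    (hη : η ≤ ENNReal.ofReal (1/8) ^ d)
    (hb : volume (Cᶜ ∩ closedBall b (2*s)) < η * ENNReal.ofReal (4*s) ^ d) :
    m (ball b s) ≤ J * W * 8 ^ d * (η * ENNReal.ofReal (4*s) ^ d) := by
  obtain ⟨O, hAO, hO, hvO⟩ := Set.exists_isOpen_lt_of_lt _ _ hb
  have hs2 : η * ENNReal.ofReal (4*s) ^ d ≤ ENNReal.ofReal (s/2) ^ d := by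
    calc η * ENNReal.ofReal (4*s) ^ d
        ≤ ENNReal.ofReal (1/8) ^ d * ENNReal.ofReal (4*s) ^ d := by gcongr
      _ = ENNReal.ofReal (s/2) ^ d := by
        rw [← mul_pow, ← ENNReal.ofReal_mul (by norm_num)]
        congr 2; ring
  have hd0 : d ≠ 0 := by omega
  have : Nonempty (Fin d) := ⟨⟨0, hd⟩⟩
  have hOc : (Oᶜ).Nonempty := by
    rw [nonempty_compl]
    rintro rfl
    have : volume (univ : Set (Fin d → ℝ)) = ⊤ := by
      exact measure_univ_of_isAddLeftInvariant _
    rw [this] at hvO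
    exact absurd hvO (by simp)
  set ρ : (Fin d → ℝ) → ℝ := fun z => infDist z Oᶜ with hρ
  have vol_cb : ∀ (z : Fin d → ℝ) (r : ℝ), 0 ≤ r →
      volume (closedBall z r) = ENNReal.ofReal (2 * r) ^ d := by
    intro z r hr
    rw [Real.volume_pi_closedBall z hr, ENNReal.ofReal_pow (by positivity), Fintype.card_fin]
  have hsub : ∀ z ∈ O, closedBall z (ρ z / 2) ⊆ O := by
    intro z hz
    have h0 : 0 < ρ z := (hO.isClosed_compl.notMem_iff_infDist_pos hOc).1 (by simpa using hz)
    refine (closedBall_subset_ball (show ρ z / 2 < ρ z by linarith)).trans ?_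
    exact ball_infDist_compl_subset
  have hpos : ∀ z ∈ O, 0 < ρ z := fun z hz =>
    (hO.isClosed_compl.notMem_iff_infDist_pos hOc).1 (by simpa using hz)
  have hlt : ∀ z ∈ O, ρ z < s / 2 := by
    intro z hz
    have h1 := (measure_mono (hsub z hz)).trans_lt (hvO.trans_le hs2)
    rw [vol_cb _ _ (by linarith [hpos z hz])] at h1
    have h2 := lt_of_pow_lt_pow_left' d h1
    rw [ENNReal.ofReal_lt_ofReal_iff (by linarith)] at h2
    linarith
  set A : Set (Fin d → ℝ) := ball b s \ C with hA
  have hAO' : A ⊆ O := fun z hz => hAO ⟨hz.2, by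
    have := hz.1; rw [mem_ball] at this; rw [mem_closedBall]; linarith⟩
  have hmA : m (ball b s) ≤ m A := by
    calc m (ball b s) ≤ m (A ∪ C) := measure_mono fun z hz => by
            by_cases h : z ∈ C
            · exact Or.inr h
            · exact Or.inl ⟨hz, h⟩
      _ ≤ m A + m C := measure_union_le _ _
      _ = m A := by rw [hm, add_zero]
  obtain ⟨u, huA, hdisj, hcov⟩ := Vitali.exists_disjoint_subfamily_covering_enlargement_closedBall
    A id (fun z => ρ z / 2) (s / 2) (fun z hz => by linarith [hlt z (hAO' hz), hpos z (hAO' hz)])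
    5 (by norm_num)
  have hucount : u.Countable := by
    refine hdisj.countable_of_nonempty_interior fun z hz => ?_
    refine ⟨z, ?_⟩
    have := hpos z (hAO' (huA hz))
    exact (ball_subset_interior_closedBall) (mem_ball_self (by linarith))
  have : Countable u := hucount.to_subtype
  have hone : ∀ z ∈ u, m (closedBall z (5 * (ρ z / 2))) ≤
      J * W * 8 ^ d * volume (closedBall z (ρ z / 2)) := by
    intro z hz
    have hzA := huA hz
    have hzO := hAO' hzA
    have h0 := hpos z hzO
    have h1 := hlt z hzO
    obtain ⟨w, hwO, hw⟩ := hO.isClosed_compl.exists_infDist_eq_dist hOc z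
    have hwd : dist z w = ρ z := hw.symm
    have hwC : w ∈ C := by
      by_contra hwC
      refine hwO (hAO ⟨hwC, ?_⟩)
      have h2 := hzA.1
      rw [mem_ball] at h2
      rw [mem_closedBall]
      have := dist_triangle w z b
      rw [dist_comm w z] at this
      linarith
    have hsj' : s ≤ 1 / 2 := hsj.trans (by
      rw [pow_succ]
      have : ((1:ℝ)/2)^j ≤ 1 := pow_le_one₀ (by norm_num) (by norm_num)
      linarith)
    obtain ⟨n, hn1, hn2⟩ := exists_nat_pow_near_of_lt_one (x := 4 * ρ z) (y := (1:ℝ)/2)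
      (by linarith) (by linarith) (by norm_num) (by norm_num)
    have hnj : j ≤ n := by
      have h3 : ((1:ℝ)/2)^(n+1) < (1/2)^j := by
        refine hn1.trans ?_
        rw [pow_succ] at hsj
        linarith
      have := (pow_lt_pow_iff_right_of_lt_one₀ (by norm_num : (0:ℝ) < 1/2) (by norm_num)).1 h3
      omega
    calc m (closedBall z (5 * (ρ z / 2))) ≤ m (ball w ((1/2)^n)) := by
          apply measure_mono
          intro x hx
          rw [mem_closedBall] at hx
          rw [mem_ball]
          have := dist_triangle x z w
          linarith
      _ ≤ J * (W * ENNReal.ofReal ((1/2)^n) ^ d) := hJ w hwC n hnj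
      _ ≤ J * (W * ENNReal.ofReal (8 * ρ z) ^ d) := by
          gcongr
          rw [pow_succ] at hn1
          linarith
      _ = J * W * 8 ^ d * volume (closedBall z (ρ z / 2)) := by
          rw [vol_cb _ _ (by linarith), ENNReal.ofReal_mul (by norm_num), mul_pow]
          have : 2 * (ρ z / 2) = ρ z := by ring
          rw [this]
          simp only [ENNReal.ofReal_ofNat]
          ring
  calc m (ball b s) ≤ m A := hmA
    _ ≤ m (⋃ z : u, closedBall (z : Fin d → ℝ) (5 * (ρ z / 2))) := by
        apply measure_mono
        intro z hz
        obtain ⟨y, hy, hzy⟩ := hcov z hz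
        refine mem_iUnion.2 ⟨⟨y, hy⟩, hzy (mem_closedBall_self ?_)⟩
        linarith [hpos z (hAO' hz)]
    _ ≤ ∑' z : u, m (closedBall (z : Fin d → ℝ) (5 * (ρ z / 2))) := measure_iUnion_le _
    _ ≤ ∑' z : u, J * W * 8 ^ d * volume (closedBall (z : Fin d → ℝ) (ρ z / 2)) :=
        ENNReal.tsum_le_tsum fun z => hone z z.2
    _ = J * W * 8 ^ d * ∑' z : u, volume (closedBall (z : Fin d → ℝ) (ρ z / 2)) :=
        ENNReal.tsum_mul_left
    _ = J * W * 8 ^ d * volume (⋃ z : u, closedBall (z : Fin d → ℝ) (ρ z / 2)) := by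
        rw [measure_iUnion]
        · intro x y hxy
          exact hdisj x.2 y.2 (fun h => hxy (Subtype.ext h))
        · exact fun z => isClosed_closedBall.measurableSet
    _ ≤ J * W * 8 ^ d * volume O := by
        gcongr
        exact iUnion_subset fun z => hsub z (hAO' (huA z.2))
    _ ≤ _ := by gcongr

/-- Measures `m r` vanishing on `C` have, at almost every point of `C`, either infinite upper
density or zero density with respect to the weights `w r`, uniformly in `r`. -/
lemma density_dichotomy {d : ℕ} (hd : 1 ≤ d) {ι : Type*} (m : ι → Measure (Fin d → ℝ))
    (w : ι → ℝ≥0∞) {C : Set (Fin d → ℝ)} (hC : MeasurableSet C) (hm : ∀ r, m r C = 0) :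
    ∀ᵐ b, b ∈ C →
      (∃ j : ℕ, ∀ i ≥ j, ∀ r, m r (ball b ((1/2)^i)) ≤ j * (w r * ENNReal.ofReal ((1/2)^i) ^ d)) →
      ∀ l : ℕ, ∃ i0 : ℕ, ∀ i ≥ i0, ∀ r,
        m r (ball b ((1/2)^i)) ≤ ((l:ℝ≥0∞) + 1)⁻¹ * (w r * ENNReal.ofReal ((1/2)^i) ^ d) := by
  set T : ℕ → Set (Fin d → ℝ) := fun j => {b | ∀ i ≥ j, ∀ r, m r (ball b ((1/2)^i)) ≤
    j * (w r * ENNReal.ofReal ((1/2)^i) ^ d)} with hT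
  have hTc : ∀ j, IsClosed (T j) := by
    intro j
    have : T j = ⋂ i : ℕ, ⋂ _ : i ≥ j, ⋂ r, {b | m r (ball b ((1/2)^i)) ≤
        j * (w r * ENNReal.ofReal ((1/2)^i) ^ d)} := by
      ext b; simp [hT]
    rw [this]
    exact isClosed_iInter fun i => isClosed_iInter fun _ => isClosed_iInter fun r =>
      isClosed_measure_ball_le _ _ _
  have hCm : ∀ j, MeasurableSet (C ∩ T j)ᶜ := fun j => (hC.inter (hTc j).measurableSet).compl
  have hae : ∀ᵐ b : Fin d → ℝ, ∀ j, Tendsto (fun r => volume ((C ∩ T j)ᶜ ∩ closedBall b r) /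
      volume (closedBall b r)) (𝓝[>] 0) (𝓝 (((C ∩ T j)ᶜ).indicator 1 b)) :=
    ae_all_iff.2 fun j => Besicovitch.ae_tendsto_measure_inter_div_of_measurableSet volume (hCm j)
  filter_upwards [hae] with b hb hbC hbT l
  obtain ⟨j, hj⟩ := hbT
  have hbj : b ∈ C ∩ T j := ⟨hbC, hj⟩
  have hlim := hb j
  rw [Set.indicator_of_notMem (by simpa using hbj)] at hlim
  set D : ℝ≥0∞ := (((j:ℝ≥0∞) + 1) * 32 ^ d * ((l:ℝ≥0∞) + 1)) with hD
  have hD0 : D ≠ 0 := by simp [hD]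
  have hDt : D ≠ ⊤ := by rw [hD]; finiteness
  set η : ℝ≥0∞ := D⁻¹ with hη
  have hη0 : 0 < η := by simpa [hη] using hDt
  have hη8 : η ≤ ENNReal.ofReal (1/8) ^ d := by
    have : ENNReal.ofReal (1/8) ^ d = ((8:ℝ≥0∞) ^ d)⁻¹ := by
      rw [one_div, ENNReal.ofReal_inv_of_pos (by norm_num), ENNReal.inv_pow]
      simp
    rw [this, hη, ENNReal.inv_le_inv, hD]
    calc (8:ℝ≥0∞) ^ d ≤ 32 ^ d := by gcongr; norm_num
      _ = 1 * 32 ^ d * 1 := by simp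
      _ ≤ _ := by gcongr <;> simp
  have hev := (hlim.eventually (gt_mem_nhds hη0))
  rw [eventually_nhdsWithin_iff, Metric.eventually_nhds_iff] at hev
  obtain ⟨ε, hε, hev⟩ := hev
  obtain ⟨i1, hi1⟩ := exists_pow_lt_of_lt_one (show (0:ℝ) < ε / 2 by linarith)
    (show (1/2:ℝ) < 1 by norm_num)
  refine ⟨max i1 (j+1), fun i hi r => ?_⟩
  have hs : (0:ℝ) < (1/2)^i := by positivity
  have hi1' : ((1:ℝ)/2)^i < ε / 2 :=
    (pow_le_pow_of_le_one (by norm_num) (by norm_num) ((le_max_left _ _).trans hi)).trans_lt hi1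
  have hsj : ((1:ℝ)/2)^i ≤ (1/2)^(j+1) :=
    pow_le_pow_of_le_one (by norm_num) (by norm_num) ((le_max_right _ _).trans hi)
  have hq := hev (y := 2 * (1/2)^i) (by
    rw [Real.dist_eq, sub_zero, abs_of_pos (by positivity)]; linarith) (by
    show (0:ℝ) < _; positivity)
  have hvol : volume (closedBall b (2 * (1/2:ℝ)^i)) = ENNReal.ofReal (4 * (1/2)^i) ^ d := by
    rw [Real.volume_pi_closedBall b (by positivity), ENNReal.ofReal_pow (by positivity),
      Fintype.card_fin]
    congr 2; ring
  rw [hvol, ENNReal.div_lt_iff (Or.inl (by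
      apply pow_ne_zero; rw [Ne, ENNReal.ofReal_eq_zero, not_le]; positivity))
      (Or.inl (by finiteness))] at hq
  have hmain := measure_ball_le_of_full hd (m r) (W := w r) (J := (j:ℝ≥0∞)) (C := C ∩ T j)
    (measure_mono_null inter_subset_left (hm r)) (j := j) (fun b hb i hi => hb.2 i hi r)
    hs hsj hη8 hq
  refine hmain.trans ?_
  calc (j:ℝ≥0∞) * w r * 8 ^ d * (η * ENNReal.ofReal (4 * (1/2)^i) ^ d)
      ≤ ((j:ℝ≥0∞) + 1) * w r * 8 ^ d * (η * ENNReal.ofReal (4 * (1/2)^i) ^ d) := by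
        gcongr; simp
    _ = (((j:ℝ≥0∞) + 1) * 32 ^ d * η) * (w r * ENNReal.ofReal ((1/2)^i) ^ d) := by
        rw [ENNReal.ofReal_mul (by norm_num), mul_pow]
        have : (32:ℝ≥0∞) ^ d = 8 ^ d * 4 ^ d := by rw [← mul_pow]; norm_num
        rw [this]
        simp only [ENNReal.ofReal_ofNat]
        ring
    _ = _ := by
        congr 1
        rw [hη, hD, ENNReal.mul_inv (Or.inl (by simp)) (Or.inl (by finiteness)), ← mul_assoc,
          ENNReal.mul_inv_cancel (by simp) (by finiteness), one_mul]

/-! ### Linear projections of purely unrectifiable compact sets -/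

/-- `K ⊆ ℝᵖ` is purely `d`-unrectifiable: it meets every Lipschitz image of `ℝᵈ` in a null set. -/
def PurelyUnrect (d : ℕ) {p : ℕ} (K : Set (Fin p → ℝ)) : Prop :=
  ∀ f : (Fin d → ℝ) → (Fin p → ℝ), (∃ c, LipschitzWith c f) → μH[(d:ℝ)] (K ∩ range f) = 0

lemma PurelyUnrect.mono {d p : ℕ} {K K' : Set (Fin p → ℝ)} (h : PurelyUnrect d K) (hK : K' ⊆ K) :
    PurelyUnrect d K' := fun f hf =>
  measure_mono_null (inter_subset_inter_left _ hK) (h f hf)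

lemma hausdorff_pi_eq_volume (d : ℕ) : (μH[(d:ℝ)] : Measure (Fin d → ℝ)) = volume := by
  have := hausdorffMeasure_pi_real (ι := Fin d)
  rwa [Fintype.card_fin] at this

/-- A finite measure has finite upper density at almost every point. -/
lemma ae_density_bounded {d : ℕ} (ν : Measure (Fin d → ℝ)) [IsFiniteMeasure ν] :
    ∀ᵐ b, ∃ J : ℕ, ∃ ε > 0, ∀ ρ, 0 < ρ → ρ < ε →
      ν (closedBall b ρ) ≤ J * ENNReal.ofReal ρ ^ d := by
  filter_upwards [Besicovitch.ae_tendsto_rnDeriv ν (volume : Measure (Fin d → ℝ)),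
    ν.rnDeriv_lt_top volume] with b hb hfin
  obtain ⟨M, hM⟩ := ENNReal.exists_nat_gt hfin.ne
  have hev := hb.eventually (gt_mem_nhds hM)
  rw [eventually_nhdsWithin_iff, Metric.eventually_nhds_iff] at hev
  obtain ⟨ε, hε, hev⟩ := hev
  refine ⟨M * 2 ^ d, ε, hε, fun ρ h0 h1 => ?_⟩
  have h2 := hev (y := ρ) (by rwa [Real.dist_eq, sub_zero, abs_of_pos h0]) h0
  have hvol : volume (closedBall b ρ) = ENNReal.ofReal (2 * ρ) ^ d := by
    rw [Real.volume_pi_closedBall b h0.le, ENNReal.ofReal_pow (by positivity), Fintype.card_fin]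
  rw [hvol, ENNReal.div_lt_iff (Or.inl (by
      apply pow_ne_zero; rw [Ne, ENNReal.ofReal_eq_zero, not_le]; positivity))
      (Or.inl (by finiteness))] at h2
  refine h2.le.trans (le_of_eq ?_)
  rw [ENNReal.ofReal_mul (by norm_num), mul_pow]
  push_cast
  simp only [ENNReal.ofReal_ofNat]
  ring

/-- The cubes of the dyadic grid of side `2⁻ˡ`, as level sets of a map. -/
def gridIdx {p : ℕ} (l : ℕ) (x : Fin p → ℝ) : Fin p → ℤ := fun i => ⌊2 ^ l * x i⌋

lemma measurable_gridIdx {p : ℕ} (l : ℕ) : Measurable (gridIdx (p := p) l) := by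
  refine measurable_pi_lambda _ fun i => ?_
  exact Int.measurable_floor.comp ((measurable_pi_apply i).const_mul _)

lemma dist_le_of_gridIdx_eq {p : ℕ} {l : ℕ} {x y : Fin p → ℝ} (h : gridIdx l x = gridIdx l y) :
    dist x y ≤ (1/2)^l := by
  rw [dist_pi_le_iff (by positivity)]
  intro i
  have hi : ⌊2 ^ l * x i⌋ = ⌊2 ^ l * y i⌋ := congr_fun h i
  have h1 := Int.abs_sub_lt_one_of_floor_eq_floor hi
  rw [← mul_sub, abs_mul, abs_of_pos (by positivity : (0:ℝ) < 2 ^ l)] at h1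
  rw [Real.dist_eq, one_div, inv_pow, ← one_div, le_div_iff₀ (by positivity)]
  linarith

/-- Almost every fibre of a Lipschitz map from a set of finite `d`-measure into `ℝᵈ` is finite. -/
lemma ae_finite_fiber {p d : ℕ} {K : Set (Fin p → ℝ)} (hK : μH[(d:ℝ)] K ≠ ⊤)
    (hKm : MeasurableSet K) {f : (Fin p → ℝ) → (Fin d → ℝ)} {L : ℝ≥0} (hf : LipschitzWith L f) :
    ∀ᵐ b, (K ∩ f ⁻¹' {b}).Finite := by
  set C : ℝ≥0∞ := (L:ℝ≥0∞) ^ d * μH[(d:ℝ)] K with hC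
  have hCt : C ≠ ⊤ := by rw [hC]; finiteness
  set P : ℕ → (Fin p → ℤ) → Set (Fin d → ℝ) := fun l q =>
    toMeasurable volume (f '' (K ∩ gridIdx l ⁻¹' {q})) with hP
  set Nn : ℕ → (Fin d → ℝ) → ℝ≥0∞ := fun l b => ∑' q, (P l q).indicator 1 b with hN
  have hPm : ∀ l q, MeasurableSet (P l q) := fun l q => measurableSet_toMeasurable _ _
  have hNm : ∀ l, Measurable (Nn l) := fun l =>
    Measurable.ennreal_tsum fun q => measurable_one.indicator (hPm l q)
  have hint : ∀ l, ∫⁻ b, Nn l b ≤ C := by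
    intro l
    rw [hN, lintegral_tsum fun q => (measurable_one.indicator (hPm l q)).aemeasurable]
    calc ∑' q, ∫⁻ b, (P l q).indicator 1 b
        = ∑' q, volume (f '' (K ∩ gridIdx l ⁻¹' {q})) := by
          congr 1; ext q
          rw [lintegral_indicator_one (hPm l q), hP, measure_toMeasurable]
      _ ≤ ∑' q, (L:ℝ≥0∞) ^ d * μH[(d:ℝ)] (K ∩ gridIdx l ⁻¹' {q}) := by
          refine ENNReal.tsum_le_tsum fun q => ?_
          rw [← hausdorff_pi_eq_volume]
          simpa using (hf.lipschitzOnWith (s := K ∩ gridIdx l ⁻¹' {q})).hausdorffMeasure_image_le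
            (d := d) (by positivity)
      _ = (L:ℝ≥0∞) ^ d * ∑' q, μH[(d:ℝ)] (K ∩ gridIdx l ⁻¹' {q}) := ENNReal.tsum_mul_left
      _ = (L:ℝ≥0∞) ^ d * μH[(d:ℝ)] (⋃ q, K ∩ gridIdx l ⁻¹' {q}) := by
          rw [measure_iUnion]
          · intro q q' hq
            refine Disjoint.mono inter_subset_right inter_subset_right ?_
            exact Disjoint.preimage _ (by simpa using hq)
          · exact fun q => hKm.inter (measurable_gridIdx l (measurableSet_singleton q))
      _ ≤ C := by
          rw [hC]
          gcongr
          exact iUnion_subset fun q => inter_subset_left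
  have hbad : ∀ M : ℕ, volume {b | ¬ (K ∩ f ⁻¹' {b}).Finite} ≤ C / (M + 1) := by
    intro M
    set A : ℕ → Set (Fin d → ℝ) := fun l => {b | ∀ l' ≥ l, (M:ℝ≥0∞) + 1 ≤ Nn l' b} with hA
    have hAmono : Monotone A := fun l l' hl b hb k hk => hb k (hl.trans hk)
    have hsub : {b | ¬ (K ∩ f ⁻¹' {b}).Finite} ⊆ ⋃ l, A l := by
      intro b hb
      obtain ⟨t, ht, htc⟩ := Set.Infinite.exists_subset_card_eq hb (M + 1)
      have hsep : ∃ ε > 0, ∀ x ∈ t, ∀ y ∈ t, x ≠ y → ε ≤ dist x y := by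
        have hfin : ((t : Set (Fin p → ℝ)).offDiag).Finite := t.finite_toSet.offDiag
        rcases ((t : Set (Fin p → ℝ)).offDiag).eq_empty_or_nonempty with he | hne
        · refine ⟨1, one_pos, fun x hx y hy hxy => ?_⟩
          have : (x, y) ∈ (t : Set (Fin p → ℝ)).offDiag := ⟨hx, hy, hxy⟩
          rw [he] at this
          exact absurd this (by simp)
        · obtain ⟨q, hq, hmin⟩ := hfin.exists_minimalFor (fun q => dist q.1 q.2) _ hne
          refine ⟨dist q.1 q.2, dist_pos.2 hq.2.2, fun x hx y hy hxy => ?_⟩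
          by_contra hlt
          have := hmin (j := (x, y)) ⟨hx, hy, hxy⟩ (not_le.1 hlt).le
          exact hlt this
      obtain ⟨ε, hε, hsep⟩ := hsep
      obtain ⟨l, hl⟩ := exists_pow_lt_of_lt_one hε (show (1/2:ℝ) < 1 by norm_num)
      refine mem_iUnion.2 ⟨l, fun l' hl' => ?_⟩
      have hinj : Set.InjOn (gridIdx l') (t : Set (Fin p → ℝ)) := by
        intro x hx y hy hxy
        by_contra hne
        have h1 := hsep x hx y hy hne
        have h2 := dist_le_of_gridIdx_eq hxy
        have h3 : ((1:ℝ)/2)^l' ≤ (1/2)^l := pow_le_pow_of_le_one (by norm_num) (by norm_num) hl'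
        linarith
      classical
      have hcard : (t.image (gridIdx l')).card = M + 1 := by
        rw [Finset.card_image_of_injOn hinj, htc]
      calc (M:ℝ≥0∞) + 1 = ∑ q ∈ t.image (gridIdx l'), (1:ℝ≥0∞) := by simp [hcard]
        _ ≤ ∑ q ∈ t.image (gridIdx l'), (P l' q).indicator 1 b := by
            refine Finset.sum_le_sum fun q hq => ?_
            obtain ⟨x, hx, rfl⟩ := Finset.mem_image.1 hq
            have hxK := ht hx
            have : b ∈ P l' (gridIdx l' x) :=
              subset_toMeasurable _ _ ⟨x, ⟨hxK.1, rfl⟩, hxK.2⟩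
            rw [indicator_of_mem this]
            rfl
        _ ≤ Nn l' b := ENNReal.sum_le_tsum _
    refine (measure_mono hsub).trans ?_
    rw [hAmono.measure_iUnion]
    refine iSup_le fun l => ?_
    rw [ENNReal.le_div_iff_mul_le (Or.inl (by simp)) (Or.inl (by finiteness)), mul_comm]
    refine le_trans ?_ (hint l)
    refine le_trans ?_ (mul_meas_ge_le_lintegral (hNm l) ((M:ℝ≥0∞) + 1))
    gcongr
    exact fun b hb => hb l le_rfl
  rw [ae_iff]
  have hlim : Tendsto (fun M : ℕ => C / ((M:ℝ≥0∞) + 1)) atTop (𝓝 0) := by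
    have h1 : Tendsto (fun M : ℕ => ((M + 1 : ℕ) : ℝ≥0∞)⁻¹) atTop (𝓝 0) :=
      (tendsto_add_atTop_iff_nat 1).2 ENNReal.tendsto_inv_nat_nhds_zero
    have := ENNReal.Tendsto.const_mul h1 (Or.inr hCt)
    simpa [div_eq_mul_inv] using this
  exact le_antisymm (ge_of_tendsto' hlim hbad) bot_le

/-- The points `y` of `K` near `x` for which `y - x` is nearly in the kernel of `N`. -/
def fullCone {p d : ℕ} (K : Set (Fin p → ℝ)) (N : (Fin p → ℝ) →ₗ[ℝ] (Fin d → ℝ))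
    (x : Fin p → ℝ) (r s : ℝ) : Set (Fin p → ℝ) :=
  {y | y ∈ K ∧ y ≠ x ∧ dist y x < r ∧ ‖N (y - x)‖ < s * dist y x}

lemma dist_map_sub {p d : ℕ} (N : (Fin p → ℝ) →ₗ[ℝ] (Fin d → ℝ)) (x y : Fin p → ℝ) :
    dist (N x) (N y) = ‖N (x - y)‖ := by rw [dist_eq_norm, map_sub]

/-- If all cones with vertex in `B` have small measure, then a purely unrectifiable `B` has small
measure in balls. The points of `B` without companions in the cone lie on a Lipschitz graph; the
other ones are covered through the projections of the cones. -/
lemma measure_le_of_fullCone_le {p d : ℕ} {K B : Set (Fin p → ℝ)} (hPU : PurelyUnrect d K)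
    (hBK : B ⊆ K) {N : (Fin p → ℝ) →ₗ[ℝ] (Fin d → ℝ)} {L : ℝ} (hL0 : 0 ≤ L)
    (hL : ∀ v, ‖N v‖ ≤ L * ‖v‖) {s δ ρ : ℝ} (hs : 0 < s) (hρ : 0 < ρ) (hρδ : 4 * ρ < δ)
    {a : Fin p → ℝ} (hBa : B ⊆ closedBall a ρ) {lam : ℝ≥0∞}
    (h : ∀ x ∈ B, ∀ r, 0 < r → r < δ →
      μH[(d:ℝ)] (fullCone K N x r s) ≤ lam * ENNReal.ofReal (r * s) ^ d) :
    μH[(d:ℝ)] B ≤ 2 * lam * 80 ^ d * ENNReal.ofReal ((L + s) * ρ) ^ d := by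
  set G : Set (Fin p → ℝ) := {x ∈ B | ∀ y ∈ B, y ≠ x → s / 4 * dist y x < ‖N (y - x)‖} with hG
  have hGnull : μH[(d:ℝ)] G = 0 := by
    have hle : ∀ x ∈ G, ∀ y ∈ G, dist x y ≤ 4 / s * dist (N x) (N y) := by
      intro x hx y hy
      rcases eq_or_ne x y with rfl | hxy
      · simp
      · have := hy.2 x hx.1 hxy
        rw [← dist_map_sub] at this
        rw [div_mul_eq_mul_div, le_div_iff₀ hs]
        linarith
    have hinj : InjOn N G := by
      intro x hx y hy hxy
      have := hle x hx y hy
      rw [hxy, dist_self, mul_zero] at this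
      exact dist_le_zero.1 this
    rcases G.eq_empty_or_nonempty with he | ⟨x0, hx0⟩
    · simp [he]
    have : Nonempty (Fin p → ℝ) := ⟨x0⟩
    have hlip : LipschitzOnWith (Real.toNNReal (4 / s)) (Function.invFunOn N G) (N '' G) := by
      refine LipschitzOnWith.of_dist_le_mul ?_
      rintro _ ⟨x, hx, rfl⟩ _ ⟨y, hy, rfl⟩
      rw [hinj.leftInvOn_invFunOn hx, hinj.leftInvOn_invFunOn hy,
        Real.coe_toNNReal _ (by positivity)]
      exact hle x hx y hy
    obtain ⟨f, hf, hfeq⟩ := hlip.extend_pi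
    refine measure_mono_null ?_ (hPU f ⟨_, hf⟩)
    intro x hx
    refine ⟨hBK hx.1, N x, ?_⟩
    rw [← hfeq ⟨x, hx, rfl⟩, hinj.leftInvOn_invFunOn hx]
  set H : (Fin p → ℝ) → Set ℝ := fun x =>
    {t | ∃ y ∈ B, y ≠ x ∧ ‖N (y - x)‖ ≤ s / 4 * dist y x ∧ dist y x = t} with hH
  set hh : (Fin p → ℝ) → ℝ := fun x => sSup (H x) with hhh
  have hbdd : ∀ x ∈ B, ∀ t ∈ H x, t ≤ 2 * ρ := by
    rintro x hx t ⟨y, hy, -, -, rfl⟩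
    have h1 := mem_closedBall.1 (hBa hx)
    have h2 := mem_closedBall.1 (hBa hy)
    have h3 := dist_triangle_right y x a
    linarith
  have hne : ∀ x ∈ B \ G, (H x).Nonempty := by
    rintro x ⟨hx, hxG⟩
    simp only [hG, mem_ofPred_eq, not_and, not_forall, not_lt] at hxG
    obtain ⟨y, hy, hyx, hle⟩ := hxG hx
    exact ⟨_, y, hy, hyx, hle, rfl⟩
  have hBA : ∀ x ∈ B, BddAbove (H x) := fun x hx => ⟨2 * ρ, hbdd x hx⟩
  have hpos : ∀ x ∈ B \ G, 0 < hh x := by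
    intro x hx
    obtain ⟨t, ht⟩ := hne x hx
    refine lt_of_lt_of_le ?_ (le_csSup (hBA x hx.1) ht)
    obtain ⟨y, -, hyx, -, rfl⟩ := ht
    exact dist_pos.2 hyx
  have hle2 : ∀ x ∈ B \ G, hh x ≤ 2 * ρ := fun x hx => csSup_le (hne x hx) (hbdd x hx.1)
  have hloc : ∀ x ∈ B \ G, μH[(d:ℝ)] {z ∈ B | N z ∈ closedBall (N x) (5 * (s * hh x / 40))} ≤
      2 * lam * ENNReal.ofReal (2 * hh x * s) ^ d := by
    intro x hx
    have h0 := hpos x hx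
    obtain ⟨t, ⟨y, hyB, hyx, hNy, rfl⟩, hty⟩ :=
      exists_lt_of_lt_csSup (hne x hx) (show 3 / 4 * hh x < sSup (H x) by
        change _ < hh x; linarith)
    have hyle : dist y x ≤ hh x := le_csSup (hBA x hx.1) ⟨y, hyB, hyx, hNy, rfl⟩
    have h2 := hle2 x hx
    calc _ ≤ μH[(d:ℝ)] (fullCone K N x (2 * hh x) s ∪ fullCone K N y (2 * hh x) s) := by
          apply measure_mono
          rintro z ⟨hzB, hz⟩
          rw [mem_closedBall, dist_map_sub] at hz
          by_cases hzx : hh x / 4 < dist z x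
          · left
            have hz1 : dist z x ≤ hh x := by
              by_contra hlt
              rw [not_le] at hlt
              have : dist z x ∈ H x := ⟨z, hzB, by
                rintro rfl; simp at hlt; linarith, by nlinarith, rfl⟩
              exact absurd (le_csSup (hBA x hx.1) this) (not_le.2 hlt)
            refine ⟨hBK hzB, ?_, by linarith, by nlinarith⟩
            rintro rfl; simp at hzx; linarith
          · right
            rw [not_lt] at hzx
            have hzy : hh x / 2 < dist z y := by
              have := dist_triangle_left y x z
              linarith
            have hzy2 : dist z y < 2 * hh x := by
              have := dist_triangle_right z y x
              linarith
            refine ⟨hBK hzB, ?_, hzy2, ?_⟩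
            · rintro rfl; simp at hzy; linarith
            · have e : z - y = (z - x) - (y - x) := by abel
              rw [e, map_sub]
              have h3 := norm_sub_le (N (z - x)) (N (y - x))
              nlinarith
      _ ≤ lam * ENNReal.ofReal (2 * hh x * s) ^ d + lam * ENNReal.ofReal (2 * hh x * s) ^ d :=
          (measure_union_le _ _).trans (add_le_add
            (h x hx.1 _ (by linarith) (by linarith)) (h y hyB _ (by linarith) (by linarith)))
      _ = _ := by ring
  obtain ⟨u, huA, hdisj, hcov⟩ := Vitali.exists_disjoint_subfamily_covering_enlargement_closedBall
    (B \ G) (fun x => N x) (fun x => s * hh x / 40) (s * (2 * ρ) / 40)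
    (fun x hx => by have := hle2 x hx; gcongr) 5 (by norm_num)
  have hucount : u.Countable := by
    refine hdisj.countable_of_nonempty_interior fun x hx => ?_
    have := hpos x (huA hx)
    exact ⟨N x, ball_subset_interior_closedBall (mem_ball_self (by positivity))⟩
  have : Countable u := hucount.to_subtype
  have vol_cb : ∀ (z : Fin d → ℝ) (r : ℝ), 0 ≤ r →
      volume (closedBall z r) = ENNReal.ofReal (2 * r) ^ d := by
    intro z r hr
    rw [Real.volume_pi_closedBall z hr, ENNReal.ofReal_pow (by positivity), Fintype.card_fin]
  calc μH[(d:ℝ)] B ≤ μH[(d:ℝ)] (G ∪ ⋃ x : u,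
        {z ∈ B | N z ∈ closedBall (N x) (5 * (s * hh x / 40))}) := by
        apply measure_mono
        intro z hz
        by_cases hzG : z ∈ G
        · exact Or.inl hzG
        · right
          obtain ⟨y, hy, hzy⟩ := hcov z ⟨hz, hzG⟩
          refine mem_iUnion.2 ⟨⟨y, hy⟩, hz, hzy (mem_closedBall_self ?_)⟩
          have := hpos z ⟨hz, hzG⟩
          positivity
    _ ≤ μH[(d:ℝ)] G + μH[(d:ℝ)] (⋃ x : u,
        {z ∈ B | N z ∈ closedBall (N x) (5 * (s * hh x / 40))}) := measure_union_le _ _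
    _ = μH[(d:ℝ)] (⋃ x : u,
        {z ∈ B | N z ∈ closedBall (N x) (5 * (s * hh x / 40))}) := by rw [hGnull, zero_add]
    _ ≤ ∑' x : u, μH[(d:ℝ)] {z ∈ B | N z ∈ closedBall (N x) (5 * (s * hh x / 40))} :=
        measure_iUnion_le _
    _ ≤ ∑' x : u, 2 * lam * 40 ^ d * volume (closedBall (N x) (s * hh x / 40)) := by
        refine ENNReal.tsum_le_tsum fun x => (hloc x (huA x.2)).trans (le_of_eq ?_)
        have := hpos x (huA x.2)
        rw [vol_cb _ _ (by positivity), mul_assoc (2 * lam), ← ENNReal.ofReal_ofNat 40, ← mul_pow,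
          ← ENNReal.ofReal_mul (by norm_num)]
        congr 3
        ring
    _ = 2 * lam * 40 ^ d * ∑' x : u, volume (closedBall (N x) (s * hh x / 40)) :=
        ENNReal.tsum_mul_left
    _ = 2 * lam * 40 ^ d * volume (⋃ x : u, closedBall (N x) (s * hh x / 40)) := by
        rw [measure_iUnion]
        · intro x y hxy
          exact hdisj x.2 y.2 (fun h => hxy (Subtype.ext h))
        · exact fun z => isClosed_closedBall.measurableSet
    _ ≤ 2 * lam * 40 ^ d * volume (closedBall (N a) ((L + s) * ρ)) := by
        gcongr
        refine iUnion_subset fun x => closedBall_subset_closedBall' ?_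
        have h1 := hle2 x (huA x.2)
        have h2 := mem_closedBall.1 (hBa (huA x.2).1)
        have h3 := hL ((x : Fin p → ℝ) - a)
        rw [← dist_eq_norm] at h3
        rw [dist_map_sub]
        nlinarith
    _ = _ := by
        rw [vol_cb _ _ (by positivity), ENNReal.ofReal_mul (by norm_num), mul_pow]
        have : (80:ℝ≥0∞) ^ d = 40 ^ d * 2 ^ d := by rw [← mul_pow]; norm_num
        rw [this]
        simp only [ENNReal.ofReal_ofNat]
        ring

/-- If the cones with vertex in `B` have small enough density, then `B` has density below one in
all small balls, and hence is null. -/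
lemma null_of_fullCone_le {p d : ℕ} {K B : Set (Fin p → ℝ)} (hK : μH[(d:ℝ)] K ≠ ⊤)
    (hPU : PurelyUnrect d K)
    (hBK : B ⊆ K) {N : (Fin p → ℝ) →ₗ[ℝ] (Fin d → ℝ)} {L : ℝ} (hL0 : 0 ≤ L)
    (hL : ∀ v, ‖N v‖ ≤ L * ‖v‖) {s δ : ℝ} (hs : 0 < s) (hs1 : s ≤ 1) (hδ : 0 < δ) {lam : ℝ≥0∞}
    (hlam : 2 * lam * 80 ^ d * ENNReal.ofReal (L + 1) ^ d < 1)
    (h : ∀ x ∈ B, ∀ r, 0 < r → r < δ →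
      μH[(d:ℝ)] (fullCone K N x r s) ≤ lam * ENNReal.ofReal (r * s) ^ d) :
    μH[(d:ℝ)] B = 0 := by
  refine hausdorff_eq_zero_of_density_lt (measure_ne_top_of_subset hBK hK) hlam
    (ρ0 := δ / 4) (by positivity) fun a ha ρ h0 h1 => ?_
  refine (measure_le_of_fullCone_le hPU (inter_subset_left.trans hBK) hL0 hL hs h0
    (δ := δ) (by linarith) inter_subset_right (fun x hx => h x hx.1)).trans ?_
  rw [mul_assoc _ _ (ENNReal.ofReal ρ ^ d), ← mul_pow, ← ENNReal.ofReal_mul (by positivity)]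
  gcongr

/-- The part of the cone on which the `k`-th coordinate of `y - x` is the largest one. -/
def coneK {p d : ℕ} (K : Set (Fin p → ℝ)) (N : (Fin p → ℝ) →ₗ[ℝ] (Fin d → ℝ)) (k : Fin p)
    (x : Fin p → ℝ) (r s : ℝ) : Set (Fin p → ℝ) :=
  {y | y ∈ K ∧ y k ≠ x k ∧ (∀ j, |y j - x j| ≤ |y k - x k|) ∧ |y k - x k| < r ∧
    ‖N (y - x)‖ < s * |y k - x k|}

/-- First alternative: a point `y ≠ x` of `K` near `x` has the same projection as `x`,
and the `k`-th coordinate of `y - x` is the largest one. -/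
def Alt1 {p d : ℕ} (K : Set (Fin p → ℝ)) (k : Fin p) (δ : ℝ)
    (N : (Fin p → ℝ) →ₗ[ℝ] (Fin d → ℝ)) (x : Fin p → ℝ) : Prop :=
  ∃ y ∈ K, y k ≠ x k ∧ (∀ j, |y j - x j| ≤ |y k - x k|) ∧ |y k - x k| ≤ δ ∧ N (y - x) = 0

/-- Second alternative: the cones at `x` have infinite upper density. -/
def Alt2 {p d : ℕ} (K : Set (Fin p → ℝ)) (k : Fin p) (δ : ℝ)
    (N : (Fin p → ℝ) →ₗ[ℝ] (Fin d → ℝ)) (x : Fin p → ℝ) : Prop :=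
  ∀ j : ℕ, ∃ i ≥ j, ∃ r : ℚ, (0:ℝ) < r ∧ (r:ℝ) ≤ δ ∧
    j * (ENNReal.ofReal r ^ d * ENNReal.ofReal ((1/2)^i) ^ d)
      < μH[(d:ℝ)] (coneK K N k x r ((1/2)^i))

/-- Third alternative: the cones at `x` have zero density. -/
def Alt3 {p d : ℕ} (K : Set (Fin p → ℝ)) (k : Fin p) (δ : ℝ)
    (N : (Fin p → ℝ) →ₗ[ℝ] (Fin d → ℝ)) (x : Fin p → ℝ) : Prop :=
  ∀ l : ℕ, ∃ i0 : ℕ, ∀ i ≥ i0, ∀ r : ℚ, (0:ℝ) < r → (r:ℝ) ≤ δ →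
    μH[(d:ℝ)] (coneK K N k x r ((1/2)^i))
      ≤ ((l:ℝ≥0∞) + 1)⁻¹ * (ENNReal.ofReal r ^ d * ENNReal.ofReal ((1/2)^i) ^ d)

lemma dist_eq_of_max {p : ℕ} {x y : Fin p → ℝ} {k : Fin p}
    (h : ∀ j, |y j - x j| ≤ |y k - x k|) : dist y x = |y k - x k| := by
  refine le_antisymm ?_ ?_
  · rw [dist_pi_le_iff (abs_nonneg _)]
    exact h
  · exact dist_le_pi_dist y x k

lemma fullCone_subset {p d : ℕ} (K : Set (Fin p → ℝ)) (N : (Fin p → ℝ) →ₗ[ℝ] (Fin d → ℝ))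
    (x : Fin p → ℝ) (r s : ℝ) : fullCone K N x r s ⊆ ⋃ k, coneK K N k x r s := by
  rintro y ⟨hy, hyx, hr, hs⟩
  have hp : Nonempty (Fin p) := by
    by_contra h
    rw [not_nonempty_iff] at h
    exact hyx (Subsingleton.elim _ _)
  obtain ⟨k, hk⟩ := Finite.exists_max fun j => |y j - x j|
  have hd := dist_eq_of_max hk
  refine mem_iUnion.2 ⟨k, hy, ?_, hk, hd ▸ hr, hd ▸ hs⟩
  intro h
  rw [h, sub_self, abs_zero] at hd
  exact hyx (dist_eq_zero.1 hd)

lemma volume_image_le {p d : ℕ} {N : (Fin p → ℝ) →ₗ[ℝ] (Fin d → ℝ)} {L : ℝ≥0}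
    (hN : LipschitzWith L N) (A : Set (Fin p → ℝ)) :
    volume (N '' A) ≤ (L:ℝ≥0∞) ^ d * μH[(d:ℝ)] A := by
  rw [← hausdorff_pi_eq_volume]
  simpa using (hN.lipschitzOnWith (s := A)).hausdorffMeasure_image_le (d := d) (by positivity)

/-- If one of the three alternatives holds at almost every point and at every scale, then the
projection is null: the three cases are handled respectively by finiteness of fibres, by
differentiation of the projected measure, and by pure unrectifiability. -/
lemma image_null_of_alternatives {p d : ℕ} {K : Set (Fin p → ℝ)} (hKc : IsCompact K)
    (hK : μH[(d:ℝ)] K ≠ ⊤) (hPU : PurelyUnrect d K) (N : (Fin p → ℝ) →ₗ[ℝ] (Fin d → ℝ))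
    {Z : Set (Fin p → ℝ)} (hZ : μH[(d:ℝ)] Z = 0)
    (h : ∀ x ∈ K \ Z, ∀ i : ℕ, ∀ k, Alt1 K k (1 / ((i:ℝ) + 1)) N x ∨
      Alt2 K k (1 / ((i:ℝ) + 1)) N x ∨ Alt3 K k (1 / ((i:ℝ) + 1)) N x) :
    volume (N '' K) = 0 := by
  obtain ⟨L, hL⟩ : ∃ L : ℝ≥0, LipschitzWith L N :=
    ⟨_, (LinearMap.toContinuousLinearMap N).lipschitz⟩
  have hLn : ∀ v, ‖N v‖ ≤ (L:ℝ) * ‖v‖ := by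
    intro v
    have := hL.dist_le_mul v 0
    simpa using this
  have hnull : ∀ A : Set (Fin p → ℝ), μH[(d:ℝ)] A = 0 → volume (N '' A) = 0 := by
    intro A hA
    have := volume_image_le hL A
    rw [hA, mul_zero] at this
    exact le_antisymm this bot_le
  have hNc : Continuous N := hL.continuous
  -- points accumulating in their own fibre
  set S1 : Set (Fin p → ℝ) := {x ∈ K | ∀ i : ℕ, ∃ k, Alt1 K k (1 / ((i:ℝ) + 1)) N x} with hS1
  have h1 : volume (N '' S1) = 0 := by
    have := ae_finite_fiber hK hKc.measurableSet hL
    rw [ae_iff] at this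
    refine measure_mono_null ?_ this
    rintro _ ⟨x, ⟨hxK, hx⟩, rfl⟩ hfin
    have hfin2 : ((K ∩ N ⁻¹' {N x}) \ {x}).Finite := hfin.subset sdiff_subset
    have hclosed := hfin2.isClosed
    have hnot : x ∉ (K ∩ N ⁻¹' {N x}) \ {x} := fun h => h.2 rfl
    obtain ⟨ε, hε, hball⟩ := Metric.isOpen_iff.1 hclosed.isOpen_compl x hnot
    obtain ⟨i, hi⟩ := exists_nat_one_div_lt hε
    obtain ⟨k, y, hyK, hne, hmax, hle, hNy⟩ := hx i
    refine hball (show y ∈ ball x ε from ?_) ⟨⟨hyK, ?_⟩, ?_⟩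
    · rw [mem_ball, dist_eq_of_max hmax]
      linarith
    · rw [map_sub, sub_eq_zero] at hNy
      exact hNy
    · rintro rfl
      exact hne rfl
  set S2 : Set (Fin p → ℝ) := {x ∈ K | ∃ i : ℕ, ∃ k, Alt2 K k (1 / ((i:ℝ) + 1)) N x} with hS2
  have h2 : volume (N '' S2) = 0 := by
    have hfin : IsFiniteMeasure ((μH[(d:ℝ)] : Measure (Fin p → ℝ)).restrict K) :=
      ⟨by simpa using lt_top_iff_ne_top.2 hK⟩
    have := ae_density_bounded (((μH[(d:ℝ)] : Measure (Fin p → ℝ)).restrict K).map N)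
    rw [ae_iff] at this
    refine measure_mono_null ?_ this
    rintro _ ⟨x, ⟨hxK, i0, k, hx⟩, rfl⟩ ⟨J, ε, hε, hJ⟩
    obtain ⟨i1, hi1⟩ := exists_pow_lt_of_lt_one hε (show (1/2:ℝ) < 1 by norm_num)
    obtain ⟨i, hi, r, hr0, hr1, hlt⟩ := hx (max J i1)
    have hr1' : (r:ℝ) ≤ 1 := hr1.trans (by
      rw [div_le_one (by positivity)]; linarith [(Nat.cast_nonneg i0 : (0:ℝ) ≤ i0)])
    have hs0 : (0:ℝ) < (1/2)^i := by positivity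
    have hsε : ((1:ℝ)/2)^i < ε :=
      (pow_le_pow_of_le_one (by norm_num) (by norm_num) ((le_max_right _ _).trans hi)).trans_lt hi1
    have hb := hJ (r * (1/2)^i) (by positivity) (by nlinarith)
    rw [Measure.map_apply hNc.measurable isClosed_closedBall.measurableSet,
      Measure.restrict_apply (hNc.measurable isClosed_closedBall.measurableSet)] at hb
    have hcone : coneK K N k x r ((1/2)^i) ⊆ N ⁻¹' closedBall (N x) (r * (1/2)^i) ∩ K := by
      rintro y ⟨hy, -, -, hyr, hyN⟩
      refine ⟨?_, hy⟩
      rw [mem_preimage, mem_closedBall, dist_map_sub]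
      nlinarith
    refine absurd (hlt.trans_le ((measure_mono hcone).trans hb)) (not_lt.2 ?_)
    rw [ENNReal.ofReal_mul hr0.le, mul_pow]
    gcongr
    exact le_max_left _ _
  set S3 : ℕ → Set (Fin p → ℝ) := fun i => {x ∈ K | ∀ k, Alt3 K k (1 / ((i:ℝ) + 1)) N x} with hS3
  have h3 : ∀ i, μH[(d:ℝ)] (S3 i) = 0 := by
    intro i
    set δ : ℝ := 1 / ((i:ℝ) + 1) with hδ
    have hδ0 : 0 < δ := by positivity
    set D : ℝ≥0∞ := 2 * (p * 2 ^ d) * 80 ^ d * ENNReal.ofReal (L + 1) ^ d with hD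
    obtain ⟨l, hl⟩ := ENNReal.exists_nat_gt (show D ≠ ⊤ by rw [hD]; finiteness)
    set B : ℕ → Set (Fin p → ℝ) := fun i0 => {x ∈ K | ∀ k, ∀ r : ℚ, (0:ℝ) < r → (r:ℝ) ≤ δ →
      μH[(d:ℝ)] (coneK K N k x r ((1/2)^i0))
      ≤ ((l:ℝ≥0∞) + 1)⁻¹ * (ENNReal.ofReal r ^ d * ENNReal.ofReal ((1/2)^i0) ^ d)} with hB
    have hsub : S3 i ⊆ ⋃ i0, B i0 := by
      rintro x ⟨hxK, hx⟩
      choose f hf using fun k => hx k l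
      refine mem_iUnion.2 ⟨Finset.univ.sup f, hxK, fun k r hr0 hr1 => ?_⟩
      exact hf k _ (Finset.le_sup (Finset.mem_univ k)) r hr0 hr1
    refine measure_mono_null hsub (measure_iUnion_null fun i0 => ?_)
    refine null_of_fullCone_le hK hPU (fun x hx => hx.1) (L := L) L.2 hLn
      (s := (1/2)^i0) (by positivity) (pow_le_one₀ (by norm_num) (by norm_num)) hδ0
      (lam := p * 2 ^ d * ((l:ℝ≥0∞) + 1)⁻¹) ?_ ?_
    · calc 2 * (p * 2 ^ d * ((l:ℝ≥0∞) + 1)⁻¹) * 80 ^ d * ENNReal.ofReal (L + 1) ^ d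
          = D * ((l:ℝ≥0∞) + 1)⁻¹ := by rw [hD]; ring
        _ < 1 := by
          rw [← div_eq_mul_inv, ENNReal.div_lt_iff (Or.inl (by simp)) (Or.inl (by finiteness)),
            one_mul]
          exact hl.trans_le (by simp)
    · intro x hx r hr0 hr1
      obtain ⟨q, hq1, hq2⟩ := exists_rat_btwn (show r < min (2 * r) δ from
        lt_min (by linarith) hr1)
      have hq3 := hq2.trans_le (min_le_left _ _)
      have hq4 := hq2.trans_le (min_le_right _ _)
      calc μH[(d:ℝ)] (fullCone K N x r ((1/2)^i0))
          ≤ μH[(d:ℝ)] (⋃ k, coneK K N k x q ((1/2)^i0)) := by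
            apply measure_mono
            refine (fullCone_subset K N x r _).trans (iUnion_mono fun k => ?_)
            rintro y ⟨a, b, c, e, f⟩
            exact ⟨a, b, c, e.trans hq1, f⟩
        _ ≤ ∑ k, μH[(d:ℝ)] (coneK K N k x q ((1/2)^i0)) := measure_iUnion_fintype_le _ _
        _ ≤ ∑ k : Fin p, ((l:ℝ≥0∞) + 1)⁻¹ *
              (ENNReal.ofReal q ^ d * ENNReal.ofReal ((1/2)^i0) ^ d) :=
            Finset.sum_le_sum fun k _ => hx.2 k q (hr0.trans hq1) hq4.le
        _ = p * (((l:ℝ≥0∞) + 1)⁻¹ * (ENNReal.ofReal q ^ d * ENNReal.ofReal ((1/2)^i0) ^ d)) := by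
            simp
        _ ≤ p * (((l:ℝ≥0∞) + 1)⁻¹ *
              (ENNReal.ofReal (2 * r) ^ d * ENNReal.ofReal ((1/2)^i0) ^ d)) := by gcongr
        _ = _ := by
            rw [ENNReal.ofReal_mul (by norm_num), ENNReal.ofReal_mul hr0.le, mul_pow, mul_pow]
            simp only [ENNReal.ofReal_ofNat]
            ring
  have hcov : N '' K ⊆ N '' Z ∪ N '' S1 ∪ N '' S2 ∪ ⋃ i, N '' S3 i := by
    rintro _ ⟨x, hxK, rfl⟩
    by_cases hxZ : x ∈ Z
    · exact Or.inl (Or.inl (Or.inl ⟨x, hxZ, rfl⟩))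
    by_cases hx1 : x ∈ S1
    · exact Or.inl (Or.inl (Or.inr ⟨x, hx1, rfl⟩))
    by_cases hx2 : x ∈ S2
    · exact Or.inl (Or.inr ⟨x, hx2, rfl⟩)
    right
    simp only [hS1, mem_ofPred_eq, not_and, not_forall, not_exists] at hx1
    obtain ⟨i, hi⟩ := hx1 hxK
    refine mem_iUnion.2 ⟨i, x, ⟨hxK, fun k => ?_⟩, rfl⟩
    rcases h x ⟨hxK, hxZ⟩ i k with h | h | h
    · exact absurd h (hi k)
    · exact absurd ⟨hxK, i, k, h⟩ hx2
    · exact h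
  refine measure_mono_null hcov ?_
  simp only [measure_union_null_iff, measure_iUnion_null_iff]
  exact ⟨⟨⟨hnull _ hZ, h1⟩, h2⟩, fun i => hnull _ (h3 i)⟩

/-- The linear map `ℝᵖ → ℝᵈ` with columns `N`. -/
def colMap {p d : ℕ} (N : Fin p → Fin d → ℝ) : (Fin p → ℝ) →ₗ[ℝ] (Fin d → ℝ) :=
  Fintype.linearCombination ℝ N

lemma colMap_apply {p d : ℕ} (N : Fin p → Fin d → ℝ) (v : Fin p → ℝ) :
    colMap N v = ∑ i, v i • N i := by
  rw [colMap, Fintype.linearCombination_apply]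

lemma colMap_add_single {p d : ℕ} (N : Fin p → Fin d → ℝ) (k : Fin p) (c : Fin d → ℝ)
    (v : Fin p → ℝ) : colMap (N + Pi.single k c) v = colMap N v + v k • c := by
  simp only [colMap_apply, Pi.add_apply, smul_add, Finset.sum_add_distrib]
  congr 1
  rw [Finset.sum_eq_single k]
  · simp
  · intro i _ hi
    simp [Pi.single_eq_of_ne hi]
  · simp

lemma continuous_colMap {p d : ℕ} :
    Continuous fun q : (Fin p → Fin d → ℝ) × (Fin p → ℝ) => colMap q.1 q.2 := by
  simp only [colMap_apply]
  fun_prop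

lemma isClosed_exists_mem_compact {X Y : Type*} [TopologicalSpace X] [TopologicalSpace Y]
    {K : Set X} (hK : IsCompact K) {Q : Set (Y × X)} (hQ : IsClosed Q) :
    IsClosed {z | ∃ y ∈ K, (z, y) ∈ Q} := by
  have : CompactSpace K := isCompact_iff_compactSpace.1 hK
  have hQ' : IsClosed ((fun q : Y × K => (q.1, (q.2 : X))) ⁻¹' Q) :=
    hQ.preimage (by fun_prop)
  have := isClosedMap_fst_of_compactSpace _ hQ'
  convert this using 1
  ext z
  constructor
  · rintro ⟨y, hy, hz⟩
    exact ⟨(z, ⟨y, hy⟩), hz, rfl⟩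
  · rintro ⟨⟨z', y⟩, hz, rfl⟩
    exact ⟨y, y.2, hz⟩

/-- For a fixed vertex and all columns but one fixed, the three alternatives hold for almost every
choice of the remaining column: the cones become preimages of balls under the slope map. -/
lemma ae_alternatives_column {p d : ℕ} (hd : 1 ≤ d) {K : Set (Fin p → ℝ)} (hKc : IsCompact K)
    (k : Fin p) (δ : ℝ) (x : Fin p → ℝ) (N0 : Fin p → Fin d → ℝ) :
    ∀ᵐ c : Fin d → ℝ, Alt1 K k δ (colMap (N0 + Pi.single k c)) x ∨
      Alt2 K k δ (colMap (N0 + Pi.single k c)) x ∨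
      Alt3 K k δ (colMap (N0 + Pi.single k c)) x := by
  set sl : (Fin p → ℝ) → (Fin d → ℝ) := fun y => -((y k - x k)⁻¹ • colMap N0 (y - x)) with hsl
  have hcont0 : Continuous fun y : Fin p → ℝ => colMap N0 (y - x) := by
    simp only [colMap_apply]; fun_prop
  have hslm : Measurable sl := by
    have h1 : Measurable fun y : Fin p → ℝ => (y k - x k)⁻¹ :=
      ((measurable_pi_apply k).sub_const _).inv
    exact (h1.smul hcont0.measurable).neg
  have hslope : ∀ y, y k ≠ x k → ∀ c, colMap (N0 + Pi.single k c) (y - x)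
      = (y k - x k) • (c - sl y) := by
    intro y hy c
    rw [colMap_add_single, hsl]
    simp only [sub_neg_eq_add, smul_add, Pi.sub_apply]
    rw [smul_smul, mul_inv_cancel₀ (sub_ne_zero.2 hy), one_smul, add_comm]
  set D : ℝ → Set (Fin p → ℝ) := fun r =>
    {y | y ∈ K ∧ y k ≠ x k ∧ (∀ j, |y j - x j| ≤ |y k - x k|) ∧ |y k - x k| < r} with hD
  have hcone : ∀ c r s, coneK K (colMap (N0 + Pi.single k c)) k x r s = sl ⁻¹' (ball c s) ∩ D r := by
    intro c r s
    ext y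
    have : ∀ hy : y k ≠ x k, (‖colMap (N0 + Pi.single k c) (y - x)‖ < s * |y k - x k| ↔
        sl y ∈ ball c s) := by
      intro hy
      have h0 : 0 < |y k - x k| := abs_pos.2 (sub_ne_zero.2 hy)
      rw [hslope y hy c, norm_smul, Real.norm_eq_abs, mul_comm, mul_lt_mul_iff_left₀ h0,
        mem_ball, dist_comm, dist_eq_norm]
    simp only [coneK, hD, mem_ofPred_eq, mem_inter_iff, mem_preimage]
    constructor
    · rintro ⟨a, b, c', e, f⟩
      exact ⟨(this b).1 f, a, b, c', e⟩
    · rintro ⟨f, a, b, c', e⟩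
      exact ⟨a, b, c', e, (this b).2 f⟩
  set D' : Set (Fin p → ℝ) :=
    {y | y ∈ K ∧ y k ≠ x k ∧ (∀ j, |y j - x j| ≤ |y k - x k|) ∧ |y k - x k| ≤ δ} with hD'
  set D'' : ℕ → Set (Fin p → ℝ) := fun n => K ∩
    {y | 1 / ((n:ℝ) + 1) ≤ |y k - x k| ∧ (∀ j, |y j - x j| ≤ |y k - x k|) ∧ |y k - x k| ≤ δ}
    with hD''
  have hDU : D' = ⋃ n, D'' n := by
    ext y
    simp only [hD', hD'', mem_ofPred_eq, mem_iUnion, mem_inter_iff]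
    constructor
    · rintro ⟨a, b, c, e⟩
      obtain ⟨n, hn⟩ := exists_nat_one_div_lt (abs_pos.2 (sub_ne_zero.2 b))
      exact ⟨n, a, hn.le, c, e⟩
    · rintro ⟨n, a, b, c, e⟩
      refine ⟨a, ?_, c, e⟩
      intro h
      rw [h, sub_self, abs_zero] at b
      have : (0:ℝ) < 1 / ((n:ℝ) + 1) := by positivity
      linarith
  have hcompact : ∀ n, IsCompact (D'' n) := by
    intro n
    refine hKc.inter_right ?_
    simp only [ofPred_and, ofPred_forall]
    refine (isClosed_le (by fun_prop) (by fun_prop)).inter (IsClosed.inter ?_ ?_)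
    · exact isClosed_iInter fun j => isClosed_le (by fun_prop) (by fun_prop)
    · exact isClosed_le (by fun_prop) (by fun_prop)
  have hslc : ∀ n, ContinuousOn sl (D'' n) := by
    intro n
    have h1 : ContinuousOn (fun y : Fin p → ℝ => y k - x k) (D'' n) := by fun_prop
    refine ((h1.inv₀ ?_).smul hcont0.continuousOn).neg
    rintro y ⟨-, hy, -⟩ h0
    rw [h0, abs_zero] at hy
    have : (0:ℝ) < 1 / ((n:ℝ) + 1) := by positivity
    linarith
  have hCm : MeasurableSet (sl '' D')ᶜ := by
    rw [hDU, image_iUnion]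
    exact (MeasurableSet.iUnion fun n =>
      ((hcompact n).image_of_continuousOn (hslc n)).measurableSet).compl
  have hDm : ∀ r, MeasurableSet (D r) := by
    intro r
    simp only [hD, ofPred_and, ofPred_forall]
    refine hKc.measurableSet.inter (MeasurableSet.inter ?_ (MeasurableSet.inter ?_ ?_))
    · exact (measurableSet_eq_fun (measurable_pi_apply k) measurable_const).compl
    · exact MeasurableSet.iInter fun j => (isClosed_le (by fun_prop) (by fun_prop)).measurableSet
    · exact (isOpen_lt (by fun_prop) (by fun_prop)).measurableSet
  set m : {r : ℚ // (0:ℝ) < r ∧ (r:ℝ) ≤ δ} → Measure (Fin d → ℝ) := fun r =>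
    ((μH[(d:ℝ)] : Measure (Fin p → ℝ)).restrict (D (r : ℚ))).map sl with hm
  have hmball : ∀ r c s, m r (ball c s) =
      μH[(d:ℝ)] (coneK K (colMap (N0 + Pi.single k c)) k x (r : ℚ) s) := by
    intro r c s
    rw [hm, hcone]
    simp only
    rw [Measure.map_apply hslm measurableSet_ball,
      Measure.restrict_apply (hslm measurableSet_ball)]
  have hmC : ∀ r, m r (sl '' D')ᶜ = 0 := by
    intro r
    rw [hm]
    simp only
    rw [Measure.map_apply hslm hCm, Measure.restrict_apply (hslm hCm)]
    convert measure_empty (μ := (μH[(d:ℝ)] : Measure (Fin p → ℝ)))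
    rw [eq_empty_iff_forall_notMem]
    rintro y ⟨hy, a, b, c, e⟩
    exact hy ⟨y, ⟨a, b, c, e.le.trans r.2.2⟩, rfl⟩
  filter_upwards [density_dichotomy hd m (fun r => ENNReal.ofReal (r : ℚ) ^ d) hCm hmC] with c hc
  by_cases hcC : c ∈ (sl '' D')ᶜ
  · right
    by_cases h2 : Alt2 K k δ (colMap (N0 + Pi.single k c)) x
    · exact Or.inl h2
    · right
      simp only [Alt2, not_forall, not_exists, not_and, not_lt] at h2
      obtain ⟨j, hj⟩ := h2
      intro l
      obtain ⟨i0, hi0⟩ := hc hcC ⟨j, fun i hi r => by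
        rw [hmball]; exact hj i hi r r.2.1 r.2.2⟩ l
      refine ⟨i0, fun i hi r hr0 hr1 => ?_⟩
      have := hi0 i hi ⟨r, hr0, hr1⟩
      rwa [hmball] at this
  · left
    rw [mem_compl_iff, not_not] at hcC
    obtain ⟨y, ⟨hyK, hyk, hmax, hle⟩, rfl⟩ := hcC
    refine ⟨y, hyK, hyk, hmax, hle, ?_⟩
    rw [hslope y hyk, sub_self, smul_zero]

lemma measurable_coneK {p d : ℕ} {K : Set (Fin p → ℝ)}
    (hK : μH[(d:ℝ)] K ≠ ⊤) (k : Fin p) (r s : ℝ) :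
    Measurable fun q : (Fin p → ℝ) × (Fin p → Fin d → ℝ) =>
      μH[(d:ℝ)] (coneK K (colMap q.2) k q.1 r s) := by
  have hfin : IsFiniteMeasure ((μH[(d:ℝ)] : Measure (Fin p → ℝ)).restrict K) :=
    ⟨by simpa using lt_top_iff_ne_top.2 hK⟩
  set Q : Set (((Fin p → ℝ) × (Fin p → Fin d → ℝ)) × (Fin p → ℝ)) :=
    {z | z.2 k ≠ z.1.1 k ∧ (∀ j, |z.2 j - z.1.1 j| ≤ |z.2 k - z.1.1 k|) ∧ |z.2 k - z.1.1 k| < r ∧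
      ‖colMap z.1.2 (z.2 - z.1.1)‖ < s * |z.2 k - z.1.1 k|} with hQ
  have hc : Continuous fun z : ((Fin p → ℝ) × (Fin p → Fin d → ℝ)) × (Fin p → ℝ) =>
      colMap z.1.2 (z.2 - z.1.1) := by
    simp only [colMap_apply]; fun_prop
  have hQm : MeasurableSet Q := by
    rw [hQ]
    simp only [ofPred_and, ofPred_forall]
    refine MeasurableSet.inter ?_ (MeasurableSet.inter ?_ (MeasurableSet.inter ?_ ?_))
    · exact (measurableSet_eq_fun (by fun_prop) (by fun_prop)).compl
    · exact MeasurableSet.iInter fun j => (isClosed_le (by fun_prop) (by fun_prop)).measurableSet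
    · exact (isOpen_lt (by fun_prop) (by fun_prop)).measurableSet
    · exact (isOpen_lt (by fun_prop) (by fun_prop)).measurableSet
  have := measurable_measure_prodMk_left
    (ν := (μH[(d:ℝ)] : Measure (Fin p → ℝ)).restrict K) hQm
  convert this using 2 with q
  rw [Measure.restrict_apply (measurable_prodMk_left hQm), inter_comm]
  rfl

lemma measurableSet_alternatives {p d : ℕ} {K : Set (Fin p → ℝ)} (hKc : IsCompact K)
    (hK : μH[(d:ℝ)] K ≠ ⊤) (k : Fin p) (δ : ℝ) :
    MeasurableSet {q : (Fin p → ℝ) × (Fin p → Fin d → ℝ) | Alt1 K k δ (colMap q.2) q.1 ∨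
      Alt2 K k δ (colMap q.2) q.1 ∨ Alt3 K k δ (colMap q.2) q.1} := by
  simp only [ofPred_or]
  refine MeasurableSet.union ?_ (MeasurableSet.union ?_ ?_)
  · have hc : Continuous fun z : ((Fin p → ℝ) × (Fin p → Fin d → ℝ)) × (Fin p → ℝ) =>
        colMap z.1.2 (z.2 - z.1.1) := by
      simp only [colMap_apply]; fun_prop
    have : {q : (Fin p → ℝ) × (Fin p → Fin d → ℝ) | Alt1 K k δ (colMap q.2) q.1} =
        ⋃ n : ℕ, {q | ∃ y ∈ K, (q, y) ∈ {z : ((Fin p → ℝ) × (Fin p → Fin d → ℝ)) × (Fin p → ℝ) |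
          1 / ((n:ℝ) + 1) ≤ |z.2 k - z.1.1 k| ∧ (∀ j, |z.2 j - z.1.1 j| ≤ |z.2 k - z.1.1 k|) ∧
          |z.2 k - z.1.1 k| ≤ δ ∧ colMap z.1.2 (z.2 - z.1.1) = 0}} := by
      ext q
      simp only [Alt1, mem_ofPred_eq, mem_iUnion]
      constructor
      · rintro ⟨y, a, b, c⟩
        obtain ⟨n, hn⟩ := exists_nat_one_div_lt (abs_pos.2 (sub_ne_zero.2 b))
        exact ⟨n, y, a, hn.le, c⟩
      · rintro ⟨n, y, a, b, c⟩
        refine ⟨y, a, ?_, c⟩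
        intro h
        rw [h, sub_self, abs_zero] at b
        have : (0:ℝ) < 1 / ((n:ℝ) + 1) := by positivity
        linarith
    rw [this]
    refine MeasurableSet.iUnion fun n => (isClosed_exists_mem_compact hKc ?_).measurableSet
    simp only [ofPred_and, ofPred_forall]
    refine IsClosed.inter ?_ (IsClosed.inter ?_ (IsClosed.inter ?_ ?_))
    · exact isClosed_le (by fun_prop) (by fun_prop)
    · exact isClosed_iInter fun j => isClosed_le (by fun_prop) (by fun_prop)
    · exact isClosed_le (by fun_prop) (by fun_prop)
    · exact isClosed_eq hc continuous_const
  · simp only [Alt2, ofPred_forall, ofPred_exists, ofPred_and]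
    refine MeasurableSet.iInter fun j => MeasurableSet.iUnion fun i => MeasurableSet.inter
      (MeasurableSet.const _) (MeasurableSet.iUnion fun r => MeasurableSet.inter
      (MeasurableSet.const _) (MeasurableSet.inter (MeasurableSet.const _) ?_))
    exact measurableSet_lt measurable_const (measurable_coneK hK k _ _)
  · simp only [Alt3, ofPred_forall, ofPred_exists]
    refine MeasurableSet.iInter fun l => MeasurableSet.iUnion fun i0 => MeasurableSet.iInter
      fun i => MeasurableSet.iInter fun _ => MeasurableSet.iInter fun r => MeasurableSet.iInter
      fun _ => MeasurableSet.iInter fun _ => ?_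
    exact measurableSet_le (measurable_coneK hK k _ _) measurable_const

/-- **Besicovitch–Federer projection theorem** for linear maps: almost every linear map
`ℝᵖ → ℝᵈ` sends a given purely `d`-unrectifiable compact set of finite measure to a null set. -/
lemma ae_image_null {p d : ℕ} (hd : 1 ≤ d) {K : Set (Fin p → ℝ)} (hKc : IsCompact K)
    (hK : μH[(d:ℝ)] K ≠ ⊤) (hPU : PurelyUnrect d K) :
    ∀ᵐ N : Fin p → Fin d → ℝ, volume (colMap N '' K) = 0 := by
  have hfin : IsFiniteMeasure ((μH[(d:ℝ)] : Measure (Fin p → ℝ)).restrict K) :=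
    ⟨by simpa using lt_top_iff_ne_top.2 hK⟩
  have hone : ∀ (i : ℕ) (k : Fin p), ∀ᵐ N : Fin p → Fin d → ℝ,
      ((μH[(d:ℝ)] : Measure (Fin p → ℝ)).restrict K) {x | ¬ (Alt1 K k (1 / ((i:ℝ) + 1)) (colMap N) x
        ∨ Alt2 K k (1 / ((i:ℝ) + 1)) (colMap N) x ∨ Alt3 K k (1 / ((i:ℝ) + 1)) (colMap N) x)} = 0 := by
    intro i k
    have hm := (measurableSet_alternatives (d := d) hKc hK k (1 / ((i:ℝ) + 1))).compl
    set Bad := {q : (Fin p → ℝ) × (Fin p → Fin d → ℝ) | Alt1 K k (1 / ((i:ℝ) + 1)) (colMap q.2) q.1 ∨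
      Alt2 K k (1 / ((i:ℝ) + 1)) (colMap q.2) q.1 ∨ Alt3 K k (1 / ((i:ℝ) + 1)) (colMap q.2) q.1}ᶜ
      with hBad
    have h0 : (((μH[(d:ℝ)] : Measure (Fin p → ℝ)).restrict K).prod
        (volume : Measure (Fin p → Fin d → ℝ))) Bad = 0 := by
      rw [Measure.measure_prod_null hm]
      refine Eventually.of_forall fun x => ?_
      refine null_of_ae_translate (volume : Measure (Fin d → ℝ)) volume
        (measurable_prodMk_left hm) (ι := fun c => Pi.single k c) ?_ fun N0 => ?_
      · exact (continuous_single k).measurable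
      · filter_upwards [ae_alternatives_column hd hKc k (1 / ((i:ℝ) + 1)) x N0] with c hc
        exact fun hbad => hbad hc
    rw [← Measure.prod_swap, Measure.map_apply measurable_swap hm] at h0
    filter_upwards [Measure.measure_ae_null_of_prod_null h0] with N hN
    exact hN
  have hall : ∀ᵐ N : Fin p → Fin d → ℝ, ∀ (i : ℕ) (k : Fin p),
      ((μH[(d:ℝ)] : Measure (Fin p → ℝ)).restrict K) {x | ¬ (Alt1 K k (1 / ((i:ℝ) + 1)) (colMap N) x
        ∨ Alt2 K k (1 / ((i:ℝ) + 1)) (colMap N) x ∨ Alt3 K k (1 / ((i:ℝ) + 1)) (colMap N) x)} = 0 := by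
    rw [ae_all_iff]; intro i
    rw [ae_all_iff]; intro k
    exact hone i k
  filter_upwards [hall] with N hN
  refine image_null_of_alternatives hKc hK hPU (colMap N)
    (Z := ⋃ (i : ℕ) (k : Fin p), {x | ¬ (Alt1 K k (1 / ((i:ℝ) + 1)) (colMap N) x
        ∨ Alt2 K k (1 / ((i:ℝ) + 1)) (colMap N) x ∨ Alt3 K k (1 / ((i:ℝ) + 1)) (colMap N) x)} ∩ K)
    ?_ ?_
  · refine measure_iUnion_null fun i => measure_iUnion_null fun k => ?_
    have := hN i k
    rwa [Measure.restrict_apply' hKc.measurableSet] at this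
  · intro x hx i k
    by_contra hno
    exact hx.2 (mem_iUnion₂.2 ⟨i, k, hno, hx.1⟩)

/-! ### Projective images of purely unrectifiable sets -/

/-- Pure unrectifiability is preserved by maps that are bilipschitz on the set. -/
lemma PurelyUnrect.image {d p p' : ℕ} {U : Set (Fin p → ℝ)} (hU : PurelyUnrect d U)
    {g : (Fin p → ℝ) → (Fin p' → ℝ)} {c : ℝ≥0} (hg : LipschitzOnWith c g U) {C : ℝ} (hC : 0 ≤ C)
    (hg' : ∀ x ∈ U, ∀ y ∈ U, dist x y ≤ C * dist (g x) (g y)) : PurelyUnrect d (g '' U) := by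
  rintro f ⟨c', hf⟩
  have hinj : InjOn g U := by
    intro x hx y hy hxy
    have := hg' x hx y hy
    rw [hxy, dist_self, mul_zero] at this
    exact dist_le_zero.1 this
  have hlip : LipschitzOnWith (Real.toNNReal C * c') (fun v => Function.invFunOn g U (f v))
      (f ⁻¹' (g '' U)) := by
    refine LipschitzOnWith.of_dist_le_mul ?_
    rintro v ⟨x, hx, hxv⟩ v' ⟨x', hx', hxv'⟩
    rw [← hxv, ← hxv', hinj.leftInvOn_invFunOn hx, hinj.leftInvOn_invFunOn hx']
    refine (hg' x hx x' hx').trans ?_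
    push_cast
    rw [Real.coe_toNNReal _ hC, mul_assoc, hxv, hxv']
    gcongr
    exact hf.dist_le_mul v v'
  obtain ⟨F, hF, hFeq⟩ := hlip.extend_pi
  have hsub : g '' U ∩ range f ⊆ g '' (U ∩ range F) := by
    rintro _ ⟨⟨x, hx, rfl⟩, v, hv⟩
    refine ⟨x, ⟨hx, v, ?_⟩, rfl⟩
    rw [← hFeq (show v ∈ f ⁻¹' (g '' U) from ⟨x, hx, hv.symm⟩)]
    simp only [hv]
    exact hinj.leftInvOn_invFunOn hx
  refine measure_mono_null hsub ?_
  have := (hg.mono (inter_subset_left : U ∩ range F ⊆ U)).hausdorffMeasure_image_le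
    (d := (d:ℝ)) (by positivity)
  rw [hU F ⟨_, hF⟩, mul_zero] at this
  exact le_antisymm this bot_le

/-- The `i`-th coordinate of `A x - τ` relative to the centre of the integer cube `q`. -/
def cellCoord {n : ℕ} (A : Fin n → Fin n → ℝ) (τ : Fin n → ℝ) (q : Fin n → ℤ) (i : Fin n)
    (x : Fin n → ℝ) : ℝ := (∑ k, x k * A k i) - τ i - q i - 1/2

lemma continuous_cellCoord {n : ℕ} (q : Fin n → ℤ) (i : Fin n) :
    Continuous fun z : ((Fin n → Fin n → ℝ) × (Fin n → ℝ)) × (Fin n → ℝ) =>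
      cellCoord z.1.1 z.1.2 q i z.2 := by
  unfold cellCoord
  fun_prop

lemma cellCoord_lipschitz {n : ℕ} (A : Fin n → Fin n → ℝ) (τ : Fin n → ℝ) (q : Fin n → ℤ)
    (i : Fin n) : ∃ Λ : ℝ, 0 ≤ Λ ∧ ∀ x y,
      |cellCoord A τ q i x - cellCoord A τ q i y| ≤ Λ * dist x y := by
  refine ⟨∑ k, |A k i|, Finset.sum_nonneg fun k _ => abs_nonneg _, fun x y => ?_⟩
  have : cellCoord A τ q i x - cellCoord A τ q i y = ∑ k, (x k - y k) * A k i := by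
    simp only [cellCoord, sub_mul, Finset.sum_sub_distrib]
    ring
  rw [this, Finset.sum_mul]
  refine (Finset.abs_sum_le_sum_abs _ _).trans (Finset.sum_le_sum fun k _ => ?_)
  rw [abs_mul, mul_comm]
  gcongr
  exact dist_le_pi_dist x y k

/-- The projective map `x ↦ (1, x) / e(x)`. -/
def projMap {n : ℕ} (e : (Fin n → ℝ) → ℝ) (x : Fin n → ℝ) : Fin (n + 1) → ℝ :=
  Fin.cons (e x)⁻¹ fun k => x k * (e x)⁻¹

lemma projMap_bilipschitz {n : ℕ} {e : (Fin n → ℝ) → ℝ} {Λ : ℝ} (hΛ : 0 ≤ Λ)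
    (he : ∀ x y, |e x - e y| ≤ Λ * dist x y) {K : Set (Fin n → ℝ)} (hK : IsCompact K) {ε : ℝ}
    (hε : 0 < ε) (hKε : ∀ x ∈ K, ε ≤ |e x|) :
    (∃ c, LipschitzOnWith c (projMap e) K) ∧
    ∃ C : ℝ, 0 ≤ C ∧ ∀ x ∈ K, ∀ y ∈ K, dist x y ≤ C * dist (projMap e x) (projMap e y) := by
  obtain ⟨R, hR0, hR⟩ : ∃ R : ℝ, 0 < R ∧ ∀ x ∈ K, ‖x‖ ≤ R := by
    obtain ⟨R, hR⟩ := hK.isBounded.exists_norm_le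
    exact ⟨max R 1, by positivity, fun x hx => (hR x hx).trans (le_max_left _ _)⟩
  obtain ⟨Q, hQ0, hQ⟩ : ∃ Q : ℝ, 0 ≤ Q ∧ ∀ x ∈ K, |e x| ≤ Q := by
    refine ⟨|e 0| + Λ * R, by positivity, fun x hx => ?_⟩
    have h1 := he x 0
    rw [dist_zero_right] at h1
    have h2 := abs_sub_abs_le_abs_sub (e x) (e 0)
    have h3 := hR x hx
    nlinarith
  have hne : ∀ x ∈ K, e x ≠ 0 := by
    intro x hx h0
    have := hKε x hx
    rw [h0, abs_zero] at this
    linarith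
  have hinv : ∀ x ∈ K, |(e x)⁻¹| ≤ ε⁻¹ := by
    intro x hx
    rw [abs_inv]
    exact inv_anti₀ hε (hKε x hx)
  have hdinv : ∀ x ∈ K, ∀ y ∈ K, |(e x)⁻¹ - (e y)⁻¹| ≤ ε⁻¹ * ε⁻¹ * Λ * dist x y := by
    intro x hx y hy
    have : (e x)⁻¹ - (e y)⁻¹ = (e x)⁻¹ * (e y)⁻¹ * (e y - e x) := by
      field_simp [hne x hx, hne y hy]
    rw [this, abs_mul, abs_mul, mul_assoc _ Λ]
    have h1 := he y x
    rw [dist_comm] at h1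
    have h2 := hinv x hx
    have h3 := hinv y hy
    gcongr
  refine ⟨⟨Real.toNNReal (ε⁻¹ * ε⁻¹ * Λ + ε⁻¹ + R * (ε⁻¹ * ε⁻¹ * Λ)), ?_⟩, Q * (1 + R),
    by positivity, ?_⟩
  · refine LipschitzOnWith.of_dist_le_mul fun x hx y hy => ?_
    rw [Real.coe_toNNReal _ (by positivity), dist_pi_le_iff (by positivity)]
    have h1 := hdinv x hx y hy
    intro k
    refine Fin.cases ?_ (fun k => ?_) k
    · simp only [projMap, Fin.cons_zero, Real.dist_eq]
      have h2 : 0 ≤ (ε⁻¹ + R * (ε⁻¹ * ε⁻¹ * Λ)) * dist x y := by positivity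
      nlinarith
    · simp only [projMap, Fin.cons_succ, Real.dist_eq]
      have h3 : x k * (e x)⁻¹ - y k * (e y)⁻¹ =
        (x k - y k) * (e x)⁻¹ + y k * ((e x)⁻¹ - (e y)⁻¹) := by ring
      rw [h3]
      have h4 : |(x k - y k) * (e x)⁻¹| ≤ dist x y * ε⁻¹ := by
        rw [abs_mul]
        have := dist_le_pi_dist x y k
        rw [Real.dist_eq] at this
        have h5 := hinv x hx
        gcongr
      have h6 : |y k * ((e x)⁻¹ - (e y)⁻¹)| ≤ R * (ε⁻¹ * ε⁻¹ * Λ * dist x y) := by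
        rw [abs_mul]
        have := (norm_le_pi_norm y k).trans (hR y hy)
        rw [Real.norm_eq_abs] at this
        gcongr
      have h7 := abs_add_le ((x k - y k) * (e x)⁻¹) (y k * ((e x)⁻¹ - (e y)⁻¹))
      have h8 : 0 ≤ ε⁻¹ * ε⁻¹ * Λ * dist x y := by positivity
      nlinarith
  · intro x hx y hy
    rw [dist_pi_le_iff (by positivity)]
    intro k
    have h1 := dist_le_pi_dist (projMap e x) (projMap e y) 0
    have h2 := dist_le_pi_dist (projMap e x) (projMap e y) k.succ
    simp only [projMap, Fin.cons_zero, Fin.cons_succ, Real.dist_eq] at h1 h2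
    change _ ≤ dist (projMap e x) (projMap e y) at h1
    change _ ≤ dist (projMap e x) (projMap e y) at h2
    have hx0 := hne x hx
    have hy0 := hne y hy
    have h3 : x k - y k = e x * ((x k * (e x)⁻¹ - y k * (e y)⁻¹) - y k * ((e x)⁻¹ - (e y)⁻¹)) := by
      field_simp
      ring
    rw [Real.dist_eq, h3, abs_mul, mul_assoc]
    have h4 := abs_sub (x k * (e x)⁻¹ - y k * (e y)⁻¹) (y k * ((e x)⁻¹ - (e y)⁻¹))
    have h5 : |y k * ((e x)⁻¹ - (e y)⁻¹)| ≤ R * dist (projMap e x) (projMap e y) := by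
      rw [abs_mul]
      have := (norm_le_pi_norm y k).trans (hR y hy)
      rw [Real.norm_eq_abs] at this
      gcongr
    have h6 := hQ x hx
    have h7 : |(x k * (e x)⁻¹ - y k * (e y)⁻¹) - y k * ((e x)⁻¹ - (e y)⁻¹)|
      ≤ (1 + R) * dist (projMap e x) (projMap e y) := by linarith
    gcongr

/-- For almost every affine map `x ↦ A x - τ`, the quotients of `d` of its (shifted) coordinates
by another one send a purely unrectifiable compact set to a null set. -/
lemma ae_ratio_null {n d : ℕ} (hd : 1 ≤ d) {K : Set (Fin n → ℝ)} (hKc : IsCompact K)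
    (hK : μH[(d:ℝ)] K ≠ ⊤) (hPU : PurelyUnrect d K) (σ : Fin d ↪ Fin n) (j : Fin n)
    (hj : j ∉ range σ) (q : Fin n → ℤ) {ε : ℝ} (hε : 0 < ε) :
    ∀ᵐ w : (Fin n → Fin n → ℝ) × (Fin n → ℝ), volume {b : Fin d → ℝ | ∃ x ∈ K,
      ε ≤ |cellCoord w.1 w.2 q j x| ∧
      ∀ i, b i * cellCoord w.1 w.2 q j x = cellCoord w.1 w.2 q (σ i) x} = 0 := by
  set R : (Fin n → Fin n → ℝ) × (Fin n → ℝ) → Set (Fin d → ℝ) := fun w =>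
    {b : Fin d → ℝ | ∃ x ∈ K, ε ≤ |cellCoord w.1 w.2 q j x| ∧
      ∀ i, b i * cellCoord w.1 w.2 q j x = cellCoord w.1 w.2 q (σ i) x} with hR
  have hclosed : IsClosed {z : ((Fin n → Fin n → ℝ) × (Fin n → ℝ)) × (Fin d → ℝ) |
      z.2 ∈ R z.1} := by
    have hc : ∀ i, Continuous fun z : ((((Fin n → Fin n → ℝ) × (Fin n → ℝ)) × (Fin d → ℝ)) ×
        (Fin n → ℝ)) => cellCoord z.1.1.1 z.1.1.2 q i z.2 := by
      intro i
      exact (continuous_cellCoord q i).comp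
        (f := fun z : ((((Fin n → Fin n → ℝ) × (Fin n → ℝ)) × (Fin d → ℝ)) × (Fin n → ℝ)) =>
          (z.1.1, z.2)) (by fun_prop)
    refine isClosed_exists_mem_compact hKc (Q := {z : ((((Fin n → Fin n → ℝ) ×
      (Fin n → ℝ)) × (Fin d → ℝ)) × (Fin n → ℝ)) | ε ≤ |cellCoord z.1.1.1 z.1.1.2 q j z.2| ∧
      ∀ i, z.1.2 i * cellCoord z.1.1.1 z.1.1.2 q j z.2 = cellCoord z.1.1.1 z.1.1.2 q (σ i) z.2}) ?_
    simp only [ofPred_and, ofPred_forall]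
    refine IsClosed.inter (isClosed_le continuous_const (hc j).abs) (isClosed_iInter fun i =>
      isClosed_eq (Continuous.mul (by fun_prop) (hc j)) (hc (σ i)))
  have hmeas : Measurable fun w => volume (R w) :=
    measurable_measure_prodMk_left (ν := (volume : Measure (Fin d → ℝ))) hclosed.measurableSet
  have hB : MeasurableSet {w | volume (R w) ≠ 0} :=
    (measurableSet_eq_fun hmeas measurable_const).compl
  set ι : (Fin (n+1) → Fin d → ℝ) → (Fin n → Fin n → ℝ) × (Fin n → ℝ) := fun c =>
    (fun k => Function.extend σ (c k.succ) 0, Function.extend σ (fun i => - c 0 i) 0) with hι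
  have hext : ∀ (f : (Fin (n+1) → Fin d → ℝ) → Fin d → ℝ), Measurable f →
      Measurable fun c => (Function.extend σ (f c) 0 : Fin n → ℝ) := by
    intro f hf
    refine measurable_pi_lambda _ fun i => ?_
    by_cases hi : ∃ i', σ i' = i
    · obtain ⟨i', rfl⟩ := hi
      simp only [σ.injective.extend_apply]
      exact (measurable_pi_apply i').comp hf
    · simp only [Function.extend_apply' _ _ _ hi]
      exact measurable_const
  have hιm : Measurable ι := by
    refine Measurable.prodMk (measurable_pi_lambda _ fun k => hext _ (measurable_pi_apply _))
      (hext _ (by fun_prop))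
  rw [ae_iff]
  have hleft : (volume : Measure ((Fin n → Fin n → ℝ) × (Fin n → ℝ))).IsAddLeftInvariant :=
    Measure.prod.instIsAddLeftInvariant (μ := (volume : Measure (Fin n → Fin n → ℝ)))
      (ν := (volume : Measure (Fin n → ℝ)))
  have hright : (volume : Measure ((Fin n → Fin n → ℝ) × (Fin n → ℝ))).IsAddRightInvariant :=
    inferInstance
  refine null_of_ae_translate (volume : Measure (Fin (n+1) → Fin d → ℝ)) volume hB hιm ?_
  rintro ⟨A, τ⟩
  set e : (Fin n → ℝ) → ℝ := cellCoord A τ q j with he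
  have hj' : ¬ ∃ i', σ i' = j := fun ⟨i', h⟩ => hj ⟨i', h⟩
  have hej : ∀ c x, cellCoord ((A, τ) + ι c).1 ((A, τ) + ι c).2 q j x = e x := by
    intro c x
    simp [he, cellCoord, hι, Function.extend_apply' _ _ _ hj']
  set N0 : Fin (n+1) → Fin d → ℝ := Fin.cons (fun i => - τ (σ i) - q (σ i) - 1/2)
    (fun k i => A k (σ i)) with hN0
  have hei : ∀ c x i, cellCoord ((A, τ) + ι c).1 ((A, τ) + ι c).2 q (σ i) x =
      (∑ k : Fin n, x k * (c k.succ i + N0 k.succ i)) + (c 0 i + N0 0 i) := by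
    intro c x i
    simp only [cellCoord, hι, Prod.fst_add, Prod.snd_add, Pi.add_apply, σ.injective.extend_apply,
      hN0, Fin.cons_succ, Fin.cons_zero]
    have : ∀ k, x k * (A k (σ i) + c k.succ i) = x k * (c k.succ i + A k (σ i)) := fun k => by ring
    simp only [this]
    ring
  set K' : Set (Fin n → ℝ) := K ∩ {x | ε ≤ |e x|} with hK'
  have hec : Continuous e := by
    rw [he]; unfold cellCoord; fun_prop
  have hK'c : IsCompact K' := hKc.inter_right (isClosed_le continuous_const hec.abs)
  obtain ⟨Λ, hΛ0, hΛ⟩ := cellCoord_lipschitz A τ q j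
  obtain ⟨⟨c1, hc1⟩, C, hC0, hC⟩ := projMap_bilipschitz hΛ0 hΛ hK'c hε (fun x hx => hx.2)
  have himc : IsCompact (projMap e '' K') := hK'c.image_of_continuousOn hc1.continuousOn
  have himf : μH[(d:ℝ)] (projMap e '' K') ≠ ⊤ := by
    refine ne_top_of_le_ne_top ?_ (hc1.hausdorffMeasure_image_le (d := (d:ℝ)) (by positivity))
    refine ENNReal.mul_ne_top (by simp) (measure_ne_top_of_subset inter_subset_left hK)
  have hae := ae_image_null hd himc himf
    ((hPU.mono inter_subset_left).image hc1 hC0 hC)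
  have hae2 : ∀ᵐ c : Fin (n+1) → Fin d → ℝ, volume (colMap (c + N0) '' (projMap e '' K')) = 0 :=
    (measurePreserving_add_right volume N0).quasiMeasurePreserving.ae hae
  filter_upwards [hae2] with c hc
  simp only [not_not]
  refine measure_mono_null ?_ hc
  rintro b ⟨x, hxK, hxε, hb⟩
  rw [hej] at hxε
  refine ⟨projMap e x, ⟨x, ⟨hxK, hxε⟩, rfl⟩, ?_⟩
  have hex : e x ≠ 0 := by
    intro h0
    rw [h0, abs_zero] at hxε
    linarith
  ext i
  have h1 := hb i
  rw [hej, hei] at h1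
  rw [colMap_apply, Fin.sum_univ_succ]
  simp only [projMap, Fin.cons_zero, Fin.cons_succ, Pi.add_apply, Finset.sum_apply,
    Pi.smul_apply, smul_eq_mul]
  rw [← mul_left_inj' hex, h1, add_mul, Finset.sum_mul, add_comm]
  congr 1
  · refine Finset.sum_congr rfl fun k _ => ?_
    field_simp
  · field_simp

/-! ### The grid retraction -/

/-- Twice the distance from `t` to the centre of the integer interval containing it. -/
def cdist (t : ℝ) : ℝ := 2 * |Int.fract t - 1/2|

lemma cdist_nonneg (t : ℝ) : 0 ≤ cdist t := by unfold cdist; positivity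

lemma cdist_le_one (t : ℝ) : cdist t ≤ 1 := by
  have h0 := Int.fract_nonneg t
  have h1 := Int.fract_lt_one t
  have : |Int.fract t - 1/2| ≤ 1/2 := abs_le.2 ⟨by linarith, by linarith⟩
  unfold cdist; linarith

lemma cdist_eq_round (t : ℝ) : cdist t = 1 - 2 * |t - round t| := by
  rw [abs_sub_round_eq_min, cdist]
  rcases le_total (Int.fract t) (1/2) with h | h
  · rw [min_eq_left (by linarith), abs_of_nonpos (by linarith)]; ring
  · rw [min_eq_right (by linarith), abs_of_nonneg (by linarith)]; ring

lemma abs_cdist_sub_le (t t' : ℝ) : |cdist t - cdist t'| ≤ 2 * |t - t'| := by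
  have key : ∀ s s' : ℝ, |s - round s| ≤ |s - s'| + |s' - round s'| := fun s s' =>
    (round_le s (round s')).trans (abs_sub_le _ _ _)
  have h1 := key t t'
  have h2 := key t' t
  rw [abs_sub_comm t' t] at h2
  rw [cdist_eq_round, cdist_eq_round, abs_le]
  constructor <;> linarith

/-- In each integer interval, the retraction that expands the middle part of length `b` linearly
onto the interval and sends the rest to the endpoints. -/
def gridMap (t b : ℝ) : ℝ := ⌊t⌋ + 1/2 + max (-(b/2)) (min (b/2) (Int.fract t - 1/2)) / b

lemma gridMap_one (t : ℝ) : gridMap t 1 = t := by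
  have h0 := Int.fract_nonneg t
  have h1 := Int.fract_lt_one t
  rw [gridMap, min_eq_right (by linarith), max_eq_right (by linarith)]
  have := Int.floor_add_fract t
  linarith

lemma gridMap_ge {t b : ℝ} (hb : 0 < b) : (⌊t⌋ : ℝ) ≤ gridMap t b := by
  have : -(1/2) ≤ max (-(b/2)) (min (b/2) (Int.fract t - 1/2)) / b := by
    rw [le_div_iff₀ hb]
    have := le_max_left (-(b/2)) (min (b/2) (Int.fract t - 1/2))
    linarith
  unfold gridMap; linarith

lemma gridMap_le {t b : ℝ} (hb : 0 < b) : gridMap t b ≤ (⌊t⌋ : ℝ) + 1 := by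
  have : max (-(b/2)) (min (b/2) (Int.fract t - 1/2)) / b ≤ 1/2 := by
    rw [div_le_iff₀ hb]
    have := max_le (show -(b/2) ≤ b/2 by linarith) (min_le_left (b/2) (Int.fract t - 1/2))
    linarith
  unfold gridMap; linarith

lemma gridMap_sub_floor_le {t b β : ℝ} (hβ : 0 < β) (hb : β ≤ b) (hb1 : b ≤ 1) :
    gridMap t b - ⌊t⌋ ≤ Int.fract t / β := by
  have hb0 : 0 < b := hβ.trans_le hb
  have h0 := Int.fract_nonneg t
  have h1 := Int.fract_lt_one t
  have h2 : gridMap t b - ⌊t⌋ ≤ Int.fract t / b := by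
    rw [gridMap, le_div_iff₀ hb0]
    have h3 : max (-(b/2)) (min (b/2) (Int.fract t - 1/2)) ≤ Int.fract t - b/2 :=
      max_le (by linarith) ((min_le_right _ _).trans (by linarith))
    have h4 : (⌊t⌋ + 1/2 + max (-(b/2)) (min (b/2) (Int.fract t - 1/2)) / b - ⌊t⌋) * b =
      b / 2 + max (-(b/2)) (min (b/2) (Int.fract t - 1/2)) := by field_simp; ring
    rw [h4]; linarith
  exact h2.trans (by gcongr)

lemma floor_add_one_sub_gridMap_le {t b β : ℝ} (hβ : 0 < β) (hb : β ≤ b) (hb1 : b ≤ 1) :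
    ⌊t⌋ + 1 - gridMap t b ≤ (1 - Int.fract t) / β := by
  have hb0 : 0 < b := hβ.trans_le hb
  have h0 := Int.fract_nonneg t
  have h1 := Int.fract_lt_one t
  have h2 : ⌊t⌋ + 1 - gridMap t b ≤ (1 - Int.fract t) / b := by
    rw [gridMap, le_div_iff₀ hb0]
    have h3 : b/2 - (1 - Int.fract t) ≤ max (-(b/2)) (min (b/2) (Int.fract t - 1/2)) := by
      rcases le_total (b/2) (Int.fract t - 1/2) with h | h
      · rw [min_eq_left h]; exact le_max_of_le_right (by linarith)
      · rw [min_eq_right h]; exact le_max_of_le_right (by linarith)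
    have h4 : (⌊t⌋ + 1 - (⌊t⌋ + 1/2 + max (-(b/2)) (min (b/2) (Int.fract t - 1/2)) / b)) * b =
      b / 2 - max (-(b/2)) (min (b/2) (Int.fract t - 1/2)) := by field_simp; ring
    rw [h4]; linarith
  exact h2.trans (div_le_div_of_nonneg_left (by linarith) hβ hb)

lemma gridMap_sub_of_floor_lt {t t' b b' β : ℝ} (hβ : 0 < β) (hb : β ≤ b) (hb1 : b ≤ 1)
    (hb' : β ≤ b') (hb1' : b' ≤ 1) (hlt : ⌊t⌋ < ⌊t'⌋) :
    |gridMap t b - gridMap t' b'| ≤ |t - t'| / β := by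
  have hfl : (⌊t⌋ : ℝ) + 1 ≤ ⌊t'⌋ := by exact_mod_cast hlt
  have h1 := gridMap_le (t := t) (hβ.trans_le hb)
  have h2 := gridMap_ge (t := t') (hβ.trans_le hb')
  have h3 := gridMap_sub_floor_le (t := t') hβ hb' hb1'
  have h4 := floor_add_one_sub_gridMap_le (t := t) hβ hb hb1
  have h5 : (⌊t'⌋ : ℝ) - (⌊t⌋ + 1) ≤ (⌊t'⌋ - (⌊t⌋ + 1)) / β :=
    le_div_self (by linarith) hβ (hb.trans hb1)
  have e1 := Int.floor_add_fract t
  have e2 := Int.floor_add_fract t'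
  have f1 := Int.fract_lt_one t
  have f2 := Int.fract_nonneg t'
  rw [abs_of_nonpos (by linarith), abs_of_nonpos (by linarith)]
  have h6 : -(t - t') / β = Int.fract t' / β + (⌊t'⌋ - (⌊t⌋ + 1)) / β + (1 - Int.fract t) / β := by
    rw [← add_div, ← add_div]; congr 1; linarith
  rw [h6]; linarith

/-- The grid retraction is Lipschitz with constant `1/β` jointly in `(t, b)` where `b ≥ β`. -/
lemma abs_gridMap_sub_le {t t' b b' β : ℝ} (hβ : 0 < β) (hb : β ≤ b) (hb1 : b ≤ 1)
    (hb' : β ≤ b') (hb1' : b' ≤ 1) :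
    |gridMap t b - gridMap t' b'| ≤ (|t - t'| + |b - b'|) / β := by
  have hmono : |t - t'| / β ≤ (|t - t'| + |b - b'|) / β := by
    gcongr; linarith [abs_nonneg (b - b')]
  rcases lt_trichotomy ⌊t⌋ ⌊t'⌋ with hlt | heq | hgt
  · exact (gridMap_sub_of_floor_lt hβ hb hb1 hb' hb1' hlt).trans hmono
  · have hb0 : 0 < b := hβ.trans_le hb
    have hb0' : 0 < b' := hβ.trans_le hb'
    set u := Int.fract t - 1/2 with hu
    set u' := Int.fract t' - 1/2 with hu'
    have huu : u - u' = t - t' := by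
      rw [hu, hu', Int.fract, Int.fract, heq]; ring
    set p := max (-(b/2)) (min (b/2) u) with hp
    set p' := max (-(b'/2)) (min (b'/2) u') with hp'
    have hpp : |p - p'| ≤ |t - t'| + |b - b'| / 2 := by
      have h1 := abs_max_sub_max_le_max (-(b/2)) (min (b/2) u) (-(b'/2)) (min (b'/2) u')
      have h2 := abs_min_sub_min_le_max (b/2) u (b'/2) u'
      have h3 : |b/2 - b'/2| = |b - b'|/2 := by
        rw [← sub_div, abs_div, abs_two]
      have h4 : |-(b/2) - -(b'/2)| = |b - b'|/2 := by
        rw [← h3, ← abs_neg]; congr 1; ring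
      rw [h3, huu] at h2
      rw [h4] at h1
      have a1 := abs_nonneg (t - t')
      have a2 := abs_nonneg (b - b')
      refine h1.trans (max_le (by linarith) (h2.trans (max_le (by linarith) (by linarith))))
    have hp1 : |p' / b'| ≤ 1/2 := by
      rw [abs_div, abs_of_pos hb0', div_le_iff₀ hb0', abs_le]
      constructor
      · have := le_max_left (-(b'/2)) (min (b'/2) u')
        linarith
      · have := max_le (show -(b'/2) ≤ b'/2 by linarith) (min_le_left (b'/2) u')
        linarith
    have hG : gridMap t b - gridMap t' b' = ((p - p') + (p' / b') * (b' - b)) / b := by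
      simp only [gridMap, ← hu, ← hu', ← hp, ← hp', heq]
      field_simp
      ring
    rw [hG, abs_div, abs_of_pos hb0]
    have h7 : |(p - p') + (p' / b') * (b' - b)| ≤ |t - t'| + |b - b'| := by
      refine (abs_add_le _ _).trans ?_
      rw [abs_mul, abs_sub_comm b' b]
      have := mul_le_mul_of_nonneg_right hp1 (abs_nonneg (b - b'))
      linarith
    have h8 : 0 ≤ |t - t'| + |b - b'| := by positivity
    gcongr
  · rw [abs_sub_comm, abs_sub_comm t t'] at *
    exact (gridMap_sub_of_floor_lt hβ hb' hb1' hb hb1 hgt).trans (by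
      rw [abs_sub_comm t' t] at *; exact hmono)

/-- The function `b₀` whose sublevel sets are neighbourhoods of the dual skeleton: the
`(d+1)`-st smallest of the numbers `cdist (z i)`. -/
lemma exists_skeleton_dist {n d : ℕ} (hdn : d < n) : ∃ b₀ : (Fin n → ℝ) → ℝ,
    (∀ z z', |b₀ z - b₀ z'| ≤ 2 * dist z z') ∧ (∀ z, 0 ≤ b₀ z) ∧ (∀ z, b₀ z ≤ 1) ∧
    (∀ z, ∃ j : Fin n, ∃ I : Finset (Fin n), I.card = d ∧ j ∉ I ∧ b₀ z = cdist (z j) ∧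
      ∀ i, cdist (z i) < b₀ z → i ∈ I) ∧
    (∀ z δ, b₀ z ≤ δ → ∃ I ∈ Finset.powersetCard (d+1) (Finset.univ : Finset (Fin n)),
      ∀ i ∈ I, cdist (z i) ≤ δ) := by
  classical
  set S := Finset.powersetCard (d+1) (Finset.univ : Finset (Fin n)) with hS
  have hSne : S.Nonempty := Finset.powersetCard_nonempty.2 (by simpa using hdn)
  have hSI : ∀ I ∈ S, I.card = d + 1 := fun I hI => (Finset.mem_powersetCard.1 hI).2
  have hex : ∀ z : Fin n → ℝ, ∃ b : ℝ, (∃ I ∈ S, (∀ i ∈ I, cdist (z i) ≤ b) ∧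
      ∃ j ∈ I, b = cdist (z j)) ∧ ∀ I ∈ S, ∃ j ∈ I, b ≤ cdist (z j) := by
    intro z
    have hmax : ∀ I : Finset (Fin n), ∃ c : ℝ, I ∈ S →
        (∀ i ∈ I, cdist (z i) ≤ c) ∧ ∃ j ∈ I, c = cdist (z j) := by
      intro I
      by_cases hI : I ∈ S
      · obtain ⟨j, hj, hjm⟩ := I.exists_max_image (fun i => cdist (z i))
          (Finset.card_pos.1 (by rw [hSI I hI]; omega))
        exact ⟨cdist (z j), fun _ => ⟨hjm, j, hj, rfl⟩⟩
      · exact ⟨0, fun h => absurd h hI⟩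
    choose c hc using hmax
    obtain ⟨I, hI, hmin⟩ := S.exists_min_image c hSne
    refine ⟨c I, ⟨I, hI, hc I hI⟩, fun I' hI' => ?_⟩
    obtain ⟨j, hj, hjc⟩ := (hc I' hI').2
    exact ⟨j, hj, hjc ▸ hmin I' hI'⟩
  choose b₀ h1 h2 using hex
  have hone : ∀ z z', b₀ z ≤ b₀ z' + 2 * dist z z' := by
    intro z z'
    obtain ⟨I, hI, hle, -⟩ := h1 z'
    obtain ⟨j, hj, hjb⟩ := h2 z I hI
    have h3 := hle j hj
    have h4 := (abs_le.1 (abs_cdist_sub_le (z j) (z' j))).2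
    have h5 := dist_le_pi_dist z z' j
    rw [Real.dist_eq] at h5
    linarith
  refine ⟨b₀, fun z z' => ?_, fun z => ?_, fun z => ?_, fun z => ?_, fun z δ hδ => ?_⟩
  · rw [abs_le]
    have e1 := hone z z'
    have e2 := hone z' z
    rw [dist_comm] at e2
    constructor <;> linarith
  · obtain ⟨I, hI, -, j, hj, h⟩ := h1 z
    rw [h]; exact cdist_nonneg _
  · obtain ⟨I, hI, -, j, hj, h⟩ := h1 z
    rw [h]; exact cdist_le_one _
  · obtain ⟨I, hI, -, j, hj, h⟩ := h1 z
    set J := Finset.univ.filter fun i => cdist (z i) < b₀ z with hJ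
    have hJc : J.card ≤ d := by
      by_contra hcon
      obtain ⟨I', hI'J, hI'c⟩ := Finset.exists_subset_card_eq (show d + 1 ≤ J.card by omega)
      obtain ⟨k, hk, hkb⟩ := h2 z I' (Finset.mem_powersetCard.2 ⟨Finset.subset_univ _, hI'c⟩)
      have := (Finset.mem_filter.1 (hI'J hk)).2
      linarith
    have hJj : J ⊆ Finset.univ.erase j := by
      intro i hi
      refine Finset.mem_erase.2 ⟨?_, Finset.mem_univ _⟩
      rintro rfl
      have := (Finset.mem_filter.1 hi).2
      linarith
    obtain ⟨I'', hJI, hIe, hIc⟩ := Finset.exists_subsuperset_card_eq hJj hJc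
      (by rw [Finset.card_erase_of_mem (Finset.mem_univ _), Finset.card_univ, Fintype.card_fin]
          omega)
    exact ⟨j, I'', hIc, fun hj' => (Finset.mem_erase.1 (hIe hj')).1 rfl, h,
      fun i hi => hJI (Finset.mem_filter.2 ⟨Finset.mem_univ _, hi⟩)⟩
  · obtain ⟨I, hI, hle, -⟩ := h1 z
    exact ⟨I, hI, fun i hi => (hle i hi).trans hδ⟩

lemma volume_cdist_le (s δ : ℝ) (hδ : 0 ≤ δ) :
    volume {t : ℝ | t ∈ Icc (0:ℝ) 1 ∧ cdist (s - t) ≤ δ} ≤ ENNReal.ofReal (2 * δ) := by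
  have hsub : {t : ℝ | t ∈ Icc (0:ℝ) 1 ∧ cdist (s - t) ≤ δ} ⊆
      Icc (s - ⌊s⌋ - 1/2 - δ/2) (s - ⌊s⌋ - 1/2 + δ/2) ∪
      Icc (s - ⌊s⌋ + 1/2 - δ/2) (s - ⌊s⌋ + 1/2 + δ/2) := by
    rintro t ⟨⟨ht0, ht1⟩, ht⟩
    have h1 : ⌊s - t⌋ ≤ ⌊s⌋ := Int.floor_le_floor (by linarith)
    have h2 : ⌊s⌋ - 1 ≤ ⌊s - t⌋ := by
      rw [← Int.floor_sub_one]; exact Int.floor_le_floor (by linarith)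
    have h3 : |Int.fract (s - t) - 1/2| ≤ δ / 2 := by unfold cdist at ht; linarith
    have h4 := abs_le.1 h3
    have h5 := Int.floor_add_fract (s - t)
    rcases (by omega : ⌊s - t⌋ = ⌊s⌋ ∨ ⌊s - t⌋ = ⌊s⌋ - 1) with h | h
    · left
      rw [h] at h5
      constructor <;> linarith
    · right
      rw [h] at h5
      push_cast at h5
      constructor <;> linarith
  refine (measure_mono hsub).trans ((measure_union_le _ _).trans ?_)
  rw [Real.volume_Icc, Real.volume_Icc, ← ENNReal.ofReal_add (by linarith) (by linarith)]
  apply ENNReal.ofReal_le_ofReal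
  linarith

/-- The average over all translations of the indicator of a sublevel set of `b₀`. -/
lemma volume_skeleton_nhd_le {n d : ℕ} {b₀ : (Fin n → ℝ) → ℝ}
    (hb : ∀ z δ, b₀ z ≤ δ → ∃ I ∈ Finset.powersetCard (d+1) (Finset.univ : Finset (Fin n)),
      ∀ i ∈ I, cdist (z i) ≤ δ) (z : Fin n → ℝ) {δ : ℝ} (hδ : 0 ≤ δ) :
    volume {τ : Fin n → ℝ | τ ∈ Icc (0 : Fin n → ℝ) 1 ∧ b₀ (z - τ) ≤ δ} ≤
      (2 ^ n : ℝ≥0∞) * ENNReal.ofReal (2 * δ) ^ (d+1) := by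
  classical
  set S := Finset.powersetCard (d+1) (Finset.univ : Finset (Fin n)) with hS
  set V : Finset (Fin n) → Fin n → Set ℝ := fun I i =>
    if i ∈ I then {t : ℝ | t ∈ Icc (0:ℝ) 1 ∧ cdist (z i - t) ≤ δ} else Icc 0 1 with hV
  have hsub : {τ : Fin n → ℝ | τ ∈ Icc (0 : Fin n → ℝ) 1 ∧ b₀ (z - τ) ≤ δ} ⊆
      ⋃ I ∈ S, Set.pi univ (V I) := by
    rintro τ ⟨⟨hτ0, hτ1⟩, hτ⟩
    obtain ⟨I, hI, hIδ⟩ := hb _ _ hτ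
    refine mem_iUnion₂.2 ⟨I, hI, fun i _ => ?_⟩
    by_cases hi : i ∈ I
    · simp only [hV, hi, if_true]
      exact ⟨⟨hτ0 i, hτ1 i⟩, hIδ i hi⟩
    · simp only [hV, hi, if_false]
      exact ⟨hτ0 i, hτ1 i⟩
  have hone : ∀ I ∈ S, volume (Set.pi univ (V I)) ≤ ENNReal.ofReal (2 * δ) ^ (d+1) := by
    intro I hI
    rw [volume_pi_pi]
    have : ∀ i ∈ Finset.univ, volume (V I i) ≤ if i ∈ I then ENNReal.ofReal (2 * δ) else 1 := by
      intro i _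
      by_cases hi : i ∈ I
      · simp only [hV, hi, if_true]
        exact volume_cdist_le _ _ hδ
      · simp [hV, hi]
    refine (Finset.prod_le_prod' this).trans ?_
    rw [Finset.prod_ite_mem, Finset.univ_inter, Finset.prod_const,
      (Finset.mem_powersetCard.1 hI).2]
  refine (measure_mono hsub).trans ((measure_biUnion_finset_le _ _).trans ?_)
  refine (Finset.sum_le_sum hone).trans ?_
  rw [Finset.sum_const, nsmul_eq_mul]
  gcongr
  rw [hS, Finset.card_powersetCard, Finset.card_univ, Fintype.card_fin]
  exact_mod_cast Nat.choose_le_two_pow n (d+1)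

/-! ### Deforming a purely unrectifiable set to a null set -/

/-- The linear map with matrix `A`, acting on row vectors. -/
def rowMap {n : ℕ} (A : Fin n → Fin n → ℝ) (x : Fin n → ℝ) : Fin n → ℝ := fun i => ∑ k, x k * A k i

lemma continuous_rowMap {n : ℕ} (A : Fin n → Fin n → ℝ) : Continuous (rowMap A) := by
  unfold rowMap; fun_prop

lemma abs_clamp_sub_le (s t : ℝ) : |max (-1) (min 1 s) - max (-1) (min 1 t)| ≤ |s - t| := by
  have h1 := abs_max_sub_max_le_max (-1) (min 1 s) (-1) (min 1 t)
  have h2 := abs_min_sub_min_le_max 1 s 1 t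
  simp only [sub_self, abs_zero] at h1 h2
  exact h1.trans (max_le (abs_nonneg _) (h2.trans (max_le (abs_nonneg _) le_rfl)))

/-- If the ratios of the cell coordinates of `K` are null, then the retraction of (the part of)
`K` to the `d`-skeleton of the grid is null: on each cell the retraction is a Lipschitz function
of these ratios. -/
lemma skeleton_image_null {n d : ℕ} {K : Set (Fin n → ℝ)} {A : Fin n → Fin n → ℝ}
    {τ : Fin n → ℝ} {ε : ℝ} (hε : 0 < ε)
    (hnull : ∀ (σ : Fin d ↪ Fin n) (j : Fin n) (q : Fin n → ℤ), j ∉ range σ →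
      volume {b : Fin d → ℝ | ∃ x ∈ K, ε / 2 ≤ |cellCoord A τ q j x| ∧
        ∀ i, b i * cellCoord A τ q j x = cellCoord A τ q (σ i) x} = 0)
    {b₀ : (Fin n → ℝ) → ℝ}
    (hb : ∀ z, ∃ j : Fin n, ∃ I : Finset (Fin n), I.card = d ∧ j ∉ I ∧ b₀ z = cdist (z j) ∧
      ∀ i, cdist (z i) < b₀ z → i ∈ I) :
    μH[(d:ℝ)] ((fun x i => gridMap (rowMap A x i - τ i) (b₀ (rowMap A x - τ))) ''
      {x ∈ K | ε ≤ b₀ (rowMap A x - τ)}) = 0 := by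
  classical
  set R : (Fin d ↪ Fin n) → Fin n → (Fin n → ℤ) → Set (Fin d → ℝ) := fun σ j q =>
    {b : Fin d → ℝ | ∃ x ∈ K, ε / 2 ≤ |cellCoord A τ q j x| ∧
        ∀ i, b i * cellCoord A τ q j x = cellCoord A τ q (σ i) x} with hR
  set sg : Bool → ℝ := fun s => if s then 1 else -1 with hsg
  have hsg1 : ∀ s, |sg s| = 1 := by intro s; cases s <;> simp [hsg]
  set g : (Fin d ↪ Fin n) → (Fin n → ℤ) → (Fin n → Bool) → Bool → (Fin d → ℝ) → Fin n → ℝ :=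
    fun σ q v s r i => q i + 1/2 + Function.extend σ
      (fun k => max (-1) (min 1 (sg s * r k)) / 2) (fun i => sg (v i) / 2) i with hg
  have hglip : ∀ σ q v s, LipschitzWith 1 (g σ q v s) := by
    intro σ q v s
    refine LipschitzWith.of_dist_le_mul fun r r' => ?_
    rw [NNReal.coe_one, one_mul, dist_pi_le_iff dist_nonneg]
    intro i
    simp only [hg, Real.dist_eq, add_sub_add_left_eq_sub]
    by_cases hi : ∃ k, σ k = i
    · obtain ⟨k, rfl⟩ := hi
      rw [σ.injective.extend_apply, σ.injective.extend_apply, ← sub_div, abs_div, abs_two]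
      have h1 := abs_clamp_sub_le (sg s * r k) (sg s * r' k)
      rw [← mul_sub, abs_mul, hsg1, one_mul] at h1
      have h2 := dist_le_pi_dist r r' k
      rw [Real.dist_eq] at h2
      linarith [abs_nonneg (r k - r' k)]
    · rw [Function.extend_apply' _ _ _ hi, Function.extend_apply' _ _ _ hi, sub_self, abs_zero]
      exact dist_nonneg
  have hsub : ((fun x i => gridMap (rowMap A x i - τ i) (b₀ (rowMap A x - τ))) ''
      {x ∈ K | ε ≤ b₀ (rowMap A x - τ)}) ⊆
      ⋃ σ : Fin d ↪ Fin n, ⋃ j, ⋃ q, ⋃ v, ⋃ s, ⋃ (_ : j ∉ range σ), g σ q v s '' R σ j q := by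
    rintro _ ⟨x, ⟨hxK, hxε⟩, rfl⟩
    set z := rowMap A x - τ with hz
    obtain ⟨j, I, hIc, hjI, hbj, hI⟩ := hb z
    set q : Fin n → ℤ := fun i => ⌊z i⌋ with hq
    have hu : ∀ i, cellCoord A τ q i x = Int.fract (z i) - 1/2 := by
      intro i
      simp only [cellCoord, hq, Int.fract]
      simp only [hz, Pi.sub_apply, rowMap]
    set u : Fin n → ℝ := fun i => Int.fract (z i) - 1/2 with hu'
    have hcd : ∀ i, cdist (z i) = 2 * |u i| := fun i => rfl
    set σ : Fin d ↪ Fin n := (I.orderEmbOfFin hIc).toEmbedding with hσ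
    have hσr : range σ = I := by
      rw [hσ]; exact Finset.range_orderEmbOfFin I hIc
    have huj : 0 < |u j| := by
      rw [hbj, hcd] at hxε; linarith
    have huj0 : u j ≠ 0 := abs_pos.1 huj
    simp only [mem_iUnion]
    refine ⟨σ, j, q, fun i => decide (0 ≤ u i), decide (0 ≤ u j),
      by rw [hσr]; exact hjI, fun k => u (σ k) / u j, ⟨x, hxK, ?_, fun k => ?_⟩, ?_⟩
    · rw [hu]
      rw [hbj, hcd] at hxε
      change ε / 2 ≤ |u j|
      linarith
    · rw [hu, hu]
      change u (σ k) / u j * u j = u (σ k)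
      field_simp
    · have hsabs : ∀ t : ℝ, sg (decide (0 ≤ t)) * |t| = t := by
        intro t
        by_cases ht : 0 ≤ t
        · simp [hsg, ht, abs_of_nonneg ht]
        · simp [hsg, ht, abs_of_neg (not_le.1 ht)]
      funext i
      change _ = gridMap (z i) (b₀ z)
      have hB : b₀ z / 2 = |u j| := by rw [hbj, hcd]; ring
      have hB' : b₀ z = 2 * |u j| := by rw [hbj, hcd]
      simp only [hg, gridMap]
      congr 1
      change _ = max (-(b₀ z / 2)) (min (b₀ z / 2) (u i)) / b₀ z
      rw [hB, hB']
      by_cases hi : ∃ k, σ k = i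
      · obtain ⟨k, rfl⟩ := hi
        rw [σ.injective.extend_apply]
        have h1 : sg (decide (0 ≤ u j)) * (u (σ k) / u j) = u (σ k) / |u j| := by
          have h2 := hsabs (u j)
          have h3 : sg (decide (0 ≤ u j)) * sg (decide (0 ≤ u j)) = 1 := by
            rw [← abs_mul_abs_self, hsg1, one_mul]
          rw [mul_div_assoc', div_eq_div_iff huj0 huj.ne']
          calc sg (decide (0 ≤ u j)) * u (σ k) * |u j| = u (σ k) * (sg (decide (0 ≤ u j)) * |u j|) := by ring
            _ = u (σ k) * u j := by rw [h2]
        rw [h1]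
        have h4 : max (-|u j|) (min |u j| (u (σ k))) = |u j| * max (-1) (min 1 (u (σ k) / |u j|)) := by
          rw [mul_max_of_nonneg _ _ huj.le, mul_min_of_nonneg _ _ huj.le]
          congr 1
          · ring
          · rw [mul_one, mul_div_cancel₀ _ huj.ne']
        rw [h4]
        field_simp
      · rw [Function.extend_apply' _ _ _ hi]
        have hiI : i ∉ I := fun h => hi (by
          have : i ∈ range σ := by rw [hσr]; exact h
          exact this)
        have h5 : |u j| ≤ |u i| := by
          by_contra hlt
          exact hiI (hI i (by rw [hcd, hB']; linarith))
        have h6 : max (-|u j|) (min |u j| (u i)) = sg (decide (0 ≤ u i)) * |u j| := by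
          by_cases hui : 0 ≤ u i
          · rw [abs_of_nonneg hui] at h5
            rw [min_eq_left h5, max_eq_right (by linarith)]
            simp [hsg, hui]
          · rw [abs_of_neg (not_le.1 hui)] at h5
            rw [min_eq_right (by linarith), max_eq_left (by linarith)]
            simp [hsg, hui]
        rw [h6]
        field_simp
  refine measure_mono_null hsub ?_
  refine measure_iUnion_null fun σ => measure_iUnion_null fun j => measure_iUnion_null fun q =>
    measure_iUnion_null fun v => measure_iUnion_null fun s => measure_iUnion_null fun hj => ?_
  have h := ((hglip σ q v s).lipschitzOnWith (s := R σ j q)).hausdorffMeasure_image_le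
    (d := (d:ℝ)) (by positivity)
  rw [hausdorff_pi_eq_volume, hnull σ j q hj, mul_zero] at h
  exact le_antisymm h bot_le

/-- A matrix close to `A₀` for which, after almost every translation of the grid, all the cell
ratios of `K` have null image. -/
lemma exists_good_matrix {n d : ℕ} (hd : 1 ≤ d) {K : Set (Fin n → ℝ)} (hKc : IsCompact K)
    (hK : μH[(d:ℝ)] K ≠ ⊤) (hPU : PurelyUnrect d K) {ε : ℝ} (hε : 0 < ε)
    (A₀ : Fin n → Fin n → ℝ) {ρ : ℝ} (hρ : 0 < ρ) :
    ∃ A : Fin n → Fin n → ℝ, dist A A₀ < ρ ∧ ∀ᵐ τ : Fin n → ℝ,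
      ∀ (σ : Fin d ↪ Fin n) (j : Fin n) (q : Fin n → ℤ), j ∉ range σ →
      volume {b : Fin d → ℝ | ∃ x ∈ K, ε ≤ |cellCoord A τ q j x| ∧
        ∀ i, b i * cellCoord A τ q j x = cellCoord A τ q (σ i) x} = 0 := by
  have hae : ∀ᵐ w : (Fin n → Fin n → ℝ) × (Fin n → ℝ),
      ∀ (σ : Fin d ↪ Fin n) (j : Fin n) (q : Fin n → ℤ), j ∉ range σ →
      volume {b : Fin d → ℝ | ∃ x ∈ K, ε ≤ |cellCoord w.1 w.2 q j x| ∧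
        ∀ i, b i * cellCoord w.1 w.2 q j x = cellCoord w.1 w.2 q (σ i) x} = 0 := by
    rw [ae_all_iff]; intro σ
    rw [ae_all_iff]; intro j
    rw [ae_all_iff]; intro q
    by_cases hj : j ∈ range σ
    · exact Eventually.of_forall fun w h => absurd hj h
    · filter_upwards [ae_ratio_null hd hKc hK hPU σ j hj q hε] with w hw _
      exact hw
  have h2 := Measure.ae_ae_of_ae_prod (μ := (volume : Measure (Fin n → Fin n → ℝ)))
    (ν := (volume : Measure (Fin n → ℝ))) hae
  obtain ⟨A, hA, hAdist⟩ := (Measure.dense_of_ae h2).exists_mem_open isOpen_ball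
    ⟨A₀, mem_ball_self hρ⟩
  exact ⟨A, hAdist, hA⟩

/-- A matrix close to `w⁻¹ • 1` gives a bilipschitz map with constants comparable to `w⁻¹`. -/
lemma rowMap_near {n : ℕ} (hn : 1 ≤ n) {w : ℝ} (hw : 0 < w) {A : Fin n → Fin n → ℝ}
    (hA : dist A (fun k i => if k = i then w⁻¹ else 0) < 1 / (2 * w * n)) :
    (∀ x y, dist (rowMap A x) (rowMap A y) ≤ 2 / w * dist x y) ∧
    ∃ B : (Fin n → ℝ) → (Fin n → ℝ), (∀ x, B (rowMap A x) = x) ∧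
      ∀ y y', dist (B y) (B y') ≤ 2 * w * dist y y' := by
  have hn0 : (0:ℝ) < n := by exact_mod_cast hn
  have key : ∀ x i, |rowMap A x i - x i / w| ≤ ‖x‖ / (2 * w) := by
    intro x i
    have h1 : rowMap A x i - x i / w = ∑ k, x k * (A k i - if k = i then w⁻¹ else 0) := by
      simp only [mul_sub, Finset.sum_sub_distrib, rowMap, mul_ite, mul_zero]
      rw [Finset.sum_ite_eq' Finset.univ i]
      simp [div_eq_mul_inv]
    rw [h1]
    calc |∑ k, x k * (A k i - if k = i then w⁻¹ else 0)|
        ≤ ∑ k, |x k * (A k i - if k = i then w⁻¹ else 0)| := Finset.abs_sum_le_sum_abs _ _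
      _ ≤ ∑ _k : Fin n, ‖x‖ * (1 / (2 * w * n)) := by
          refine Finset.sum_le_sum fun k _ => ?_
          rw [abs_mul]
          have h2 := norm_le_pi_norm x k
          have h3 := (dist_le_pi_dist (A k) (fun i => if k = i then w⁻¹ else 0) i).trans
            ((dist_le_pi_dist A (fun k i => if k = i then w⁻¹ else 0) k).trans hA.le)
          rw [Real.dist_eq] at h3
          rw [Real.norm_eq_abs] at h2
          gcongr
      _ = ‖x‖ / (2 * w) := by
          rw [Finset.sum_const, Finset.card_univ, Fintype.card_fin, nsmul_eq_mul]
          field_simp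
  have hup : ∀ x, ‖rowMap A x‖ ≤ 2 / w * ‖x‖ := by
    intro x
    rw [pi_norm_le_iff_of_nonneg (by positivity)]
    intro i
    have h1 := key x i
    have h2 := abs_sub_abs_le_abs_sub (rowMap A x i) (x i / w)
    have h3 : |x i / w| ≤ ‖x‖ / w := by
      rw [abs_div, abs_of_pos hw]
      have := norm_le_pi_norm x i
      rw [Real.norm_eq_abs] at this
      gcongr
    rw [Real.norm_eq_abs]
    have h4 : ‖x‖ / (2 * w) ≤ ‖x‖ / w := by gcongr; linarith
    have h5 : 2 / w * ‖x‖ = ‖x‖ / w + ‖x‖ / w := by ring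
    linarith
  have hlow : ∀ x, ‖x‖ ≤ 2 * w * ‖rowMap A x‖ := by
    intro x
    have h1 : ‖x‖ ≤ w * ‖rowMap A x‖ + ‖x‖ / 2 := by
      rw [pi_norm_le_iff_of_nonneg (by positivity)]
      intro i
      have h1 := key x i
      have h2 := abs_sub_abs_le_abs_sub (x i / w) (rowMap A x i)
      rw [abs_sub_comm] at h2
      have h3 := norm_le_pi_norm (rowMap A x) i
      rw [Real.norm_eq_abs] at h3 ⊢
      have h4 : |x i / w| ≤ ‖rowMap A x‖ + ‖x‖ / (2 * w) := by linarith
      rw [abs_div, abs_of_pos hw, div_le_iff₀ hw] at h4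
      have h5 : (‖rowMap A x‖ + ‖x‖ / (2 * w)) * w = w * ‖rowMap A x‖ + ‖x‖ / 2 := by
        field_simp
      linarith
    linarith
  set Lm : (Fin n → ℝ) →ₗ[ℝ] (Fin n → ℝ) :=
    { toFun := rowMap A
      map_add' := fun x y => by
        funext i; simp [rowMap, add_mul, Finset.sum_add_distrib]
      map_smul' := fun c x => by
        funext i; simp [rowMap, Finset.mul_sum, mul_assoc] } with hLm
  have hLA : ∀ x, Lm x = rowMap A x := fun x => rfl
  have hinj : Function.Injective Lm := by
    rw [injective_iff_map_eq_zero]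
    intro x hx
    have := hlow x
    rw [← hLA, hx, norm_zero, mul_zero] at this
    exact norm_le_zero_iff.1 this
  refine ⟨fun x y => ?_, (LinearEquiv.ofInjectiveEndo Lm hinj).symm, fun x => ?_, fun y y' => ?_⟩
  · rw [dist_eq_norm, dist_eq_norm, ← hLA, ← hLA, ← map_sub]
    exact hup _
  · rw [← hLA, ← LinearEquiv.coe_ofInjectiveEndo Lm hinj]
    exact LinearEquiv.symm_apply_apply _ _
  · rw [dist_eq_norm, dist_eq_norm, ← map_sub]
    refine (hlow _).trans (le_of_eq ?_)
    rw [← hLA, ← LinearEquiv.coe_ofInjectiveEndo Lm hinj]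
    congr 2
    exact LinearEquiv.apply_symm_apply _ _

/-- Fubini: the part of `F` near the dual skeleton of a random translate of the grid. -/
lemma lintegral_skeleton_le {n d : ℕ} {b₀ : (Fin n → ℝ) → ℝ} (hbc : Continuous b₀)
    (hb : ∀ z δ, b₀ z ≤ δ → ∃ I ∈ Finset.powersetCard (d+1) (Finset.univ : Finset (Fin n)),
      ∀ i ∈ I, cdist (z i) ≤ δ) (A : Fin n → Fin n → ℝ) {F : Set (Fin n → ℝ)}
    (hFt : μH[(d:ℝ)] F ≠ ⊤) {δ : ℝ} (hδ : 0 ≤ δ) :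
    Measurable (fun τ => μH[(d:ℝ)] (F ∩ {x | b₀ (rowMap A x - τ) ≤ δ})) ∧
    ∫⁻ τ in Icc (0 : Fin n → ℝ) 1, μH[(d:ℝ)] (F ∩ {x | b₀ (rowMap A x - τ) ≤ δ}) ≤
      (2 ^ n : ℝ≥0∞) * ENNReal.ofReal (2 * δ) ^ (d+1) * μH[(d:ℝ)] F := by
  set ν : Measure (Fin n → ℝ) := μH[(d:ℝ)].restrict F with hν
  have hνf : IsFiniteMeasure ν := ⟨by rw [hν, Measure.restrict_apply_univ]; exact hFt.lt_top⟩
  set s : Set ((Fin n → ℝ) × (Fin n → ℝ)) := {z | b₀ (rowMap A z.2 - z.1) ≤ δ} with hs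
  have hsm : MeasurableSet s := by
    refine (isClosed_le (hbc.comp ?_) continuous_const).measurableSet
    exact ((continuous_rowMap A).comp continuous_snd).sub continuous_fst
  have heq : ∀ τ, μH[(d:ℝ)] (F ∩ {x | b₀ (rowMap A x - τ) ≤ δ}) = ν (Prod.mk τ ⁻¹' s) := by
    intro τ
    rw [hν, Measure.restrict_apply (measurable_prodMk_left hsm), inter_comm]
    rfl
  simp only [heq]
  refine ⟨measurable_measure_prodMk_left hsm, ?_⟩
  rw [← Measure.prod_apply hsm, Measure.prod_apply_symm hsm]
  calc ∫⁻ x, (volume.restrict (Icc (0 : Fin n → ℝ) 1)) ((fun τ => (τ, x)) ⁻¹' s) ∂ν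
      ≤ ∫⁻ _x, (2 ^ n : ℝ≥0∞) * ENNReal.ofReal (2 * δ) ^ (d+1) ∂ν := by
        refine lintegral_mono fun x => ?_
        rw [Measure.restrict_apply (measurable_prodMk_right hsm), inter_comm]
        exact volume_skeleton_nhd_le hb (rowMap A x) hδ
    _ = _ := by rw [lintegral_const, hν, Measure.restrict_apply_univ]

lemma hausdorff_image_le_of_lip {n d : ℕ} {φ : (Fin n → ℝ) → (Fin n → ℝ)} {S : Set (Fin n → ℝ)}
    {Λ : ℝ≥0} (h : ∀ x ∈ S, ∀ y ∈ S, dist (φ x) (φ y) ≤ Λ * dist x y) :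
    μH[(d:ℝ)] (φ '' S) ≤ (Λ:ℝ≥0∞) ^ d * μH[(d:ℝ)] S := by
  simpa using (LipschitzOnWith.of_dist_le_mul h).hausdorffMeasure_image_le (d := (d:ℝ))
    (by positivity)

/-- The deformation map: it retracts to the `d`-skeleton of the grid of mesh about `w` in the
inner ball, and interpolates to the identity near the boundary of `closedBall x₀ r`. -/
def deform {n : ℕ} (b₀ : (Fin n → ℝ) → ℝ) (A : Fin n → Fin n → ℝ)
    (B : (Fin n → ℝ) → (Fin n → ℝ)) (x₀ : Fin n → ℝ) (r w ε : ℝ) (τ x : Fin n → ℝ) : Fin n → ℝ :=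
  B ((fun i => gridMap (rowMap A x i - τ i)
    (max ε (1 - max 0 (min 1 ((r - dist x x₀) / w)) * (1 - b₀ (rowMap A x - τ))))) + τ)

/-- The basic properties of `deform`, in terms of the stretching parameter `b`. -/
lemma deform_props {n : ℕ} {b₀ : (Fin n → ℝ) → ℝ}
    (hb1 : ∀ z z', |b₀ z - b₀ z'| ≤ 2 * dist z z') (hb0 : ∀ z, 0 ≤ b₀ z) (hb2 : ∀ z, b₀ z ≤ 1)
    {A : Fin n → Fin n → ℝ} {w : ℝ} (hw : 0 < w)
    (hA : ∀ x y, dist (rowMap A x) (rowMap A y) ≤ 2 / w * dist x y)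
    {B : (Fin n → ℝ) → (Fin n → ℝ)} (hB : ∀ x, B (rowMap A x) = x)
    (hB' : ∀ y y', dist (B y) (B y') ≤ 2 * w * dist y y') (x₀ : Fin n → ℝ) (r : ℝ) {ε : ℝ}
    (hε1 : ε ≤ 1) (τ : Fin n → ℝ) :
    ∃ b : (Fin n → ℝ) → ℝ, (∀ x, ε ≤ b x) ∧ (∀ x, b x ≤ 1) ∧
      (∀ x, b₀ (rowMap A x - τ) ≤ b x) ∧
      (∀ x ∈ closedBall x₀ (r - w), ε ≤ b₀ (rowMap A x - τ) → b x = b₀ (rowMap A x - τ)) ∧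
      (∀ x, deform b₀ A B x₀ r w ε τ x = B ((fun i => gridMap (rowMap A x i - τ i) (b x)) + τ)) ∧
      (∀ x ∉ closedBall x₀ r, deform b₀ A B x₀ r w ε τ x = x) ∧
      ∀ β, 0 < β → ∀ x y, β ≤ b x → β ≤ b y →
        dist (deform b₀ A B x₀ r w ε τ x) (deform b₀ A B x₀ r w ε τ y) ≤ 14 / β * dist x y := by
  set χ : (Fin n → ℝ) → ℝ := fun x => max 0 (min 1 ((r - dist x x₀) / w)) with hχ
  have hχ0 : ∀ x, 0 ≤ χ x := fun x => le_max_left _ _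
  have hχ1 : ∀ x, χ x ≤ 1 := fun x => max_le zero_le_one (min_le_left _ _)
  have hχl : ∀ x y, |χ x - χ y| ≤ 1 / w * dist x y := by
    intro x y
    have h1 := abs_max_sub_max_le_max 0 (min 1 ((r - dist x x₀) / w)) 0 (min 1 ((r - dist y x₀) / w))
    have h2 := abs_min_sub_min_le_max 1 ((r - dist x x₀) / w) 1 ((r - dist y x₀) / w)
    simp only [sub_self, abs_zero] at h1 h2
    have h3 : |(r - dist x x₀) / w - (r - dist y x₀) / w| ≤ 1 / w * dist x y := by
      rw [← sub_div, abs_div, abs_of_pos hw, one_div_mul_eq_div]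
      gcongr
      rw [sub_sub_sub_cancel_left, dist_comm x y]
      exact abs_dist_sub_le y x x₀
    have h4 : 0 ≤ 1 / w * dist x y := by positivity
    exact h1.trans (max_le h4 (h2.trans (max_le h4 h3)))
  set β₀ : (Fin n → ℝ) → ℝ := fun x => b₀ (rowMap A x - τ) with hβ₀
  have hβ₀l : ∀ x y, |β₀ x - β₀ y| ≤ 4 / w * dist x y := by
    intro x y
    have h1 := hb1 (rowMap A x - τ) (rowMap A y - τ)
    rw [dist_sub_right] at h1
    have h2 := hA x y
    calc |β₀ x - β₀ y| ≤ 2 * (2 / w * dist x y) := h1.trans (by linarith)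
      _ = _ := by ring
  set b : (Fin n → ℝ) → ℝ := fun x => max ε (1 - χ x * (1 - β₀ x)) with hb
  have hbl : ∀ x y, |b x - b y| ≤ 5 / w * dist x y := by
    intro x y
    have h1 := abs_max_sub_max_le_max ε (1 - χ x * (1 - β₀ x)) ε (1 - χ y * (1 - β₀ y))
    simp only [sub_self, abs_zero] at h1
    have h4 : 0 ≤ 5 / w * dist x y := by positivity
    refine h1.trans (max_le h4 ?_)
    have h5 : 1 - χ x * (1 - β₀ x) - (1 - χ y * (1 - β₀ y)) =
      χ x * (β₀ x - β₀ y) + (χ y - χ x) * (1 - β₀ y) := by ring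
    rw [h5]
    refine (abs_add_le _ _).trans ?_
    rw [abs_mul, abs_mul, abs_of_nonneg (hχ0 x), abs_sub_comm (χ y), abs_of_nonneg (a := 1 - β₀ y)
      (by have := hb2 (rowMap A y - τ); simp only [hβ₀]; linarith)]
    have h6 : χ x * |β₀ x - β₀ y| ≤ 1 * (4 / w * dist x y) :=
      mul_le_mul (hχ1 x) (hβ₀l x y) (abs_nonneg _) zero_le_one
    have h7 : |χ x - χ y| * (1 - β₀ y) ≤ (1 / w * dist x y) * 1 := by
      refine mul_le_mul (hχl x y) ?_ ?_ (by positivity)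
      · have := hb0 (rowMap A y - τ); simp only [hβ₀]; linarith
      · have := hb2 (rowMap A y - τ); simp only [hβ₀]; linarith
    calc _ ≤ 1 * (4 / w * dist x y) + (1 / w * dist x y) * 1 := add_le_add h6 h7
      _ = _ := by ring
  have hb1' : ∀ x, b x ≤ 1 := by
    intro x
    refine max_le hε1 ?_
    have h1 := hb2 (rowMap A x - τ)
    have := mul_nonneg (hχ0 x) (show 0 ≤ 1 - β₀ x by simp only [hβ₀]; linarith)
    linarith
  refine ⟨b, fun x => le_max_left _ _, hb1', fun x => ?_, fun x hx hxε => ?_, fun x => rfl,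
    fun x hx => ?_, fun β hβ x y hx hy => ?_⟩
  · refine le_max_of_le_right ?_
    have h1 := hb2 (rowMap A x - τ)
    change β₀ x ≤ _
    have := mul_le_mul_of_nonneg_right (hχ1 x) (show 0 ≤ 1 - β₀ x by simp only [hβ₀]; linarith)
    linarith
  · have h1 : χ x = 1 := by
      have : 1 ≤ (r - dist x x₀) / w := by
        rw [le_div_iff₀ hw]; rw [mem_closedBall] at hx; linarith
      simp only [hχ]
      rw [min_eq_left this, max_eq_right zero_le_one]
    simp only [hb, h1, one_mul, sub_sub_cancel]
    exact max_eq_right hxε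
  · have h1 : χ x = 0 := by
      have : (r - dist x x₀) / w ≤ 0 := by
        refine div_nonpos_of_nonpos_of_nonneg ?_ hw.le
        rw [mem_closedBall] at hx; linarith
      simp only [hχ]
      exact max_eq_left ((min_le_right _ _).trans this)
    have h2 : b x = 1 := by
      simp only [hb, h1, zero_mul, sub_zero]
      exact max_eq_right hε1
    change B ((fun i => gridMap (rowMap A x i - τ i) (b x)) + τ) = x
    rw [h2]
    simp only [gridMap_one]
    have : (fun i => rowMap A x i - τ i) + τ = rowMap A x := by funext i; simp
    rw [this, hB]
  · change dist (B ((fun i => gridMap (rowMap A x i - τ i) (b x)) + τ))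
      (B ((fun i => gridMap (rowMap A y i - τ i) (b y)) + τ)) ≤ _
    refine (hB' _ _).trans ?_
    rw [dist_add_right]
    have h1 : dist (fun i => gridMap (rowMap A x i - τ i) (b x))
        (fun i => gridMap (rowMap A y i - τ i) (b y)) ≤ 7 / w * dist x y / β := by
      rw [dist_pi_le_iff (by positivity)]
      intro i
      rw [Real.dist_eq]
      refine (abs_gridMap_sub_le hβ hx (hb1' x) hy (hb1' y)).trans ?_
      have h2 := (dist_le_pi_dist (rowMap A x) (rowMap A y) i).trans (hA x y)
      rw [Real.dist_eq] at h2
      rw [sub_sub_sub_cancel_right]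
      have h3 := hbl x y
      gcongr
      calc _ ≤ 2 / w * dist x y + 5 / w * dist x y := add_le_add h2 h3
        _ = _ := by ring
    calc 2 * w * _ ≤ 2 * w * (7 / w * dist x y / β) := by gcongr
      _ = _ := by field_simp; ring

lemma pow_const_identity (k d n : ℕ) :
    (28 * 2 ^ k : ℝ≥0∞) ^ d * ((2 ^ n : ℝ≥0∞) * ENNReal.ofReal (2 * (1/2)^k) ^ (d+1)) =
      (28 ^ d * 2 ^ n * 2 ^ (d+1)) * (2⁻¹ : ℝ≥0∞) ^ k := by
  have h1 : ENNReal.ofReal (2 * (1/2)^k) = 2 * (2⁻¹ : ℝ≥0∞) ^ k := by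
    rw [ENNReal.ofReal_mul (by norm_num), ENNReal.ofReal_pow (by norm_num), ENNReal.ofReal_ofNat,
      one_div, ENNReal.ofReal_inv_of_pos (by norm_num), ENNReal.ofReal_ofNat]
  have h2 : (2:ℝ≥0∞) ^ k * (2⁻¹ : ℝ≥0∞) ^ k = 1 := by
    rw [← mul_pow, ENNReal.mul_inv_cancel (by norm_num) (by norm_num), one_pow]
  rw [h1]
  calc _ = (28 ^ d * 2 ^ n * 2 ^ (d+1)) * (((2:ℝ≥0∞) ^ k * (2⁻¹ : ℝ≥0∞) ^ k) ^ d * (2⁻¹ : ℝ≥0∞) ^ k) := by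
        ring
    _ = _ := by rw [h2, one_pow, one_mul]

/-- Deformation theorem: the part `K` of `F` that is purely unrectifiable and lies in the inner
ball can be made to disappear, at the cost of a bounded factor on the rest. -/
theorem exists_deformation {n d : ℕ} (hd : 1 ≤ d) (hdn : d < n) : ∃ C₁ : ℝ≥0∞, C₁ ≠ ⊤ ∧
    ∀ (K F : Set (Fin n → ℝ)), IsCompact K → μH[(d:ℝ)] K ≠ ⊤ → PurelyUnrect d K →
      μH[(d:ℝ)] F ≠ ⊤ → ∀ (x₀ : Fin n → ℝ) (r w : ℝ), 0 < w → ∀ η : ℝ≥0∞, 0 < η →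
      ∃ φ : (Fin n → ℝ) → (Fin n → ℝ), (∃ Λ, LipschitzWith Λ φ) ∧
        (∀ x ∉ closedBall x₀ r, φ x = x) ∧
        μH[(d:ℝ)] (φ '' F) ≤ C₁ * μH[(d:ℝ)] (F \ (K ∩ closedBall x₀ (r - w))) + η := by
  set D : ℝ≥0∞ := 28 ^ d * 2 ^ n * 2 ^ (d+1) with hD
  have hDt : D ≠ ⊤ := by rw [hD]; finiteness
  refine ⟨D * 2, by finiteness, ?_⟩
  intro K F hKc hK hPU hF x₀ r w hw η hη
  obtain ⟨b₀, hb1, hb0, hb2, hb3, hb4⟩ := exists_skeleton_dist hdn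
  have hb₀c : Continuous b₀ := by
    refine LipschitzWith.continuous (K := 2) (LipschitzWith.of_dist_le_mul fun z z' => ?_)
    rw [Real.dist_eq]; exact hb1 z z'
  obtain ⟨m, hm⟩ : ∃ m : ℕ, D * (2⁻¹ : ℝ≥0∞) ^ m * μH[(d:ℝ)] F < η := by
    have h1 : Tendsto (fun m : ℕ => D * (2⁻¹ : ℝ≥0∞) ^ m * μH[(d:ℝ)] F) atTop (𝓝 0) := by
      have h2 := ENNReal.tendsto_pow_atTop_nhds_zero_of_lt_one (r := 2⁻¹)
        (by norm_num)
      have h3 := ENNReal.Tendsto.const_mul h2 (a := D) (Or.inr hDt)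
      have h4 := ENNReal.Tendsto.mul_const h3 (b := μH[(d:ℝ)] F) (Or.inr hF)
      simpa using h4
    exact ((tendsto_order.1 h1).2 η hη).exists
  set ε : ℝ := (1/2)^m with hε
  have hε0 : 0 < ε := by positivity
  have hε1 : ε ≤ 1 := pow_le_one₀ (by norm_num) (by norm_num)
  have hn : 1 ≤ n := by omega
  have hn0 : (0:ℝ) < n := by exact_mod_cast hn
  obtain ⟨A, hA, hAτ⟩ := exists_good_matrix hd hKc hK hPU (half_pos hε0)
    (fun k i => if k = i then w⁻¹ else 0) (ρ := 1 / (2 * w * n)) (by positivity)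
  obtain ⟨hAl, B, hB, hBl⟩ := rowMap_near hn hw hA
  set P := F \ (K ∩ closedBall x₀ (r - w)) with hP
  have hPF : P ⊆ F := sdiff_subset
  have hPt : μH[(d:ℝ)] P ≠ ⊤ := measure_ne_top_of_subset hPF hF
  set N : ℕ → Set (Fin n → ℝ) → (Fin n → ℝ) → ℝ≥0∞ := fun k S τ =>
    μH[(d:ℝ)] (S ∩ {x | b₀ (rowMap A x - τ) ≤ (1/2)^k}) with hN
  have hN1 := fun k => lintegral_skeleton_le (d := d) hb₀c hb4 A hPt (δ := (1/2)^k) (by positivity)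
  have hN2 := lintegral_skeleton_le (d := d) hb₀c hb4 A hF (δ := (1/2)^m) (by positivity)
  set Φ : (Fin n → ℝ) → ℝ≥0∞ := fun τ =>
    ∑ k ∈ Finset.range (m+1), (28 * 2 ^ k : ℝ≥0∞) ^ d * N k P τ + (28 * 2 ^ m : ℝ≥0∞) ^ d * N m F τ
    with hΦ
  have hΦm : Measurable Φ := by
    refine Measurable.add (Finset.measurable_sum _ fun k _ => (hN1 k).1.const_mul _)
      (hN2.1.const_mul _)
  have hΦi : ∫⁻ τ in Icc (0 : Fin n → ℝ) 1, Φ τ ≤ D * 2 * μH[(d:ℝ)] P + η := by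
    rw [hΦ, lintegral_add_right _ (hN2.1.const_mul _),
      lintegral_finsetSum _ fun k _ => (hN1 k).1.const_mul _, lintegral_const_mul _ hN2.1]
    refine add_le_add ?_ ?_
    · calc _ ≤ ∑ k ∈ Finset.range (m+1), D * (2⁻¹ : ℝ≥0∞) ^ k * μH[(d:ℝ)] P := by
            refine Finset.sum_le_sum fun k _ => ?_
            rw [lintegral_const_mul _ (hN1 k).1, ← pow_const_identity, mul_assoc]
            gcongr
            exact (hN1 k).2
        _ = D * (∑ k ∈ Finset.range (m+1), (2⁻¹ : ℝ≥0∞) ^ k) * μH[(d:ℝ)] P := by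
            rw [Finset.mul_sum, Finset.sum_mul]
        _ ≤ D * 2 * μH[(d:ℝ)] P := by
            gcongr
            refine (ENNReal.sum_le_tsum _).trans ?_
            rw [ENNReal.tsum_geometric, ENNReal.one_sub_inv_two, inv_inv]
    · refine le_trans ?_ hm.le
      rw [← pow_const_identity, mul_assoc]
      gcongr
      exact hN2.2
  have hprob : IsProbabilityMeasure (volume.restrict (Icc (0 : Fin n → ℝ) 1)) := by
    refine ⟨?_⟩
    rw [Measure.restrict_apply_univ, Real.volume_Icc_pi]
    simp
  obtain ⟨τ, hτ, hτΦ⟩ := exists_notMem_null_le_lintegral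
    (μ := volume.restrict (Icc (0 : Fin n → ℝ) 1)) hΦm.aemeasurable
    (ae_iff.1 (ae_restrict_of_ae hAτ))
  simp only [mem_ofPred_eq, not_not] at hτ
  obtain ⟨b, hbε, hble, hb₀b, hbeq, hφ, hφid, hφl⟩ := deform_props hb1 hb0 hb2 hw hAl hB hBl x₀ r
    hε1 τ
  set φ := deform b₀ A B x₀ r w ε τ with hφdef
  refine ⟨φ, ⟨Real.toNNReal (14 / ε), LipschitzWith.of_dist_le_mul fun x y => ?_⟩, hφid, ?_⟩
  · rw [Real.coe_toNNReal _ (by positivity)]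
    exact hφl ε hε0 x y (hbε x) (hbε y)
  refine le_trans ?_ (hτΦ.trans hΦi)
  have himg : ∀ (k : ℕ) (S : Set (Fin n → ℝ)), (∀ x ∈ S, (1/2)^(k+1) ≤ b x) →
      μH[(d:ℝ)] (φ '' S) ≤ (28 * 2 ^ k : ℝ≥0∞) ^ d * μH[(d:ℝ)] S := by
    intro k S hS
    have h1 := hausdorff_image_le_of_lip (d := d) (φ := φ) (S := S) (Λ := 28 * 2 ^ k) ?_
    · simpa using h1
    · intro x hx y hy
      refine (hφl _ (by positivity) x y (hS x hx) (hS y hy)).trans (le_of_eq ?_)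
      push_cast
      congr 1
      rw [pow_succ, one_div, inv_pow]
      field_simp
      norm_num
  -- the part of `K` away from the dual skeleton is sent to a null set
  have hnull : μH[(d:ℝ)] (φ '' {x ∈ K ∩ closedBall x₀ (r - w) | ε ≤ b₀ (rowMap A x - τ)}) = 0 := by
    have h1 := skeleton_image_null hε0 hτ hb3
    set S1 := (fun x i => gridMap (rowMap A x i - τ i) (b₀ (rowMap A x - τ))) ''
      {x ∈ K | ε ≤ b₀ (rowMap A x - τ)} with hS1
    have h2 : φ '' {x ∈ K ∩ closedBall x₀ (r - w) | ε ≤ b₀ (rowMap A x - τ)} ⊆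
        (fun y => B (y + τ)) '' S1 := by
      rintro _ ⟨x, ⟨⟨hxK, hxr⟩, hxε⟩, rfl⟩
      refine ⟨_, ⟨x, ⟨hxK, hxε⟩, rfl⟩, ?_⟩
      simp only [hφ x, hbeq x hxr hxε]
    refine measure_mono_null h2 ?_
    have h3 := hausdorff_image_le_of_lip (d := d) (φ := fun y => B (y + τ)) (S := S1)
      (Λ := Real.toNNReal (2 * w)) ?_
    · rw [h1, mul_zero] at h3
      exact le_antisymm h3 bot_le
    · intro x _ y _
      rw [Real.coe_toNNReal _ (by positivity)]
      refine (hBl _ _).trans (le_of_eq ?_)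
      rw [dist_add_right]
  have hcover : F ⊆ (⋃ k ∈ Finset.range (m+1), (P ∩ {x | b₀ (rowMap A x - τ) ≤ (1/2)^k}) ∩
      {x | (1/2)^(k+1) ≤ b x}) ∪ (F ∩ {x | b₀ (rowMap A x - τ) ≤ (1/2)^m}) ∪
      {x ∈ K ∩ closedBall x₀ (r - w) | ε ≤ b₀ (rowMap A x - τ)} := by
    intro x hx
    by_cases hxK : x ∈ K ∩ closedBall x₀ (r - w)
    · rcases le_total (b₀ (rowMap A x - τ)) ((1/2)^m) with h | h
      · exact Or.inl (Or.inr ⟨hx, h⟩)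
      · exact Or.inr ⟨hxK, h⟩
    · refine Or.inl (Or.inl ?_)
      -- `k` is the largest exponent at most `m` with `b x ≤ 2⁻ᵏ`
      have hex : ∃ k ≤ m, b x ≤ (1/2)^k ∧ (1/2)^(k+1) ≤ b x := by
        by_contra hcon
        push Not at hcon
        have : ∀ k ≤ m, b x ≤ (1/2)^k := by
          intro k
          induction k with
          | zero => intro _; simpa using hble x
          | succ k ih => intro hk; exact (hcon k (by omega) (ih (by omega))).le
        have h1 := hcon m le_rfl (this m le_rfl)
        have h2 := hbε x
        have h3 : (1/2 : ℝ)^(m+1) < (1/2)^m :=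
          pow_lt_pow_right_of_lt_one₀ (by norm_num) (by norm_num) (by omega)
        linarith
      obtain ⟨k, hkm, hk1, hk2⟩ := hex
      exact mem_iUnion₂.2 ⟨k, Finset.mem_range.2 (by omega), ⟨⟨hx, hxK⟩, (hb₀b x).trans hk1⟩, hk2⟩
  refine (measure_mono (image_mono hcover)).trans ?_
  rw [image_union, image_union]
  refine (measure_union_le _ _).trans ?_
  rw [hnull, add_zero]
  refine (measure_union_le _ _).trans (add_le_add ?_ ?_)
  · rw [image_iUnion₂]
    refine (measure_biUnion_finset_le _ _).trans (Finset.sum_le_sum fun k _ => ?_)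
    refine (himg k _ fun x hx => hx.2).trans ?_
    gcongr
    exact measure_mono inter_subset_left
  · refine himg m _ fun x _ => le_trans ?_ (hbε x)
    exact pow_le_pow_of_le_one (by norm_num) (by norm_num) (by omega)

/-! ### Quasiminimal sets are rectifiable -/

/-- A function with a polynomial lower bound at `0` has arbitrarily small radii `s` that are the
outer end of a layer `[s - w, s]` across which it drops by a factor of at most `1 - θ`. -/
lemma exists_thin_layer {f : ℝ → ℝ} {n : ℕ} {c s₀ θ : ℝ} (hc : 0 < c) (hs₀ : 0 < s₀) (hθ : 0 < θ)
    (hθ1 : θ < 1) (hf : ∀ s, 0 < s → s < s₀ → c * s ^ n ≤ f s) :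
    ∃ s w, 0 < w ∧ 0 < s ∧ s < s₀ ∧ (1 - θ) * f s ≤ f (s - w) := by
  by_contra! hcon
  set q : ℝ := 1 - θ / (2 * (n + 1)) with hq
  have hn : (0:ℝ) < 2 * (n + 1) := by positivity
  have hq1 : q < 1 := by
    have : 0 < θ / (2 * (n + 1)) := by positivity
    linarith
  have hle : θ / (2 * (n + 1)) ≤ θ / 2 := by
    gcongr
    have : (0:ℝ) ≤ n := by positivity
    linarith
  have hq0 : 0 < q := by linarith
  have hqn : 1 - θ < q ^ n := by
    have h1 := one_add_mul_le_pow (a := -(θ / (2 * (n + 1)))) (by linarith) n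
    have h2 : (n : ℝ) * (θ / (2 * (n + 1))) ≤ θ / 2 := by
      rw [mul_div_assoc', div_le_div_iff₀ hn (by norm_num)]
      nlinarith
    have h3 : (1 + -(θ / (2 * (n + 1)))) = q := by ring
    rw [h3] at h1
    linarith
  set s := s₀ / 2 with hs
  have hs0 : 0 < s := by positivity
  have hqk : ∀ k : ℕ, 0 < q ^ k * s ∧ q ^ k * s < s₀ := by
    intro k
    refine ⟨by positivity, ?_⟩
    have : q ^ k ≤ 1 := pow_le_one₀ hq0.le hq1.le
    nlinarith
  have hind : ∀ k : ℕ, f (q ^ k * s) ≤ (1 - θ) ^ k * f s := by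
    intro k
    induction k with
    | zero => simp
    | succ k ih =>
      have h1 := hcon (q ^ k * s) ((1 - q) * (q ^ k * s)) (mul_pos (by linarith) (hqk k).1)
        (hqk k).1 (hqk k).2
      have h2 : q ^ k * s - (1 - q) * (q ^ k * s) = q ^ (k+1) * s := by ring
      rw [h2] at h1
      refine h1.le.trans ?_
      rw [pow_succ, mul_assoc, mul_left_comm]
      exact mul_le_mul_of_nonneg_left ih (by linarith)
  have hfs : 0 < f s := lt_of_lt_of_le (by positivity) (hf s hs0 (by linarith))
  have hqn0 : 0 < q ^ n := by positivity
  obtain ⟨k, hk⟩ := exists_pow_lt_of_lt_one (show 0 < c * s ^ n / f s by positivity)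
    (show (1 - θ) / q ^ n < 1 by rwa [div_lt_one hqn0])
  have h3 := (hf _ (hqk k).1 (hqk k).2).trans (hind k)
  rw [div_pow, div_lt_div_iff₀ (by positivity) hfs] at hk
  have h4 : c * (q ^ k * s) ^ n = c * s ^ n * (q ^ n) ^ k := by
    rw [mul_pow, ← pow_mul, ← pow_mul, mul_comm k n]; ring
  linarith

/-- A closed set that does not lose more than a constant factor of measure under compactly
supported Lipschitz deformations. -/
def IsQuasiMin (d : ℕ) {n : ℕ} (E : Set (Fin n → ℝ)) : Prop :=
  IsClosed E ∧ (∀ R : ℝ, μH[(d:ℝ)] (E ∩ closedBall 0 R) ≠ ⊤) ∧ ∃ C₀ : ℝ≥0∞, C₀ ≠ ⊤ ∧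
    ∀ (φ : (Fin n → ℝ) → (Fin n → ℝ)) (S : Set (Fin n → ℝ)), (∃ Λ, LipschitzWith Λ φ) →
      IsBounded S → (∀ x ∉ S, φ x = x) → μH[(d:ℝ)] (E ∩ S) ≤ C₀ * μH[(d:ℝ)] (φ '' (E ∩ S))

/-- At a point `x` of `K` where `K` has density one in `E`, some small ball carries almost all of its
measure on `K` and away from its boundary. The deformation of `exists_deformation` in that ball makes
this part disappear, which contradicts quasiminimality unless `K` is null. -/
lemma quasiMin_null_of_purelyUnrect {n d : ℕ} (hd : 1 ≤ d) (hdn : d < n) {E : Set (Fin n → ℝ)}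
    (hE : IsQuasiMin d E) {K : Set (Fin n → ℝ)} (hKE : K ⊆ E) (hKc : IsCompact K)
    (hPU : PurelyUnrect d K) : μH[(d:ℝ)] K = 0 := by
  by_contra hK0
  obtain ⟨hEc, hEf, C₀, hC₀, hqm⟩ := hE
  obtain ⟨C₁, hC₁, hdef⟩ := exists_deformation hd hdn
  obtain ⟨R, hR⟩ := hKc.isBounded.subset_closedBall (0 : Fin n → ℝ)
  have hKt : μH[(d:ℝ)] K ≠ ⊤ := measure_ne_top_of_subset (subset_inter hKE hR) (hEf R)
  set Y := E ∩ closedBall (0 : Fin n → ℝ) (R + 2) with hY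
  have hYm : MeasurableSet Y := (hEc.inter isClosed_closedBall).measurableSet
  set ν : Measure (Fin n → ℝ) := μH[(d:ℝ)].restrict Y with hν
  have hνf : IsFiniteMeasure ν := ⟨by
    rw [hν, Measure.restrict_apply_univ]; exact (hEf _).lt_top⟩
  have hKY : K ⊆ Y := subset_inter hKE (hR.trans (closedBall_subset_closedBall (by linarith)))
  have hνK : ν K ≠ 0 := by
    rw [hν, Measure.restrict_apply hKc.measurableSet, inter_eq_left.2 hKY]; exact hK0
  -- besides being a density point of `K`, `x` is taken with `volume` having finite density with
  -- respect to `ν` at `x`; this gives the polynomial lower bound on `ν (closedBall x s)`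
  obtain ⟨x, hxK, hx1, hx2, hx3⟩ : ∃ x ∈ K,
      Tendsto (fun r => ν (K ∩ closedBall x r) / ν (closedBall x r)) (𝓝[>] 0)
        (𝓝 (K.indicator 1 x)) ∧
      Tendsto (fun r => volume (closedBall x r) / ν (closedBall x r)) (𝓝[>] 0)
        (𝓝 ((volume : Measure (Fin n → ℝ)).rnDeriv ν x)) ∧
      (volume : Measure (Fin n → ℝ)).rnDeriv ν x < ⊤ := by
    by_contra! hcon
    refine hνK ?_
    have hae : ∀ᵐ x ∂ν, x ∉ K := by
      filter_upwards [Besicovitch.ae_tendsto_measure_inter_div_of_measurableSet ν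
        hKc.measurableSet, Besicovitch.ae_tendsto_rnDeriv (volume : Measure (Fin n → ℝ)) ν,
        Measure.rnDeriv_lt_top (volume : Measure (Fin n → ℝ)) ν] with x h1 h2 h3 hxK
      exact absurd h3 (not_lt.2 (hcon x hxK h1 h2))
    rw [ae_iff] at hae
    simpa using hae
  rw [indicator_of_mem hxK, Pi.one_apply] at hx1
  -- `θ` is chosen so that `C₀ C₁ (2 * θ) ≤ 1/4`
  set M : ℝ := C₀.toReal * C₁.toReal + 1 with hM
  have hM1 : 1 ≤ M := by
    have : 0 ≤ C₀.toReal * C₁.toReal := by positivity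
    linarith
  set θ : ℝ := 1 / (8 * M) with hθ
  have hθ0 : 0 < θ := by positivity
  have hθ1 : θ < 1 := by
    rw [hθ, div_lt_one (by positivity)]; linarith
  obtain ⟨J, hJ⟩ := ENNReal.exists_nat_gt hx3.ne
  have hev1 := hx2.eventually (gt_mem_nhds hJ)
  have hev2 := hx1.eventually (lt_mem_nhds (show ENNReal.ofReal (1 - θ) < 1 by
    rw [← ENNReal.ofReal_one]
    exact (ENNReal.ofReal_lt_ofReal_iff one_pos).2 (by linarith)))
  obtain ⟨s₁, hs₁, hs⟩ := Metric.eventually_nhds_iff.1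
    (eventually_nhdsWithin_iff.1 (hev1.and hev2))
  set s₀ := min s₁ 1 with hs₀
  have hs₀0 : 0 < s₀ := by positivity
  have hs' : ∀ s, 0 < s → s < s₀ → volume (closedBall x s) / ν (closedBall x s) < J ∧
      ENNReal.ofReal (1 - θ) < ν (K ∩ closedBall x s) / ν (closedBall x s) := by
    intro s h0 h1
    refine hs (y := s) ?_ h0
    rw [Real.dist_eq, sub_zero, abs_of_pos h0]
    exact h1.trans_le (min_le_left _ _)
  have hvol : ∀ s, 0 < s → volume (closedBall x s) = ENNReal.ofReal ((2 * s) ^ n) := by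
    intro s h0
    rw [Real.volume_pi_closedBall x h0.le, Fintype.card_fin]
  have hpos : ∀ s, 0 < s → s < s₀ → ν (closedBall x s) ≠ 0 := by
    intro s h0 h1 h2
    have h3 := (hs' s h0 h1).1
    rw [h2, ENNReal.div_zero (by
      rw [hvol s h0, Ne, ENNReal.ofReal_eq_zero, not_le]; positivity)] at h3
    simp at h3
  set f : ℝ → ℝ := fun s => ν.real (closedBall x s) with hf
  have hJ0 : (0:ℝ) < J := by
    have : (0:ℝ≥0∞) < J := bot_le.trans_lt hJ
    exact_mod_cast this
  have hflow : ∀ s, 0 < s → s < s₀ → (2 ^ n / J) * s ^ n ≤ f s := by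
    intro s h0 h1
    have h2 := (hs' s h0 h1).1
    rw [ENNReal.div_lt_iff (Or.inl (hpos s h0 h1)) (Or.inl (by finiteness)), hvol s h0] at h2
    have h3 := (ENNReal.ofReal_lt_iff_lt_toReal (by positivity) (by finiteness)).1 h2
    rw [ENNReal.toReal_mul, ENNReal.toReal_natCast, mul_pow] at h3
    rw [div_mul_eq_mul_div, div_le_iff₀ hJ0, mul_comm (f s)]
    exact h3.le
  obtain ⟨s, w, hw, hs0, hss, hthin⟩ := exists_thin_layer (f := f) (by positivity) hs₀0 hθ0 hθ1 hflow
  have hballs : ∀ t ≤ s, closedBall x t ⊆ closedBall (0 : Fin n → ℝ) (R + 2) := by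
    intro t ht
    refine closedBall_subset_closedBall' ?_
    have h1 := hR hxK
    rw [mem_closedBall] at h1
    have h2 : s < 1 := hss.trans_le (min_le_right _ _)
    linarith
  set F := E ∩ closedBall x s with hF
  have hνF : ν (closedBall x s) = μH[(d:ℝ)] F := by
    rw [hν, Measure.restrict_apply isClosed_closedBall.measurableSet, hF, hY]
    congr 1
    ext y
    exact ⟨fun h => ⟨h.2.1, h.1⟩, fun h => ⟨h.2, h.1, hballs s le_rfl h.2⟩⟩
  have hFt : μH[(d:ℝ)] F ≠ ⊤ := by rw [← hνF]; finiteness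
  have hF0 : μH[(d:ℝ)] F ≠ 0 := by rw [← hνF]; exact hpos s hs0 hss
  set P := F \ (K ∩ closedBall x (s - w)) with hP
  have hPν : μH[(d:ℝ)] P ≤ ν (closedBall x s \ K) + ν (closedBall x s \ closedBall x (s - w)) := by
    have h1 : P ⊆ ((closedBall x s \ K) ∪ (closedBall x s \ closedBall x (s - w))) ∩ Y := by
      rintro y ⟨⟨hyE, hys⟩, hy⟩
      refine ⟨?_, hyE, hballs s le_rfl hys⟩
      by_cases hyK : y ∈ K
      · exact Or.inr ⟨hys, fun h => hy ⟨hyK, h⟩⟩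
      · exact Or.inl ⟨hys, hyK⟩
    refine (measure_mono h1).trans ?_
    rw [← Measure.restrict_apply' hYm]
    exact measure_union_le _ _
  set a : ℝ := ν.real (closedBall x s) with ha
  have ha0 : 0 < a := ENNReal.toReal_pos (hpos s hs0 hss) (by finiteness)
  have haF : μH[(d:ℝ)] F = ENNReal.ofReal a := by
    rw [← hνF, ha, ofReal_measureReal]
  have hP1 : ν.real (closedBall x s \ K) ≤ θ * a := by
    have h1 := measureReal_inter_add_sdiff (μ := ν) (s := closedBall x s) hKc.measurableSet
    have h2 := (hs' s hs0 hss).2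
    rw [ENNReal.lt_div_iff_mul_lt (Or.inl (hpos s hs0 hss)) (Or.inl (by finiteness))] at h2
    have h3 : (1 - θ) * a ≤ ν.real (closedBall x s ∩ K) := by
      have h4 := ENNReal.toReal_mono (by finiteness) h2.le
      rw [ENNReal.toReal_mul, ENNReal.toReal_ofReal (by linarith), inter_comm] at h4
      exact h4
    linarith
  have hP2 : ν.real (closedBall x s \ closedBall x (s - w)) ≤ θ * a := by
    rw [measureReal_sdiff (closedBall_subset_closedBall (by linarith))
      isClosed_closedBall.measurableSet]
    change f s - f (s - w) ≤ θ * f s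
    linarith
  have hPa : μH[(d:ℝ)] P ≤ ENNReal.ofReal (2 * θ * a) := by
    refine hPν.trans ?_
    rw [← ofReal_measureReal, ← ofReal_measureReal, ← ENNReal.ofReal_add (by positivity)
      (by positivity)]
    apply ENNReal.ofReal_le_ofReal
    linarith
  set η : ℝ := a / (4 * (C₀.toReal + 1)) with hη
  have hη0 : 0 < η := by positivity
  obtain ⟨φ, hφl, hφid, hφ⟩ := hdef K F hKc hKt hPU hFt x s w hw (ENNReal.ofReal η)
    (ENNReal.ofReal_pos.2 hη0)
  have hfin := (hqm φ (closedBall x s) hφl isBounded_closedBall hφid).trans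
    (mul_le_mul_right (hφ.trans (add_le_add_left (mul_le_mul_right hPa C₁) _)) C₀)
  rw [← hF, haF] at hfin
  have hreal : a ≤ C₀.toReal * (C₁.toReal * (2 * θ * a) + η) := by
    have h1 := ENNReal.toReal_mono (by finiteness) hfin
    rwa [ENNReal.toReal_ofReal ha0.le, ENNReal.toReal_mul, ENNReal.toReal_add (by finiteness)
      (by finiteness), ENNReal.toReal_mul, ENNReal.toReal_ofReal (by positivity),
      ENNReal.toReal_ofReal hη0.le] at h1
  have h1 : C₀.toReal * C₁.toReal * (2 * θ * a) ≤ a / 4 := by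
    have h2 : C₀.toReal * C₁.toReal ≤ M := by linarith
    calc C₀.toReal * C₁.toReal * (2 * θ * a) ≤ M * (2 * θ * a) := by gcongr
      _ = a / 4 := by rw [hθ]; field_simp; norm_num
  have h2 : C₀.toReal * η ≤ a / 4 := by
    have h3 : (C₀.toReal + 1) * η = a / 4 := by rw [hη]; field_simp
    linarith
  have h4 : C₀.toReal * (C₁.toReal * (2 * θ * a) + η) =
    C₀.toReal * C₁.toReal * (2 * θ * a) + C₀.toReal * η := by ring
  linarith

/-- A quasiminimal set has no purely unrectifiable compact subset of positive measure. -/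
lemma quasiMin_null {n d : ℕ} {E : Set (Fin n → ℝ)}
    (hE : IsQuasiMin d E) {K : Set (Fin n → ℝ)} (hKE : K ⊆ E) (hKc : IsCompact K)
    (hPU : PurelyUnrect d K) : μH[(d:ℝ)] K = 0 := by
  rcases Nat.eq_zero_or_pos d with rfl | hd
  -- points are Lipschitz images of `ℝ⁰`
  · rcases K.eq_empty_or_nonempty with rfl | ⟨x, hx⟩
    · simp
    · have h1 := hPU (fun _ => x) ⟨0, LipschitzWith.const x⟩
      rw [range_const, inter_eq_right.2 (singleton_subset_iff.2 hx), Nat.cast_zero,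
        Measure.hausdorffMeasure_zero_singleton] at h1
      exact absurd h1 one_ne_zero
  rcases lt_or_ge d n with hdn | hnd
  · exact quasiMin_null_of_purelyUnrect hd hdn hE hKE hKc hPU
  -- all of `ℝⁿ` is a Lipschitz image of `ℝᵈ`
  · have h1 := hPU (fun y i => y (Fin.castLE hnd i)) ⟨1, LipschitzWith.of_dist_le_mul fun y y' => by
      rw [NNReal.coe_one, one_mul, dist_pi_le_iff dist_nonneg]
      exact fun i => dist_le_pi_dist y y' _⟩
    have h2 : range (fun (y : Fin d → ℝ) (i : Fin n) => y (Fin.castLE hnd i)) = univ := by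
      refine range_eq_univ.2 fun z => ⟨Function.extend (Fin.castLE hnd) z 0, ?_⟩
      funext i
      exact (Fin.castLE_injective hnd).extend_apply _ _ _
    rwa [h2, inter_univ] at h1

lemma measurableSet_range_of_continuous {d n : ℕ} {f : (Fin d → ℝ) → (Fin n → ℝ)}
    (hf : Continuous f) : MeasurableSet (range f) := by
  have : range f = ⋃ j : ℕ, f '' closedBall 0 j := by
    rw [← image_iUnion, iUnion_closedBall_nat, image_univ]
  rw [this]
  exact MeasurableSet.iUnion fun j => ((isCompact_closedBall _ _).image hf).measurableSet

/-- The exhaustion argument on a bounded piece of a quasiminimal set. -/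
lemma quasiMin_rectifiable_aux {n d : ℕ} {E : Set (Fin n → ℝ)} (hE : IsQuasiMin d E) (R : ℝ) :
    ∃ c : Set ((Fin d → ℝ) → (Fin n → ℝ)), c.Countable ∧ (∀ g ∈ c, ∃ Λ, LipschitzWith Λ g) ∧
      μH[(d:ℝ)] ((E ∩ closedBall 0 R) \ ⋃ g ∈ c, range g) = 0 := by
  set Y := E ∩ closedBall (0 : Fin n → ℝ) R with hY
  have hYm : MeasurableSet Y := (hE.1.inter isClosed_closedBall).measurableSet
  set ν : Measure (Fin n → ℝ) := μH[(d:ℝ)].restrict Y with hν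
  have hνf : IsFiniteMeasure ν := ⟨by
    rw [hν, Measure.restrict_apply_univ]; exact (hE.2.1 R).lt_top⟩
  set 𝒞 : Set (Set ((Fin d → ℝ) → (Fin n → ℝ))) :=
    {c | c.Countable ∧ ∀ g ∈ c, ∃ Λ, LipschitzWith Λ g} with h𝒞
  set V : Set ((Fin d → ℝ) → (Fin n → ℝ)) → ℝ≥0∞ := fun c => ν (⋃ g ∈ c, range g) with hV
  have hVm : ∀ c ∈ 𝒞, MeasurableSet (⋃ g ∈ c, range g) := fun c hc =>
    MeasurableSet.biUnion hc.1 fun g hg => by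
      obtain ⟨Λ, hΛ⟩ := hc.2 g hg
      exact measurableSet_range_of_continuous hΛ.continuous
  obtain ⟨u, -, hulim, hu⟩ := exists_seq_tendsto_sSup (S := V '' 𝒞)
    ⟨V ∅, ∅, ⟨countable_empty, by simp⟩, rfl⟩ (OrderTop.bddAbove _)
  choose ck hck hckV using hu
  set c := ⋃ k, ck k with hc
  have hc𝒞 : c ∈ 𝒞 := by
    refine ⟨countable_iUnion fun k => (hck k).1, fun g hg => ?_⟩
    obtain ⟨k, hk⟩ := mem_iUnion.1 hg
    exact (hck k).2 g hk
  have hcmax : ∀ c' ∈ 𝒞, V c' ≤ V c := by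
    intro c' hc'
    refine (le_sSup (mem_image_of_mem V hc')).trans (le_of_tendsto' hulim fun k => ?_)
    rw [← hckV k]
    exact measure_mono (biUnion_subset_biUnion_left (subset_iUnion ck k))
  refine ⟨c, hc𝒞.1, hc𝒞.2, ?_⟩
  set U := Y \ ⋃ g ∈ c, range g with hU
  have hUm : MeasurableSet U := hYm.diff (hVm c hc𝒞)
  have hUPU : PurelyUnrect d U := by
    rintro f hf
    have hc' : insert f c ∈ 𝒞 := by
      refine ⟨hc𝒞.1.insert f, fun g hg => ?_⟩
      rcases hg with rfl | hg
      · exact hf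
      · exact hc𝒞.2 g hg
    have h1 := hcmax _ hc'
    have hfm : MeasurableSet (range f) := by
      obtain ⟨Λ, hΛ⟩ := hf
      exact measurableSet_range_of_continuous hΛ.continuous
    simp only [hV, biUnion_insert] at h1
    rw [union_comm, ← union_sdiff_self, measure_union disjoint_sdiff_right
      (hfm.diff (hVm c hc𝒞))] at h1
    have h2 : ν (range f \ ⋃ g ∈ c, range g) = 0 := by
      have h3 : ν (⋃ g ∈ c, range g) + ν (range f \ ⋃ g ∈ c, range g) ≤
        ν (⋃ g ∈ c, range g) + 0 := by rwa [add_zero]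
      exact le_antisymm ((ENNReal.add_le_add_iff_left (measure_ne_top ν _)).1 h3) bot_le
    rw [hν, Measure.restrict_apply (hfm.diff (hVm c hc𝒞))] at h2
    refine measure_mono_null ?_ h2
    rintro y ⟨⟨hyY, hyc⟩, hyf⟩
    exact ⟨⟨hyf, hyc⟩, hyY⟩
  by_contra hne
  have hνU : 0 < ν U := by
    rw [hν, Measure.restrict_apply hUm, inter_eq_left.2 sdiff_subset]
    exact pos_iff_ne_zero.2 hne
  obtain ⟨K, hKU, hKc, hK⟩ := hUm.exists_lt_isCompact_of_ne_top (by finiteness) hνU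
  have h5 := quasiMin_null hE (hKU.trans (sdiff_subset.trans inter_subset_left)) hKc
    (hUPU.mono hKU)
  have h6 : ν K ≤ μH[(d:ℝ)] K := Measure.restrict_apply_le _ _
  rw [h5] at h6
  exact absurd hK (not_lt.2 h6)

/-- Quasiminimal sets are countably `d`-rectifiable. -/
theorem quasiMin_rectifiable {n d : ℕ} {E : Set (Fin n → ℝ)} (hE : IsQuasiMin d E) :
    ∃ f : ℕ → (Fin d → ℝ) → (Fin n → ℝ), (∀ j, ∃ Λ, LipschitzWith Λ (f j)) ∧
      μH[(d:ℝ)] (E \ ⋃ j, range (f j)) = 0 := by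
  choose c hc hcl hcn using fun k : ℕ => quasiMin_rectifiable_aux hE k
  have hcount : (insert (fun _ => 0) (⋃ k, c k)).Countable := (countable_iUnion hc).insert _
  obtain ⟨f, hf⟩ := hcount.exists_eq_range (insert_nonempty _ _)
  refine ⟨f, fun j => ?_, ?_⟩
  · have h1 : f j ∈ insert (fun _ => 0) (⋃ k, c k) := by rw [hf]; exact mem_range_self j
    rcases h1 with h1 | h1
    · rw [h1]; exact ⟨0, LipschitzWith.const 0⟩
    · obtain ⟨k, hk⟩ := mem_iUnion.1 h1
      exact hcl k _ hk
  · refine measure_mono_null ?_ (measure_iUnion_null hcn)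
    rintro x ⟨hxE, hx⟩
    obtain ⟨k, hk⟩ := exists_nat_ge ‖x‖
    refine mem_iUnion.2 ⟨k, ⟨hxE, by simpa using hk⟩, fun hx' => hx ?_⟩
    obtain ⟨g, hg, hxg⟩ := mem_iUnion₂.1 hx'
    have h1 : g ∈ range f := by rw [← hf]; exact Or.inr (mem_iUnion.2 ⟨k, hg⟩)
    obtain ⟨j, rfl⟩ := h1
    exact mem_iUnion.2 ⟨j, hxg⟩

/-! ### Rectifiability of the factor and the conclusion -/

/-- The factor `E`, read in `Fin n → ℝ` with the sup norm, is quasiminimal: the change of norm only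
affects the constant. -/
lemma isQuasiMin_of_prod {n m d : ℕ} (hm : 1 ≤ m) {E : Set (Euc n)} (hE : IsClosed E)
    (h : IsMinimalSet (n + m) (d + m) (prodRm n m E)) :
    IsQuasiMin d ((WithLp.toLp 2 : (Fin n → ℝ) → Euc n) ⁻¹' E) := by
  have he := PiLp.lipschitzWith_ofLp 2 (fun _ : Fin n => ℝ)
  obtain ⟨K, he'⟩ : ∃ K, LipschitzWith K (WithLp.toLp 2 : (Fin n → ℝ) → Euc n) :=
    ⟨_, PiLp.lipschitzWith_toLp 2 (fun _ : Fin n => ℝ)⟩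
  have hd : (0 : ℝ) ≤ (d : ℝ) := by positivity
  have hle : ∀ A : Set (Fin n → ℝ),
      μH[(d : ℝ)] A ≤ μH[(d : ℝ)] ((WithLp.toLp 2 : (Fin n → ℝ) → Euc n) '' A) := by
    intro A
    have h1 := he.hausdorffMeasure_image_le hd ((WithLp.toLp 2 : (Fin n → ℝ) → Euc n) '' A)
    rw [image_image] at h1
    simpa using h1
  refine ⟨hE.preimage he'.continuous, fun R => ?_,
    2 * nuConst m d * (K : ℝ≥0∞) ^ (d : ℝ), ?_, ?_⟩
  · obtain ⟨R', hR'⟩ := ((he'.isBounded_image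
      (isBounded_closedBall (x := (0 : Fin n → ℝ)) (r := R)))).subset_ball 0
    refine ((hle _).trans_lt ?_).ne
    refine ((measure_mono ?_).trans (hausdorff_le_nu hm _)).trans_lt (nu_ball_lt_top h R')
    rintro _ ⟨x, ⟨hx1, hx2⟩, rfl⟩
    exact ⟨hx1, hR' ⟨x, hx2, rfl⟩⟩
  · exact ENNReal.mul_ne_top (ENNReal.mul_ne_top (by simp) nuConst_ne_top)
      (ENNReal.rpow_ne_top_of_nonneg hd ENNReal.coe_ne_top)
  · rintro φ S ⟨Λ, hφ⟩ hS hid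
    have hψ := (he'.comp hφ).comp he
    have h1 := quasi_minimal hm hE h hψ (he'.isBounded_image hS) (by
      intro x hx
      have : WithLp.ofLp x ∉ S := fun hxS => hx ⟨_, hxS, rfl⟩
      simp [hid _ this])
    have h2 : (WithLp.toLp 2 : (Fin n → ℝ) → Euc n) '' (WithLp.toLp 2 ⁻¹' E ∩ S) =
        E ∩ (WithLp.toLp 2 : (Fin n → ℝ) → Euc n) '' S := by
      rw [inter_comm, image_inter_preimage, inter_comm]
    rw [← h2, image_image] at h1
    refine (hle _).trans (h1.trans ?_)
    rw [mul_assoc (2 * nuConst m d) ((K : ℝ≥0∞) ^ (d : ℝ))]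
    refine mul_le_mul' le_rfl ?_
    refine le_trans (le_of_eq ?_) (he'.hausdorffMeasure_image_le hd _)
    rw [image_image]
    rfl

/-- The factor `E` is countably `d`-rectifiable. -/
lemma exists_rectifiable_cover {n m d : ℕ} (hm : 1 ≤ m) {E : Set (Euc n)} (hE : IsClosed E)
    (h : IsMinimalSet (n + m) (d + m) (prodRm n m E)) :
    ∃ (f : ℕ → Euc d → Euc n) (Z : Set (Euc n)), (∀ j, ∃ K : ℝ≥0, LipschitzWith K (f j)) ∧
      μH[(d : ℝ)] Z = 0 ∧ E ⊆ Z ∪ ⋃ j, range (f j) := by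
  obtain ⟨f, hf, hnull⟩ := quasiMin_rectifiable (isQuasiMin_of_prod hm hE h)
  have he' := PiLp.lipschitzWith_toLp 2 (fun _ : Fin n => ℝ)
  refine ⟨fun j x => WithLp.toLp 2 (f j (WithLp.ofLp x)),
    WithLp.toLp 2 '' (WithLp.toLp 2 ⁻¹' E \ ⋃ j, range (f j)), fun j => ?_, ?_, ?_⟩
  rotate_left 2
  · intro x hx
    by_cases hxf : WithLp.ofLp x ∈ ⋃ j, range (f j)
    · obtain ⟨j, y, hy⟩ := mem_iUnion.1 hxf
      exact Or.inr (mem_iUnion.2 ⟨j, WithLp.toLp 2 y, by simp [hy]⟩)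
    · exact Or.inl ⟨WithLp.ofLp x, ⟨by simpa using hx, hxf⟩, rfl⟩
  · obtain ⟨Λ, hΛ⟩ := hf j
    exact ⟨_, (he'.comp hΛ).comp (PiLp.lipschitzWith_ofLp 2 (fun _ : Fin d => ℝ))⟩
  · have := he'.hausdorffMeasure_image_le (d := (d : ℝ)) (by positivity)
      (WithLp.toLp 2 ⁻¹' E \ ⋃ j, range (f j))
    rw [hnull, mul_zero] at this
    exact le_antisymm this bot_le

/-- Both `E` and `φ(E)` are rectifiable, so on them `nu` is a constant multiple of `H^d`, and the
comparison `nu_minimal` becomes the minimality inequality for `E`. -/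
lemma hausdorff_minimal {n m d : ℕ} (hm : 1 ≤ m) {E : Set (Euc n)} (hE : IsClosed E)
    (h : IsMinimalSet (n + m) (d + m) (prodRm n m E)) {φ : Euc n → Euc n} {K : ℝ≥0}
    (hφ : LipschitzWith K φ) (hb : IsBounded {x | φ x ≠ x}) :
    μH[(d : ℝ)] (E \ φ '' E) ≤ μH[(d : ℝ)] (φ '' E \ E) := by
  obtain ⟨c, hc0, hct, hc⟩ := exists_nu_const m d hm
  obtain ⟨f, Z, hf, hZ, hcov⟩ := exists_rectifiable_cover hm hE h
  have hφE := measurableSet_image_of_isClosed hE hφ.continuous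
  have h1 := nu_eq_of_rectifiable hm hc hf hZ (hE.measurableSet.diff hφE)
    (sdiff_subset.trans hcov)
  have hZ' : μH[(d : ℝ)] (φ '' Z) = 0 := by
    have := hφ.hausdorffMeasure_image_le (d := (d : ℝ)) (by positivity) Z
    rw [hZ, mul_zero] at this
    exact le_antisymm this bot_le
  have h2 := nu_eq_of_rectifiable hm hc (f := fun j => φ ∘ f j)
    (fun j => (hf j).elim fun Λ hΛ => ⟨_, hφ.comp hΛ⟩) hZ' (hφE.diff hE.measurableSet) (by
      refine sdiff_subset.trans ((image_mono hcov).trans ?_)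
      simp only [image_union, image_iUnion, range_comp]
      exact subset_rfl)
  have h3 := nu_minimal hE h hφ hb
  rw [h1, h2] at h3
  exact (ENNReal.mul_le_mul_iff_right hc0 hct).1 h3

lemma reduced_of_prod {n m d : ℕ} (hm : 1 ≤ m) {E : Set (Euc n)}
    (h : IsReducedSet (n + m) (d + m) (prodRm n m E)) : IsReducedSet n d E := by
  intro x hx r hr
  refine pos_iff_ne_zero.2 fun h0 => ?_
  have h1 := h (mkE x 0) (by rw [prodRm_eq]; simpa using hx) (min r 1) (by positivity)
  refine h1.not_ge (le_trans (measure_mono ?_) (nu_eq_zero hm h0).le)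
  rintro z ⟨hz1, hz2⟩
  have h2 := dist_fstE_le z (mkE x (0 : Euc m))
  have h3 := dist_sndE_le z (mkE x (0 : Euc m))
  rw [fstE_mkE] at h2
  rw [sndE_mkE] at h3
  have h4 := lt_min_iff.1 (mem_ball.1 hz2)
  exact ⟨⟨hz1, mem_ball.2 (h2.trans_lt h4.1)⟩, mem_ball.2 (h3.trans_lt h4.2)⟩

/-- **Proposition 8.3.** If `E × ℝ^m` is a reduced minimal set of dimension `d + m` in
`ℝ^{n+m}`, then `E` is a reduced minimal set of dimension `d` in `ℝⁿ`. -/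
theorem product_minimal_implies_minimal (n m d : ℕ) (hn : 1 ≤ n) (hm : 1 ≤ m)
    (E : Set (Euc n)) (hE : IsClosed E)
    (hprodmin : IsMinimalSet (n + m) (d + m) (prodRm n m E))
    (hprodred : IsReducedSet (n + m) (d + m) (prodRm n m E)) :
    IsMinimalSet n d E ∧ IsReducedSet n d E := by
  refine ⟨⟨hE, fun R _ => ?_, fun φ ⟨K, hφ⟩ hb => hausdorff_minimal hm hE hprodmin hφ hb⟩,
    reduced_of_prod hm hprodred⟩
  exact (hausdorff_le_nu hm _).trans_lt (nu_ball_lt_top hprodmin R)
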